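/- With probability 1, f(3) = ∞; that is, almost surely there are infinitely many times t ≥ 1 at which the currently occupied site S_t is a favorite site and there are exactly three favorite sites. -/

import Mathlib

open MeasureTheory ProbabilityTheory

open MeasureTheory ProbabilityTheory
namespace Fav3

noncomputable def coin : Measure Bool := (PMF.uniformOfFintype Bool).toMeasure

instance : IsProbabilityMeasure coin := by unfold coin; infer_instance

lemma coin_singleton (b : Bool) : coin {b} = 1/2 := by
  unfold coin
  rw [PMF.toMeasure_apply_singleton _ _ (measurableSet_singleton _)]
  simp

/-- fair coins indexed by `I` -/
noncomputable def fair (I : Type) : Measure (I → Bool) := Measure.infinitePi (fun _ : I => coin)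

instance (I : Type) : IsProbabilityMeasure (fair I) := by unfold fair; infer_instance

/-- the set `E` depends only on the coordinates in `S` -/
def DepOn {I : Type} (S : Set I) (E : Set (I → Bool)) : Prop :=
  ∀ s s' : I → Bool, (∀ i ∈ S, s i = s' i) → s ∈ E → s' ∈ E

lemma DepOn.mono {I : Type} {S T : Set I} (h : S ⊆ T) {E : Set (I → Bool)} (hE : DepOn S E) :
    DepOn T E := fun s s' hs he => hE s s' (fun i hi => hs i (h hi)) he

lemma DepOn.iff {I : Type} {S : Set I} {E : Set (I → Bool)} (hE : DepOn S E) {s s' : I → Bool}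
    (h : ∀ i ∈ S, s i = s' i) : s ∈ E ↔ s' ∈ E :=
  ⟨hE s s' h, hE s' s (fun i hi => (h i hi).symm)⟩

lemma DepOn.compl {I : Type} {S : Set I} {E : Set (I → Bool)} (hE : DepOn S E) : DepOn S Eᶜ :=
  fun _ _ h hs hs' => hs ((hE.iff h).2 hs')

lemma DepOn.inter {I : Type} {S : Set I} {E F : Set (I → Bool)} (hE : DepOn S E) (hF : DepOn S F) :
    DepOn S (E ∩ F) :=
  fun s s' h hs => ⟨hE s s' h hs.1, hF s s' h hs.2⟩

lemma DepOn.measurable {I : Type} {S : Set I} (hS : S.Finite) {E : Set (I → Bool)}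
    (hE : DepOn S E) : MeasurableSet E := by
  classical
  have : Fintype S := hS.fintype
  have : E = (fun (s : I → Bool) (i : S) => s i) ⁻¹' ((fun (s : I → Bool) (i : S) => s i) '' E) := by
    ext s; constructor
    · intro h; exact ⟨s, h, rfl⟩
    · rintro ⟨s', h, h2⟩
      refine hE s' s (fun i hi => congrFun h2 ⟨i, hi⟩) h
  rw [this]
  refine MeasurableSet.preimage (Set.toFinite _).measurableSet ?_
  fun_prop

open Classical in
lemma indep_of_depOn {I : Type} {S T : Set I} (hST : Disjoint S T) {A B : Set (I → Bool)}
    (hA : MeasurableSet A) (hB : MeasurableSet B) (dA : DepOn S A) (dB : DepOn T B) :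
    (fair I).real (A ∩ B) = (fair I).real A * (fair I).real B := by
  have key : ∀ (S : Set I) (A : Set (I → Bool)), MeasurableSet A → DepOn S A →
      MeasurableSet[⨆ i ∈ S, MeasurableSpace.comap (fun s : I → Bool => s i) inferInstance] A := by
    intro S A hA dA
    have e : A = (fun s : I → Bool => fun i => if i ∈ S then s i else false) ⁻¹' A := by
      ext s
      refine dA.iff ?_
      intro i hi; simp [hi]
    rw [e]
    refine MeasurableSet.preimage hA ?_
    refine @measurable_pi_lambda _ _ _ (⨆ i ∈ S, MeasurableSpace.comap (fun s : I → Bool => s i) inferInstance) _ _ ?_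
    intro i
    by_cases hi : i ∈ S
    · simp only [hi, if_true]
      refine Measurable.mono (ma := MeasurableSpace.comap (fun s : I → Bool => s i) inferInstance) ?_ ?_ le_rfl
      · exact comap_measurable _
      · exact le_iSup₂_of_le i hi le_rfl
    · simp only [hi, if_false]
      exact measurable_const
  have h1 : iIndepFun (fun (i : I) (s : I → Bool) => s i) (fair I) := by
    exact iIndepFun_infinitePi (P := fun _ : I => coin) (X := fun _ b => b) (fun i => measurable_id)
  have h2 := indep_iSup_of_disjoint (m := fun i => MeasurableSpace.comap (fun s : I → Bool => s i) inferInstance)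
    (fun i => (measurable_pi_apply i).comap_le) h1 hST
  rw [Indep_iff] at h2
  have := h2 A B (key S A hA dA) (key T B hB dB)
  simp only [Measure.real, this, ENNReal.toReal_mul]

lemma fair_cyl {I : Type} (F : Finset I) (w : I → Bool) :
    (fair I) {s | ∀ i ∈ F, s i = w i} = (1/2)^F.card := by
  have : {s : I → Bool | ∀ i ∈ F, s i = w i} = Set.pi F (fun i => {w i}) := by
    ext s; simp [Set.pi]
  rw [this, fair, Measure.infinitePi_pi _ (fun i _ => measurableSet_singleton _)]
  simp [coin_singleton]

lemma fair_cyl_real {I : Type} (F : Finset I) (w : I → Bool) :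
    (fair I).real {s | ∀ i ∈ F, s i = w i} = (1/2)^F.card := by
  rw [Measure.real, fair_cyl]; simp

/-- a measure on boolean sequences is the fair one as soon as prefix cylinders have the right mass -/
lemma eq_fair (μ : Measure (ℕ → Bool)) [IsProbabilityMeasure μ]
    (h : ∀ n (w : ℕ → Bool), μ {s | ∀ i < n, s i = w i} = (1/2)^n) : μ = fair ℕ := by
  have hfin : ∀ (n : ℕ), μ.map (fun s (i : Fin n) => s i) = (fair ℕ).map (fun s (i : Fin n) => s i) := by
    intro n
    refine Measure.ext_of_singleton (fun v => ?_)
    have e : (fun (s : ℕ → Bool) (i : Fin n) => s i) ⁻¹' {v} =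
        {s | ∀ i < n, s i = (fun i => if h : i < n then v ⟨i, h⟩ else false) i} := by
      ext s; simp only [Set.mem_preimage, Set.mem_singleton_iff, Set.mem_ofPred_eq, funext_iff]
      constructor
      · intro h i hi; simp [hi]; exact h ⟨i, hi⟩
      · intro h i; have := h i i.2; simpa using this
    rw [Measure.map_apply (by fun_prop) (measurableSet_singleton _),
      Measure.map_apply (by fun_prop) (measurableSet_singleton _), e, h]
    have := fair_cyl (Finset.range n) (fun i => if h : i < n then v ⟨i, h⟩ else false)
    simp only [Finset.mem_range, Finset.card_range] at this
    exact this.symm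
  refine Measure.eq_infinitePi _ (fun F t ht => ?_)
  obtain ⟨n, hn⟩ : ∃ n, ∀ i ∈ F, i < n := ⟨F.sup id + 1, fun i hi => Nat.lt_succ_of_le (Finset.le_sup (f := id) hi)⟩
  have e : Set.pi (F : Set ℕ) t = (fun (s : ℕ → Bool) (i : Fin n) => s i) ⁻¹' {v | ∀ i : Fin n, (i : ℕ) ∈ F → v i ∈ t i} := by
    ext s; simp only [Set.mem_pi, Set.mem_preimage, Set.mem_ofPred_eq, Finset.mem_coe]
    constructor
    · intro h i hi; exact h i hi
    · intro h i hi; exact h ⟨i, hn i hi⟩ hi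
  rw [← Measure.infinitePi_pi (μ := fun _ : ℕ => coin) (fun i _ => ht i), e,
    ← Measure.map_apply (by fun_prop) (Set.toFinite _).measurableSet, hfin n,
    Measure.map_apply (by fun_prop) (Set.toFinite _).measurableSet]
  rfl

/-- the first `t` bits of `s`, followed by `s'` -/
def glue (t : ℕ) (s s' : ℕ → Bool) : ℕ → Bool := fun i => if i < t then s i else s' (i - t)

lemma glue_measurable (t : ℕ) : Measurable (fun p : (ℕ → Bool) × (ℕ → Bool) => glue t p.1 p.2) := by
  refine measurable_pi_lambda _ (fun i => ?_)
  unfold glue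
  by_cases h : i < t
  · simp only [h, if_true]; fun_prop
  · simp only [h, if_false]; fun_prop

lemma glue_measurable' (t : ℕ) (s : ℕ → Bool) : Measurable (fun s' : (ℕ → Bool) => glue t s s') :=
  (glue_measurable t).comp (measurable_prodMk_left)

lemma glue_map (t : ℕ) : ((fair ℕ).prod (fair ℕ)).map (fun p => glue t p.1 p.2) = fair ℕ := by
  have : IsProbabilityMeasure (((fair ℕ).prod (fair ℕ)).map (fun p => glue t p.1 p.2)) :=
    Measure.isProbabilityMeasure_map (glue_measurable t).aemeasurable
  refine eq_fair _ (fun n w => ?_)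
  have hm : MeasurableSet {s : ℕ → Bool | ∀ i < n, s i = w i} := by
    refine DepOn.measurable (S := Set.Iio n) (Set.finite_Iio n) ?_
    intro s s' h hs i hi
    rw [← h i hi]; exact hs i hi
  rw [Measure.map_apply (glue_measurable t) hm]
  have e : (fun p : (ℕ → Bool) × (ℕ → Bool) => glue t p.1 p.2) ⁻¹' {s : ℕ → Bool | ∀ i < n, s i = w i}
      = {s | ∀ i ∈ Finset.range (min n t), s i = w i} ×ˢ {s | ∀ i ∈ Finset.range (n - t), s i = w (i + t)} := by
    ext ⟨s, s'⟩
    simp only [Set.mem_preimage, Set.mem_ofPred_eq, Set.mem_prod, Finset.mem_range, glue]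
    constructor
    · intro h
      refine ⟨fun i hi => ?_, fun i hi => ?_⟩
      · have := h i (by omega)
        rwa [if_pos (by omega)] at this
      · have := h (i + t) (by omega)
        rw [if_neg (by omega)] at this
        simpa using this
    · rintro ⟨h1, h2⟩ i hi
      split_ifs with h
      · exact h1 i (by omega)
      · have := h2 (i - t) (by omega)
        rwa [Nat.sub_add_cancel (by omega)] at this
  rw [e, Measure.prod_prod, fair_cyl, fair_cyl (w := fun i => w (i + t)), ← pow_add]
  congr 1
  simp; omega

/-- Markov property -/
lemma restart {t : ℕ} {D : Set (ℕ → Bool)} (hD : DepOn (Set.Iio t) D) {E : Set (ℕ → Bool)}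
    (hE : MeasurableSet E) :
    (fair ℕ).real (D ∩ E) = ∫ s in D, (fair ℕ).real {s' | glue t s s' ∈ E} ∂(fair ℕ) := by
  have mD : MeasurableSet D := hD.measurable (Set.finite_Iio t)
  have h1 : fair ℕ (D ∩ E) = ∫⁻ s in D, fair ℕ {s' | glue t s s' ∈ E} ∂(fair ℕ) := by
    conv_lhs => rw [← glue_map t]
    rw [Measure.map_apply (glue_measurable t) (mD.inter hE)]
    rw [Measure.prod_apply (glue_measurable t (mD.inter hE)), ← lintegral_indicator mD]
    refine lintegral_congr (fun s => ?_)
    have hg : ∀ s', glue t s s' ∈ D ↔ s ∈ D := by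
      intro s'
      refine hD.iff ?_
      intro i hi
      simp only [Set.mem_Iio] at hi
      simp [glue, hi]
    by_cases hs : s ∈ D
    · rw [Set.indicator_of_mem hs]
      congr 1
      ext s'
      simp [hg, hs]
    · rw [Set.indicator_of_notMem hs]
      convert measure_empty (μ := fair ℕ)
      ext s'
      simp [hg, hs]
  rw [Measure.real, h1, integral_eq_lintegral_of_nonneg_ae]
  · congr 1
    refine lintegral_congr (fun s => ?_)
    simp [Measure.real]
  · exact Filter.Eventually.of_forall (fun s => measureReal_nonneg)
  · refine Measurable.aestronglyMeasurable ?_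
    refine Measurable.ennreal_toReal ?_
    exact measurable_measure_prodMk_left (glue_measurable t hE)

lemma restart_integrable (t : ℕ) {E : Set (ℕ → Bool)} (hE : MeasurableSet E) :
    Integrable (fun s => (fair ℕ).real {s' | glue t s s' ∈ E}) (fair ℕ) := by
  refine Integrable.of_bound (C := 1) ?_ (Filter.Eventually.of_forall (fun s => ?_))
  · refine Measurable.aestronglyMeasurable ?_
    refine Measurable.ennreal_toReal ?_
    exact measurable_measure_prodMk_left (glue_measurable t hE)
  · rw [Real.norm_of_nonneg measureReal_nonneg]; exact measureReal_le_one

lemma restart_le {J : Type} (F : Finset J) {t : ℕ} {D : Set (ℕ → Bool)} (hD : DepOn (Set.Iio t) D)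
    {E : J → Set (ℕ → Bool)} (hE : ∀ j ∈ F, MeasurableSet (E j)) (C : ℝ)
    (h : ∀ s ∈ D, ∑ j ∈ F, (fair ℕ).real {s' | glue t s s' ∈ E j} ≤ C) :
    ∑ j ∈ F, (fair ℕ).real (D ∩ E j) ≤ C * (fair ℕ).real D := by
  have mD : MeasurableSet D := hD.measurable (Set.finite_Iio t)
  rw [Finset.sum_congr rfl (fun j hj => restart hD (hE j hj)),
    ← integral_finset_sum _ (fun j hj => (restart_integrable t (hE j hj)).integrableOn)]
  calc _ ≤ ∫ s in D, C ∂(fair ℕ) := by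
        refine setIntegral_mono_on ?_ (integrable_const _).integrableOn mD h
        exact integrable_finset_sum _ (fun j hj => (restart_integrable t (hE j hj)).integrableOn)
    _ = _ := by simp [mul_comm]

lemma restart_ge {t : ℕ} {D : Set (ℕ → Bool)} (hD : DepOn (Set.Iio t) D)
    {E : Set (ℕ → Bool)} (hE : MeasurableSet E) (c : ℝ)
    (h : ∀ s ∈ D, c ≤ (fair ℕ).real {s' | glue t s s' ∈ E}) :
    c * (fair ℕ).real D ≤ (fair ℕ).real (D ∩ E) := by
  have mD : MeasurableSet D := hD.measurable (Set.finite_Iio t)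
  rw [restart hD hE]
  calc _ = ∫ s in D, c ∂(fair ℕ) := by simp [mul_comm]
    _ ≤ _ := by
        refine setIntegral_mono_on (integrable_const _).integrableOn
          (restart_integrable t hE).integrableOn mD h

end Fav3

open MeasureTheory ProbabilityTheory
namespace Fav3

/-! ### the walk -/

structure St where
  loc : ℤ → ℕ
  pos : ℤ

def mv (b : Bool) : ℤ := if b then 1 else -1

@[simp] lemma mv_true : mv true = 1 := rfl
@[simp] lemma mv_false : mv false = -1 := rfl

def St.step (st : St) (b : Bool) : St :=
  ⟨Function.update st.loc (st.pos + mv b) (st.loc (st.pos + mv b) + 1), st.pos + mv b⟩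

def run (st : St) (s : ℕ → Bool) : ℕ → St
  | 0 => st
  | t + 1 => (run st s t).step (s t)

lemma run_congr (st : St) {s s' : ℕ → Bool} {t : ℕ} (h : ∀ i < t, s i = s' i) :
    run st s t = run st s' t := by
  induction t with
  | zero => rfl
  | succ t ih =>
    rw [run, run, ih (fun i hi => h i (by omega)), h t (by omega)]

lemma run_glue (st : St) (s s' : ℕ → Bool) (t k : ℕ) :
    run st (glue t s s') (t + k) = run (run st s t) s' k := by
  induction k with
  | zero =>
    refine run_congr st ?_
    intro i hi
    simp only [add_zero] at hi
    simp [glue, hi]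
  | succ k ih =>
    rw [← add_assoc, run, ih, run]
    simp [glue]

lemma loc_le_step (st : St) (b : Bool) (y : ℤ) : st.loc y ≤ (st.step b).loc y := by
  unfold St.step
  by_cases h : y = st.pos + mv b
  · subst h; simp
  · simp [h]

lemma loc_mono (st : St) (s : ℕ → Bool) (y : ℤ) : Monotone (fun t => (run st s t).loc y) := by
  refine monotone_nat_of_le_succ (fun t => ?_)
  exact loc_le_step _ _ _

/-- triple favourite configuration at level `h` -/
def isT (st : St) (x : ℤ) (h : ℕ) : Prop :=
  st.pos = x ∧ st.loc x = h ∧ st.loc (x + 1) = h ∧ st.loc (x + 3) = h ∧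
    ∀ y, y ≠ x → y ≠ x + 1 → y ≠ x + 3 → st.loc y < h

lemma isT.le {st : St} {x : ℤ} {h : ℕ} (H : isT st x h) (y : ℤ) : st.loc y ≤ h := by
  obtain ⟨-, h1, h2, h3, h4⟩ := H
  by_cases a : y = x
  · subst a; omega
  by_cases b : y = x + 1
  · subst b; omega
  by_cases c : y = x + 3
  · subst c; omega
  exact (h4 y a b c).le

def TB (st : St) (x : ℤ) (h : ℕ) : Set (ℕ → Bool) := {s | ∃ k, isT (run st s k) x h}

lemma depOn_run (st : St) (t : ℕ) (Q : St → Prop) : DepOn (Set.Iio t) {s | Q (run st s t)} := by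
  intro s s' h hs
  simp only [Set.mem_ofPred_eq] at *
  rwa [← run_congr st (fun i hi => h i hi)]

lemma TB_measurable (st : St) (x : ℤ) (h : ℕ) : MeasurableSet (TB st x h) := by
  have : TB st x h = ⋃ k, {s | isT (run st s k) x h} := by ext; simp [TB]
  rw [this]
  exact MeasurableSet.iUnion (fun k => (depOn_run st k (fun u => isT u x h)).measurable (Set.finite_Iio k))

/-- after a triple at `(x,h)`, no triple at a lower level and only at `x` on the same level. -/
lemma isT_later {st : St} {x : ℤ} {h : ℕ} (H : isT st x h) {s : ℕ → Bool} {k : ℕ} {x' : ℤ} {h' : ℕ}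
    (H' : isT (run st s k) x' h') : h ≤ h' ∧ (h = h' → x = x') := by
  have m := fun y => loc_mono st s y (Nat.zero_le k)
  simp only [run] at m
  have l' := H'.le
  obtain ⟨-, h1, h2, h3, h4⟩ := H
  obtain ⟨-, g1, g2, g3, g4⟩ := H'
  have mx := m x; have mx1 := m (x+1); have mx3 := m (x+3)
  have lx := l' x
  refine ⟨by omega, ?_⟩
  rintro rfl
  have e : ∀ y, h ≤ (run st s k).loc y → y = x' ∨ y = x' + 1 ∨ y = x' + 3 := by
    intro y hy
    by_contra hc
    push Not at hc
    have := g4 y hc.1 hc.2.1 hc.2.2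
    omega
  have e1 := e x (by omega)
  have e2 := e (x+1) (by omega)
  have e3 := e (x+3) (by omega)
  omega

/-! ### stack walk -/

abbrev Stk := ℤ × ℕ → Bool

/-- position and departures -/
def ww (a : ℤ) (s : ℕ → Bool) : ℕ → ℤ × (ℤ → ℕ)
  | 0 => (a, fun _ => 0)
  | t + 1 => ((ww a s t).1 + mv (s t),
      Function.update (ww a s t).2 (ww a s t).1 ((ww a s t).2 (ww a s t).1 + 1))

def sw (a : ℤ) (ω : Stk) : ℕ → ℤ × (ℤ → ℕ)
  | 0 => (a, fun _ => 0)
  | t + 1 => ((sw a ω t).1 + mv (ω ((sw a ω t).1, (sw a ω t).2 (sw a ω t).1)),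
      Function.update (sw a ω t).2 (sw a ω t).1 ((sw a ω t).2 (sw a ω t).1 + 1))

def bits (a : ℤ) (ω : Stk) (t : ℕ) : Bool := ω ((sw a ω t).1, (sw a ω t).2 (sw a ω t).1)

lemma sw_eq_ww (a : ℤ) (ω : Stk) (t : ℕ) : sw a ω t = ww a (bits a ω) t := by
  induction t with
  | zero => rfl
  | succ t ih => rw [sw, ww, ← ih, bits]

lemma ww_congr (a : ℤ) {s s' : ℕ → Bool} {t : ℕ} (h : ∀ i < t, s i = s' i) :
    ww a s t = ww a s' t := by
  induction t with
  | zero => rfl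
  | succ t ih =>
    rw [ww, ww, ih (fun i hi => h i (by omega)), h t (by omega)]

def qq (a : ℤ) (s : ℕ → Bool) (t : ℕ) : ℤ × ℕ := ((ww a s t).1, (ww a s t).2 (ww a s t).1)

lemma ww_dep_mono (a : ℤ) (s : ℕ → Bool) (y : ℤ) : Monotone (fun t => (ww a s t).2 y) := by
  refine monotone_nat_of_le_succ (fun t => ?_)
  simp only [ww]
  by_cases h : y = (ww a s t).1
  · rw [h]; simp
  · simp [h]

lemma qq_inj (a : ℤ) (s : ℕ → Bool) : Function.Injective (qq a s) := by
  have : ∀ i j, i < j → qq a s i ≠ qq a s j := by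
    intro i j hij h
    simp only [qq, Prod.mk.injEq] at h
    have := ww_dep_mono a s (ww a s i).1 (Nat.succ_le_of_lt hij)
    simp only [ww, Function.update_self] at this
    rw [← h.1] at h
    omega
  intro i j h
  rcases lt_trichotomy i j with h1 | h1 | h1
  · exact absurd h (this i j h1)
  · exact h1
  · exact absurd h.symm (this j i h1)

lemma bits_prefix (a : ℤ) (w : ℕ → Bool) (n : ℕ) (ω : Stk) :
    (∀ i < n, bits a ω i = w i) ↔ ∀ i < n, ω (qq a w i) = w i := by
  induction n with
  | zero => simp
  | succ n ih =>
    have key : (∀ i < n, bits a ω i = w i) → bits a ω n = ω (qq a w n) := by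
      intro h
      have : sw a ω n = ww a w n := by rw [sw_eq_ww]; exact ww_congr a h
      rw [bits, this, qq]
    constructor
    · intro h i hi
      have h1 := fun i (hi : i < n) => h i (by omega)
      rcases Nat.lt_succ_iff_lt_or_eq.1 hi with h2 | rfl
      · exact (ih.1 h1) i h2
      · rw [← key h1]; exact h _ hi
    · intro h i hi
      have h1 := ih.2 (fun i (hi : i < n) => h i (by omega))
      rcases Nat.lt_succ_iff_lt_or_eq.1 hi with h2 | rfl
      · exact h1 i h2
      · rw [key h1]; exact h _ hi

lemma bits_prefix_set (a : ℤ) (w : ℕ → Bool) (n : ℕ) :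
    {ω | ∀ i < n, bits a ω i = w i} =
      {ω : Stk | ∀ p ∈ (Finset.range n).image (qq a w), ω p = (w ∘ Function.invFun (qq a w)) p} := by
  ext ω
  simp only [Set.mem_ofPred_eq, bits_prefix, Finset.mem_image, Finset.mem_range]
  constructor
  · rintro h p ⟨i, hi, rfl⟩
    simp [Function.leftInverse_invFun (qq_inj a w) i, h i hi]
  · intro h i hi
    have := h _ ⟨i, hi, rfl⟩
    simpa [Function.leftInverse_invFun (qq_inj a w) i] using this

lemma bits_measurable (a : ℤ) : Measurable (bits a) := by
  refine measurable_pi_lambda _ (fun t => ?_)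
  refine measurable_to_bool ?_
  have : (fun ω => bits a ω t) ⁻¹' {true} =
    ⋃ w : Fin t → Bool, {ω | ∀ i < t + 1, bits a ω i = (fun i => if h : i < t then w ⟨i, h⟩ else true) i} := by
    ext ω
    simp only [Set.mem_preimage, Set.mem_singleton_iff, Set.mem_iUnion, Set.mem_ofPred_eq]
    constructor
    · intro h
      refine ⟨fun i => bits a ω i, fun i hi => ?_⟩
      by_cases h' : i < t
      · simp [h']
      · have : i = t := by omega
        subst this; simpa using h
    · rintro ⟨w, h⟩
      simpa using h t (by omega)
  rw [this]
  refine MeasurableSet.iUnion (fun w => ?_)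
  rw [bits_prefix_set]
  refine DepOn.measurable (S := (((Finset.range (t+1)).image (qq a (fun i => if h : i < t then w ⟨i, h⟩ else true)) : Finset (ℤ × ℕ)) : Set (ℤ × ℕ))) (Finset.finite_toSet _) ?_
  intro s s' h hs p hp
  rw [← h p hp]; exact hs p hp

lemma bits_map (a : ℤ) : (fair (ℤ × ℕ)).map (bits a) = fair ℕ := by
  have : IsProbabilityMeasure ((fair (ℤ × ℕ)).map (bits a)) :=
    Measure.isProbabilityMeasure_map (bits_measurable a).aemeasurable
  refine eq_fair _ (fun n w => ?_)
  have hm : MeasurableSet {s : ℕ → Bool | ∀ i < n, s i = w i} := by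
    refine DepOn.measurable (S := Set.Iio n) (Set.finite_Iio n) ?_
    intro s s' h hs i hi
    rw [← h i hi]; exact hs i hi
  rw [Measure.map_apply (bits_measurable a) hm]
  have := fair_cyl ((Finset.range n).image (qq a w)) (w ∘ Function.invFun (qq a w))
  rw [← bits_prefix_set, Finset.card_image_of_injective _ (qq_inj a w), Finset.card_range] at this
  exact this

lemma bits_real (a : ℤ) {E : Set (ℕ → Bool)} (hE : MeasurableSet E) :
    (fair ℕ).real E = (fair (ℤ × ℕ)).real {ω | bits a ω ∈ E} := by
  rw [Measure.real, ← bits_map a, Measure.map_apply (bits_measurable a) hE]; rfl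

lemma run_pos_eq (st : St) (ω : Stk) (t : ℕ) : (run st (bits st.pos ω) t).pos = (sw st.pos ω t).1 := by
  induction t with
  | zero => rfl
  | succ t ih => rw [run, St.step, sw]; simp only [ih]; rfl

def eq01 (y p : ℤ) : ℕ := if y = p then 1 else 0
def lt01 (y p : ℤ) : ℕ := if y < p then 1 else 0
lemma eq01_self (y : ℤ) : eq01 y y = 1 := by simp [eq01]
lemma eq01_ne {y p : ℤ} (h : y ≠ p) : eq01 y p = 0 := by simp [eq01, h]
lemma lt01_lt {y p : ℤ} (h : y < p) : lt01 y p = 1 := by simp [lt01, h]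
lemma lt01_ge {y p : ℤ} (h : p ≤ y) : lt01 y p = 0 := by simp [lt01, not_lt.2 h]
lemma lt01_le_one (y p : ℤ) : lt01 y p ≤ 1 := by unfold lt01; split_ifs <;> omega

lemma run_loc_eq (st : St) (ω : Stk) (t : ℕ) (y : ℤ) :
    (run st (bits st.pos ω) t).loc y + eq01 y st.pos =
      st.loc y + (sw st.pos ω t).2 y + eq01 y (sw st.pos ω t).1 := by
  induction t with
  | zero => rfl
  | succ t ih =>
    rw [run, St.step, run_pos_eq]
    simp only [sw]
    have e : bits st.pos ω t = ω ((sw st.pos ω t).1, (sw st.pos ω t).2 (sw st.pos ω t).1) := rfl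
    rw [← e]
    set p := (sw st.pos ω t).1
    set b := bits st.pos ω t
    have hb : mv b ≠ 0 := by cases b <;> simp
    by_cases h1 : y = p + mv b
    · have h2 : y ≠ p := by omega
      rw [eq01_ne h2] at ih
      rw [← h1, Function.update_self, Function.update_of_ne h2, eq01_self y]
      omega
    · rw [Function.update_of_ne h1, eq01_ne h1]
      by_cases h2 : y = p
      · rw [h2, eq01_self] at ih
        rw [h2, Function.update_self]
        omega
      · rw [Function.update_of_ne h2]
        rw [eq01_ne h2] at ih
        exact ih

/-- number of arrows `b` among the first `n` at `y` -/
def cnt (b : Bool) (ω : Stk) (y : ℤ) (n : ℕ) : ℕ := Nat.count (fun i => ω (y, i) = b) n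

@[simp] lemma cnt_zero (b : Bool) (ω : Stk) (y : ℤ) : cnt b ω y 0 = 0 := by simp [cnt]

lemma cnt_succ (b : Bool) (ω : Stk) (y : ℤ) (n : ℕ) :
    cnt b ω y (n+1) = cnt b ω y n + if ω (y, n) = b then 1 else 0 := by
  simp [cnt, Nat.count_succ]

lemma cnt_add (b : Bool) (ω : Stk) (y : ℤ) (n : ℕ) : cnt b ω y n + cnt (!b) ω y n = n := by
  induction n with
  | zero => simp
  | succ n ih =>
    rw [cnt_succ, cnt_succ]
    cases b <;> cases h : ω (y, n) <;> simp_all <;> omega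

lemma cnt_mono (b : Bool) (ω : Stk) (y : ℤ) : Monotone (cnt b ω y) := Nat.count_monotone _

lemma cnt_le (b : Bool) (ω : Stk) (y : ℤ) (n : ℕ) : cnt b ω y n ≤ n := by
  have := cnt_add b ω y n; omega

lemma cnt_lt (b : Bool) (ω : Stk) (y : ℤ) {n m : ℕ} (h : n < m) (hm : m = 0 ∨ ω (y, m - 1) = b) :
    cnt b ω y n < cnt b ω y m := by
  obtain ⟨m, rfl⟩ : ∃ k, m = k + 1 := ⟨m - 1, by omega⟩
  have h1 : ω (y, m) = b := by simpa using hm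
  rw [cnt_succ, if_pos h1]
  have := cnt_mono b ω y (show n ≤ m by omega)
  omega

lemma flow (a : ℤ) (ω : Stk) (t : ℕ) (y : ℤ) :
    cnt true ω y ((sw a ω t).2 y) + lt01 y a =
      cnt false ω (y + 1) ((sw a ω t).2 (y + 1)) + lt01 y (sw a ω t).1 := by
  induction t with
  | zero => simp [sw]
  | succ t ih =>
    rw [sw]
    set p := (sw a ω t).1
    set D := (sw a ω t).2
    simp only
    have hA : ∀ z b, cnt b ω z (Function.update D p (D p + 1) z) = cnt b ω z (D z) +
        if z = p ∧ ω (p, D p) = b then 1 else 0 := by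
      intro z b
      by_cases hz : z = p
      · subst hz
        rw [Function.update_self, cnt_succ]; simp
      · rw [Function.update_of_ne hz]; simp [hz]
    rw [hA, hA]
    cases hb : ω (p, D p)
    · rw [mv_false]
      by_cases h1 : y + 1 = p
      · rw [lt01_ge (show p + -1 ≤ y by omega)]
        rw [lt01_lt (show y < p by omega)] at ih
        rw [h1] at ih
        simp [h1]
        omega
      · have : lt01 y (p + -1) = lt01 y p := by
          have : y < p + -1 ↔ y < p := by omega
          simp only [lt01, this]
        rw [this]
        simp [h1]
        omega
    · rw [mv_true]
      by_cases h1 : y = p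
      · rw [lt01_lt (show y < p + 1 by omega)]
        rw [lt01_ge (show p ≤ y by omega)] at ih
        simp [h1]
        rw [h1] at ih
        omega
      · have : lt01 y (p + 1) = lt01 y p := by
          have : y < p + 1 ↔ y < p := by omega
          simp only [lt01, this]
        rw [this]
        simp [h1]
        omega

lemma tree (a : ℤ) (ω : Stk) (t : ℕ) (y : ℤ) :
    (y < (sw a ω t).1 → (sw a ω t).2 y = 0 ∨ ω (y, (sw a ω t).2 y - 1) = true) ∧
    ((sw a ω t).1 < y → (sw a ω t).2 y = 0 ∨ ω (y, (sw a ω t).2 y - 1) = false) := by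
  induction t with
  | zero => simp [sw]
  | succ t ih =>
    rw [sw]
    set p := (sw a ω t).1
    set D := (sw a ω t).2
    simp only
    by_cases hy : y = p
    · rw [hy, Function.update_self]
      simp only [Nat.add_sub_cancel]
      cases hb : ω (p, D p)
      · simp
      · simp
    · rw [Function.update_of_ne hy]
      constructor
      · intro h
        refine ih.1 ?_
        cases hb : ω (p, D p) <;> simp [hb] at h <;> omega
      · intro h
        refine ih.2 ?_
        cases hb : ω (p, D p) <;> simp [hb] at h <;> omega

end Fav3

open MeasureTheory ProbabilityTheory
namespace Fav3

/-- realizability of a departure profile -/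
lemma best (a x : ℤ) (ω : Stk) (D : ℤ → ℕ) (F : Finset ℤ) (hF : ∀ y ∉ F, D y = 0)
    (hflow : ∀ y, cnt true ω y (D y) + lt01 y a = cnt false ω (y + 1) (D (y + 1)) + lt01 y x)
    (htl : ∀ y < x, D y = 0 ∨ ω (y, D y - 1) = true)
    (htr : ∀ y, x < y → D y = 0 ∨ ω (y, D y - 1) = false) :
    ∃ t, sw a ω t = (x, D) := by
  have hsum : ∀ t, (∀ y, (sw a ω t).2 y ≤ D y) → ∑ y ∈ F, (sw a ω t).2 y = t := by
    intro t
    induction t with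
    | zero => intro _; simp [sw]
    | succ t ih =>
      intro h
      have hm : ∀ y, (sw a ω t).2 y ≤ (sw a ω (t+1)).2 y := by
        intro y
        rw [sw_eq_ww, sw_eq_ww]
        exact ww_dep_mono a _ y (Nat.le_succ t)
      have := ih (fun y => (hm y).trans (h y))
      have hp := h (sw a ω t).1
      simp only [sw, Function.update_self] at hp ⊢
      have hpF : (sw a ω t).1 ∈ F := by
        by_contra hc
        have := hF _ hc
        omega
      rw [Finset.sum_update_of_mem hpF, ← Finset.sum_sdiff (Finset.singleton_subset_iff.2 hpF)] at *
      simp at this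
      omega
  have hex : ∃ t, ¬ (∀ y, (sw a ω (t+1)).2 y ≤ D y) := by
    by_contra hc
    push Not at hc
    have h1 := hsum _ (hc (∑ y ∈ F, D y))
    have h2 := Finset.sum_le_sum (s := F) (fun y _ => hc (∑ y ∈ F, D y) y)
    omega
  classical
  set t := Nat.find hex with ht
  have ht1 : ∃ y, D y < (sw a ω (t+1)).2 y := by
    have h := Nat.find_spec hex
    rw [← ht] at h
    push Not at h
    exact h
  have ht0 : ∀ y, (sw a ω t).2 y ≤ D y := by
    rcases Nat.eq_zero_or_pos t with h | h
    · rw [h]; simp [sw]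
    · have := Nat.find_min hex (m := t - 1) (by omega)
      rw [Nat.sub_add_cancel h] at this
      simpa using this
  have hp : (sw a ω t).2 (sw a ω t).1 = D (sw a ω t).1 := by
    obtain ⟨y, hy⟩ := ht1
    simp only [sw] at hy
    have h0 := ht0 y
    by_cases h : y = (sw a ω t).1
    · rw [h, Function.update_self] at hy
      rw [h] at h0
      omega
    · rw [Function.update_of_ne h] at hy
      omega
  have hfl := flow a ω t
  set p := (sw a ω t).1 with hpdef
  set d := (sw a ω t).2 with hddef
  have hx : p = x := by
    rcases lt_trichotomy p x with h | h | h
    · have h1 := hfl p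
      have h2 := hflow p
      rw [lt01_ge le_rfl, hp] at h1
      rw [lt01_lt h] at h2
      have := cnt_mono false ω (p+1) (ht0 (p+1))
      omega
    · exact h
    · have h1 := hfl (p-1)
      have h2 := hflow (p-1)
      rw [lt01_lt (show p - 1 < p by omega)] at h1
      rw [lt01_ge (show x ≤ p - 1 by omega)] at h2
      have := cnt_mono true ω (p-1) (ht0 (p-1))
      rw [sub_add_cancel] at h1 h2
      rw [hp] at h1
      omega
  have hr : ∀ n : ℕ, d (x + n) = D (x + n) := by
    intro n
    induction n with
    | zero => simpa [← hx] using hp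
    | succ n ih =>
      have h1 := hfl (x + n)
      have h2 := hflow (x + n)
      rw [hx, ih] at h1
      by_contra hc
      have h3 : d (x + n + 1) < D (x + n + 1) := by
        have := ht0 (x + n + 1)
        push_cast at hc
        rw [← add_assoc] at hc
        omega
      have := cnt_lt false ω _ h3 (htr _ (by omega))
      omega
  have hl : ∀ n : ℕ, d (x - n) = D (x - n) := by
    intro n
    induction n with
    | zero => simpa [← hx] using hp
    | succ n ih =>
      have h1 := hfl (x - n - 1)
      have h2 := hflow (x - n - 1)
      rw [sub_add_cancel, hx, ih] at h1
      rw [sub_add_cancel] at h2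
      by_contra hc
      have h3 : d (x - n - 1) < D (x - n - 1) := by
        have := ht0 (x - n - 1)
        push_cast at hc
        rw [← sub_sub] at hc
        omega
      have := cnt_lt true ω _ h3 (htl _ (by omega))
      omega
  refine ⟨t, Prod.ext hx ?_⟩
  funext y
  rcases le_total x y with h | h
  · obtain ⟨n, hn⟩ := Int.le.dest h
    rw [← hn]; exact hr n
  · obtain ⟨n, hn⟩ := Int.le.dest h
    have : y = x - n := by omega
    rw [this]; exact hl n

def Chain (b : Bool) (ω : Stk) (dead : Bool) (A : ℤ → Finset ℕ) (I : ℤ → ℕ) : ℕ → ℤ → ℕ → Prop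
  | 0, _, k => dead = true → k = 0
  | N + 1, y, k => ∃ d ∈ A y, cnt b ω y d = k + I y ∧ (d = 0 ∨ ω (y, d - 1) = b) ∧
      Chain b ω dead A I N (y - mv b) (cnt (!b) ω y d)

/-- a profile `D` satisfying the chain relations at the `N` sites beyond `x` -/
def Good (b : Bool) (ω : Stk) (A : ℤ → Finset ℕ) (I : ℤ → ℕ) (D : ℤ → ℕ) (x : ℤ) (N : ℕ) : Prop :=
  ∀ n : ℕ, n < N → D (x - (n+1) * mv b) ∈ A (x - (n+1) * mv b) ∧
    (D (x - (n+1) * mv b) = 0 ∨ ω (x - (n+1) * mv b, D (x - (n+1) * mv b) - 1) = b) ∧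
    cnt b ω (x - (n+1) * mv b) (D (x - (n+1) * mv b)) =
      cnt (!b) ω (x - n * mv b) (D (x - n * mv b)) + I (x - (n+1) * mv b)

lemma Good.chain {b : Bool} {ω : Stk} {A : ℤ → Finset ℕ} {I : ℤ → ℕ} {D : ℤ → ℕ} {x : ℤ} {N : ℕ}
    (h : Good b ω A I D x N) : Chain b ω false A I N (x - mv b) (cnt (!b) ω x (D x)) := by
  induction N generalizing x with
  | zero => simp [Chain]
  | succ N ih =>
    refine ⟨D (x - mv b), ?_, ?_, ?_, ?_⟩
    · simpa using (h 0 (by omega)).1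
    · simpa using (h 0 (by omega)).2.2
    · simpa using (h 0 (by omega)).2.1
    · refine ih ?_
      intro n hn
      have := h (n+1) (by omega)
      push_cast at this
      have e1 : x - ((n:ℤ) + 1 + 1) * mv b = x - mv b - ((n:ℤ)+1) * mv b := by ring
      have e2 : x - ((n:ℤ) + 1) * mv b = x - mv b - n * mv b := by ring
      rw [e1, e2] at this
      exact this

lemma Chain.good {b : Bool} {ω : Stk} {dead : Bool} {A : ℤ → Finset ℕ} {I : ℤ → ℕ} {p : ℕ} {x : ℤ} {N : ℕ}
    (h : Chain b ω dead A I N (x - mv b) (cnt (!b) ω x p)) :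
    ∃ D : ℤ → ℕ, D x = p ∧ Good b ω A I D x N ∧
      (dead = true → cnt (!b) ω (x - N * mv b) (D (x - N * mv b)) = 0) := by
  induction N generalizing x p with
  | zero =>
    refine ⟨fun _ => p, rfl, fun n hn => by omega, ?_⟩
    simpa [Chain] using h
  | succ N ih =>
    obtain ⟨d, hd, h1, h2, h3⟩ := h
    obtain ⟨D, hD, hG, hdead⟩ := ih h3
    have hmv : mv b = 1 ∨ mv b = -1 := by cases b <;> simp
    refine ⟨Function.update D x p, Function.update_self _ _ _, ?_, ?_⟩
    · intro n hn
      have hne : x - ((n:ℤ)+1) * mv b ≠ x := by rcases hmv with e | e <;> rw [e] <;> omega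
      rw [Function.update_of_ne hne]
      rcases n with _ | n
      · simp [hD, hd, h1, h2]
      · have := hG n (by omega)
        push_cast at *
        have e1 : x - ((n:ℤ) + 1 + 1) * mv b = x - mv b - ((n:ℤ)+1) * mv b := by ring
        have e2 : x - ((n:ℤ) + 1) * mv b = x - mv b - n * mv b := by ring
        have hne : x - ((n:ℤ)+1) * mv b ≠ x := by rcases hmv with e | e <;> rw [e] <;> omega
        rw [Function.update_of_ne hne, e1, e2]
        exact this
    · have hne : x - ((N + 1 : ℕ) : ℤ) * mv b ≠ x := by
        push_cast
        rcases hmv with e | e <;> rw [e] <;> omega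
      rw [Function.update_of_ne hne]
      have e2 : x - ((N + 1 : ℕ) : ℤ) * mv b = x - mv b - N * mv b := by push_cast; ring
      rw [e2]; exact hdead

def imm (b : Bool) (a z : ℤ) : ℕ := if b then 1 - lt01 z a else lt01 (z - 1) a

lemma good_sw (b : Bool) (a : ℤ) (ω : Stk) (t : ℕ) (A : ℤ → Finset ℕ) (N : ℕ)
    (hA : ∀ n : ℕ, n < N → (sw a ω t).2 ((sw a ω t).1 - (n+1) * mv b) ∈ A ((sw a ω t).1 - (n+1) * mv b)) :
    Good b ω A (imm b a) (sw a ω t).2 (sw a ω t).1 N := by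
  intro n hn
  refine ⟨hA n hn, ?_, ?_⟩
  · cases b
    · exact (tree a ω t _).2 (by simp; omega)
    · exact (tree a ω t _).1 (by simp)
  · cases b
    · have := flow a ω t ((sw a ω t).1 - (n:ℤ) * mv false)
      rw [lt01_ge (y := ((sw a ω t).1 - (n:ℤ) * mv false)) (p := (sw a ω t).1) (by simp)] at this
      have e : (sw a ω t).1 - ((n:ℤ)+1) * mv false = (sw a ω t).1 - (n:ℤ) * mv false + 1 := by simp; ring
      rw [e]
      simp only [imm, Bool.not_false, add_sub_cancel_right]
      simp at *
      omega
    · have := flow a ω t ((sw a ω t).1 - ((n:ℤ)+1) * mv true)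
      rw [lt01_lt (y := ((sw a ω t).1 - ((n:ℤ)+1) * mv true)) (p := (sw a ω t).1) (by simp)] at this
      have e : (sw a ω t).1 - ((n:ℤ)) * mv true = (sw a ω t).1 - ((n:ℤ)+1) * mv true + 1 := by simp; ring
      rw [e]
      simp only [imm]
      have := lt01_le_one ((sw a ω t).1 - ((n:ℤ)+1) * mv true) a
      simp at *
      omega

lemma chain_sw (b : Bool) (a : ℤ) (ω : Stk) (t : ℕ) (A : ℤ → Finset ℕ) (N : ℕ)
    (hA : ∀ n : ℕ, n < N → (sw a ω t).2 ((sw a ω t).1 - (n+1) * mv b) ∈ A ((sw a ω t).1 - (n+1) * mv b)) :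
    Chain b ω false A (imm b a) N ((sw a ω t).1 - mv b) (cnt (!b) ω (sw a ω t).1 ((sw a ω t).2 (sw a ω t).1)) :=
  (good_sw b a ω t A N hA).chain

/-- two dead chains give a time with the prescribed departures -/
lemma sw_of_chains (a x : ℤ) (ω : Stk) (p : ℕ) (AL AR : ℤ → Finset ℕ) (NL NR : ℕ)
    (hL : Chain true ω true AL (imm true a) NL (x - 1) (cnt false ω x p))
    (hR : Chain false ω true AR (imm false a) NR (x + 1) (cnt true ω x p))
    (haL : x - NL ≤ a) (haR : a ≤ x + NR) :
    ∃ t, (sw a ω t).1 = x ∧ (sw a ω t).2 x = p ∧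
      (∀ z, x - NL ≤ z → z < x → (sw a ω t).2 z ∈ AL z) ∧
      (∀ z, x < z → z ≤ x + NR → (sw a ω t).2 z ∈ AR z) ∧
      (∀ z, z < x - NL ∨ x + NR < z → (sw a ω t).2 z = 0) := by
  obtain ⟨D1, h1, hG1, hd1⟩ := Chain.good (b := true) (x := x) (p := p) (by simpa using hL)
  obtain ⟨D2, h2, hG2, hd2⟩ := Chain.good (b := false) (x := x) (p := p) (by simpa using hR)
  simp only [mv_true, mv_false, Bool.not_true, Bool.not_false, forall_const, mul_one, mul_neg, sub_neg_eq_add] at *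
  let D : ℤ → ℕ := fun z => if z < x - NL then 0 else if z ≤ x then D1 z else if z ≤ x + NR then D2 z else 0
  have e1 : ∀ z, x - NL ≤ z → z ≤ x → D z = D1 z := by
    intro z g1 g2
    simp only [D]; rw [if_neg (by omega), if_pos g2]
  have e2 : ∀ z, x ≤ z → z ≤ x + NR → D z = D2 z := by
    intro z g1 g2
    rcases eq_or_lt_of_le g1 with h | h
    · rw [← h, e1 x (by omega) le_rfl, h1, h2]
    · simp only [D]; rw [if_neg (by omega), if_neg (by omega), if_pos g2]
  have e3 : ∀ z, z < x - NL ∨ x + NR < z → D z = 0 := by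
    rintro z (h | h)
    · simp only [D]; rw [if_pos h]
    · simp only [D]; rw [if_neg (by omega), if_neg (by omega), if_neg (by omega)]
  have gl : ∀ z, x - NL ≤ z → z < x → D z ∈ AL z ∧ (D z = 0 ∨ ω (z, D z - 1) = true) ∧
      cnt true ω z (D z) = cnt false ω (z+1) (D (z+1)) + imm true a z := by
    intro z g1 g2
    obtain ⟨n, hn⟩ := Int.le.dest (show z ≤ x - 1 by omega)
    have := hG1 n (by omega)
    simp only [mv_true, mul_one, Bool.not_true] at this
    have q1 : x - ((n:ℤ)+1) = z := by omega
    have q2 : x - (n:ℤ) = z + 1 := by omega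
    rw [q1, q2] at this
    rw [e1 z g1 g2.le, e1 (z+1) (by omega) (by omega)]
    exact this
  have gr : ∀ z, x < z → z ≤ x + NR → D z ∈ AR z ∧ (D z = 0 ∨ ω (z, D z - 1) = false) ∧
      cnt false ω z (D z) = cnt true ω (z-1) (D (z-1)) + imm false a z := by
    intro z g1 g2
    obtain ⟨n, hn⟩ := Int.le.dest (show x + 1 ≤ z by omega)
    have := hG2 n (by omega)
    simp only [mv_false, mul_neg, mul_one, Bool.not_false] at this
    have q1 : x - -((n:ℤ)+1) = z := by omega
    have q2 : x - -(n:ℤ) = z - 1 := by omega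
    rw [q1, q2] at this
    rw [e2 z g1.le g2, e2 (z-1) (by omega) (by omega)]
    exact this
  obtain ⟨t, ht⟩ := best a x ω D (Finset.Icc (x - NL) (x + NR))
    (by intro y hy
        rw [Finset.mem_Icc] at hy
        exact e3 y (by omega))
    (by
      intro y
      by_cases hc : y < x
      · rw [lt01_lt hc]
        by_cases hc1 : x - NL ≤ y
        · have := (gl y hc1 hc).2.2
          simp only [imm, if_true] at this
          have := lt01_le_one y a
          omega
        · rw [e3 y (by omega), lt01_lt (show y < a by omega)]
          by_cases hc2 : y + 1 < x - NL
          · rw [e3 (y+1) (by omega)]; simp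
          · have : y + 1 = x - NL := by omega
            rw [this, e1 _ le_rfl (by omega), hd1]; simp
      · rw [lt01_ge (p := x) (by omega)]
        by_cases hc1 : y + 1 ≤ x + NR
        · have := (gr (y+1) (by omega) hc1).2.2
          simp only [imm, add_sub_cancel_right] at this
          simp at this
          omega
        · rw [e3 (y+1) (by omega), lt01_ge (show a ≤ y by omega)]
          by_cases hc2 : x + NR < y
          · rw [e3 y (by omega)]; simp
          · have : y = x + NR := by omega
            rw [this, e2 _ (by omega) le_rfl, hd2]; simp)
    (by
      intro y hy
      by_cases hc : x - NL ≤ y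
      · exact (gl y hc hy).2.1
      · exact Or.inl (e3 y (by omega)))
    (by
      intro y hy
      by_cases hc : y ≤ x + NR
      · exact (gr y hy hc).2.1
      · exact Or.inl (e3 y (by omega)))
  refine ⟨t, by rw [ht], by rw [ht]; simp only; rw [e1 x (by omega) le_rfl, h1], ?_, ?_, ?_⟩
  · intro z g1 g2; rw [ht]; exact (gl z g1 g2).1
  · intro z g1 g2; rw [ht]; exact (gr z g1 g2).1
  · intro z g; rw [ht]; exact e3 z g

end Fav3

open MeasureTheory ProbabilityTheory
namespace Fav3

noncomputable def bin (n k : ℕ) : ℝ := (n.choose k : ℝ) / 2^n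

noncomputable def nbp : ℕ → ℕ → ℝ
  | K, 0 => if K = 0 then 1 else 0
  | 0, _ + 1 => 0
  | K + 1, d + 1 => bin d K / 2

lemma bin_nonneg (n k : ℕ) : 0 ≤ bin n k := by unfold bin; positivity

lemma nbp_nonneg (K d : ℕ) : 0 ≤ nbp K d := by
  cases d with
  | zero => simp only [nbp]; split_ifs <;> norm_num
  | succ d => cases K with
    | zero => simp [nbp]
    | succ K => simp only [nbp]; have := bin_nonneg d K; positivity

/-- generating recursion for chain probabilities -/
noncomputable def g (dead : Bool) : List (Finset ℕ × ℕ) → ℕ → ℝ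
  | [], k => if dead = true ∧ k ≠ 0 then 0 else 1
  | c :: l, k => ∑ d ∈ c.1, nbp (k + c.2) d * g dead l (d - (k + c.2))

def cfg (b : Bool) (A : ℤ → Finset ℕ) (I : ℤ → ℕ) : ℕ → ℤ → List (Finset ℕ × ℕ)
  | 0, _ => []
  | N + 1, y => (A y, I y) :: cfg b A I N (y - mv b)

noncomputable abbrev pr (E : Set Stk) : ℝ := (fair (ℤ × ℕ)).real E

lemma cnt_congr (b : Bool) {ω ω' : Stk} (y : ℤ) (n : ℕ) (h : ∀ i < n, ω (y, i) = ω' (y, i)) :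
    cnt b ω y n = cnt b ω' y n := by
  induction n with
  | zero => simp
  | succ n ih => rw [cnt_succ, cnt_succ, ih (fun i hi => h i (by omega)), h n (by omega)]

lemma box_finite (y : ℤ) (n : ℕ) : {p : ℤ × ℕ | p.1 = y ∧ p.2 < n}.Finite := by
  refine Set.Finite.subset (((Set.finite_singleton y).prod (Set.finite_Iio n))) ?_
  rintro ⟨a, b⟩ ⟨h1, h2⟩
  exact ⟨h1, h2⟩

lemma cnt_depOn (b : Bool) (y : ℤ) (n k : ℕ) :
    DepOn {p : ℤ × ℕ | p.1 = y ∧ p.2 < n} {ω | cnt b ω y n = k} := by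
  intro ω ω' h hs
  rw [Set.mem_ofPred_eq] at *
  rw [← cnt_congr b y n (fun i hi => h (y, i) ⟨rfl, hi⟩)]; exact hs

lemma arrow_depOn (b : Bool) (y : ℤ) (n : ℕ) :
    DepOn {p : ℤ × ℕ | p = (y, n)} {ω | ω (y, n) = b} := by
  intro ω ω' h hs
  rw [Set.mem_ofPred_eq] at *
  rw [← h (y, n) rfl]; exact hs

lemma arrow_meas (b : Bool) (y : ℤ) (n : ℕ) : MeasurableSet {ω : Stk | ω (y, n) = b} :=
  (arrow_depOn b y n).measurable (by simp)

lemma cnt_meas (b : Bool) (y : ℤ) (n k : ℕ) : MeasurableSet {ω : Stk | cnt b ω y n = k} :=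
  (cnt_depOn b y n k).measurable (box_finite y n)

lemma pr_arrow (b : Bool) (y : ℤ) (n : ℕ) : pr {ω : Stk | ω (y, n) = b} = 1/2 := by
  have := fair_cyl_real (I := ℤ × ℕ) {(y, n)} (fun _ => b)
  simpa using this

lemma pr_cnt_arrow (b c : Bool) (y : ℤ) (n k : ℕ) :
    pr ({ω : Stk | cnt b ω y n = k} ∩ {ω | ω (y, n) = c}) = pr {ω : Stk | cnt b ω y n = k} / 2 := by
  rw [pr, indep_of_depOn _ (cnt_meas b y n k) (arrow_meas c y n) (cnt_depOn b y n k) (arrow_depOn c y n)]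
  · rw [show (fair (ℤ × ℕ)).real {ω | ω (y, n) = c} = 1/2 from pr_arrow c y n]; ring
  · rw [Set.disjoint_left]
    rintro p ⟨h1, h2⟩ h3
    rw [Set.mem_ofPred_eq] at h3
    subst h3
    simp at h2

lemma pr_cnt (b : Bool) (y : ℤ) (n k : ℕ) : pr {ω | cnt b ω y n = k} = bin n k := by
  induction n generalizing k with
  | zero =>
    cases k with
    | zero => simp [bin]
    | succ k => simp [bin]
  | succ n ih =>
    have hd : Disjoint ({ω : Stk | cnt b ω y n + 1 = k} ∩ {ω | ω (y, n) = b})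
      ({ω : Stk | cnt b ω y n = k} ∩ {ω | ω (y, n) = !b}) := by
      rw [Set.disjoint_left]
      rintro ω ⟨_, h1⟩ ⟨_, h2⟩
      rw [Set.mem_ofPred_eq] at h1 h2
      cases b <;> simp_all
    have e : {ω | cnt b ω y (n+1) = k} = ({ω : Stk | cnt b ω y n + 1 = k} ∩ {ω | ω (y, n) = b}) ∪
      ({ω : Stk | cnt b ω y n = k} ∩ {ω | ω (y, n) = !b}) := by
      ext ω
      simp only [Set.mem_ofPred_eq, cnt_succ, Set.mem_union, Set.mem_inter_iff]
      cases b <;> cases h : ω (y, n) <;> simp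
    rw [e, pr, measureReal_union hd ((cnt_meas _ _ _ _).inter (arrow_meas _ _ _)), ← pr, ← pr, pr_cnt_arrow, ih]
    cases k with
    | zero =>
      have : {ω : Stk | cnt b ω y n + 1 = 0} = ∅ := by ext; simp
      rw [this]; simp [bin]; field_simp; ring
    | succ k =>
      have : {ω : Stk | cnt b ω y n + 1 = k + 1} = {ω : Stk | cnt b ω y n = k} := by ext; simp
      rw [this, pr_cnt_arrow, ih]
      simp only [bin, Nat.choose_succ_succ]; push_cast; field_simp; ring

def Ev (b : Bool) (y : ℤ) (d K : ℕ) : Set Stk := {ω | cnt b ω y d = K ∧ (d = 0 ∨ ω (y, d - 1) = b)}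

lemma Ev_depOn (b : Bool) (y : ℤ) (d K : ℕ) : DepOn {p : ℤ × ℕ | p.1 = y ∧ p.2 < d} (Ev b y d K) := by
  intro ω ω' h hs
  obtain ⟨h1, h2⟩ := hs
  refine ⟨?_, ?_⟩
  · rw [← cnt_congr b y d (fun i hi => h (y, i) ⟨rfl, hi⟩)]; exact h1
  · rcases Nat.eq_zero_or_pos d with h0 | h0
    · exact Or.inl h0
    · right
      rw [← h (y, d - 1) ⟨rfl, by show d - 1 < d; omega⟩]
      rcases h2 with h2 | h2
      · omega
      · exact h2

lemma Ev_meas (b : Bool) (y : ℤ) (d K : ℕ) : MeasurableSet (Ev b y d K) :=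
  (Ev_depOn b y d K).measurable (box_finite y d)

lemma pr_Ev (b : Bool) (y : ℤ) (d K : ℕ) : pr (Ev b y d K) = nbp K d := by
  cases d with
  | zero =>
    by_cases hK : K = 0
    · subst hK; simp [Ev, nbp]
    · simp [Ev, nbp, hK, Ne.symm hK]
  | succ d =>
    cases K with
    | zero =>
      have : Ev b y (d+1) 0 = ∅ := by
        ext ω
        simp only [Ev, Set.mem_ofPred_eq, Set.mem_empty_iff_false, iff_false, not_and, cnt_succ]
        intro h1 h2
        simp at h2
        simp [h2] at h1
      rw [this]; simp [nbp]
    | succ K =>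
      have : Ev b y (d+1) (K+1) = {ω : Stk | cnt b ω y d = K} ∩ {ω | ω (y, d) = b} := by
        ext ω
        simp only [Ev, Set.mem_ofPred_eq, Set.mem_inter_iff, cnt_succ]
        constructor
        · rintro ⟨h1, h2⟩
          simp at h2
          simp [h2] at h1 ⊢
          exact h1
        · rintro ⟨h1, h2⟩
          simp [h1, h2]
      rw [this, pr_cnt_arrow, pr_cnt]; rfl

def half (b : Bool) (y : ℤ) : Set (ℤ × ℕ) := {p | 0 ≤ mv b * (y - p.1)}

lemma half_sub (b : Bool) (y : ℤ) : half b (y - mv b) ⊆ half b y := by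
  rintro ⟨z, i⟩ h
  unfold half at *
  cases b <;> simp at * <;> omega

lemma chain_succ_set (b dead : Bool) (A : ℤ → Finset ℕ) (I : ℤ → ℕ) (N : ℕ) (y : ℤ) (k : ℕ) :
    {ω | Chain b ω dead A I (N+1) y k} = ⋃ d ∈ A y, (Ev b y d (k + I y) ∩
      {ω | Chain b ω dead A I N (y - mv b) (d - (k + I y))}) := by
  ext ω
  simp only [Set.mem_ofPred_eq, Chain, Set.mem_iUnion, Set.mem_inter_iff, Ev, exists_prop]
  constructor
  · rintro ⟨d, hd, h1, h2, h3⟩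
    refine ⟨d, hd, ⟨h1, h2⟩, ?_⟩
    have := cnt_add b ω y d
    rwa [show d - (k + I y) = cnt (!b) ω y d by omega]
  · rintro ⟨d, hd, ⟨h1, h2⟩, h3⟩
    refine ⟨d, hd, h1, h2, ?_⟩
    have := cnt_add b ω y d
    rwa [show cnt (!b) ω y d = d - (k + I y) by omega]

lemma chain_dep (b dead : Bool) (A : ℤ → Finset ℕ) (I : ℤ → ℕ) (N : ℕ) (y : ℤ) (k : ℕ) :
    DepOn (half b y) {ω | Chain b ω dead A I N y k} ∧ MeasurableSet {ω | Chain b ω dead A I N y k} := by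
  induction N generalizing y k with
  | zero => exact ⟨fun ω ω' _ h => h, by simp only [Chain]; exact MeasurableSet.const _⟩
  | succ N ih =>
    rw [chain_succ_set]
    constructor
    · intro ω ω' h hs
      simp only [Set.mem_iUnion] at hs ⊢
      obtain ⟨d, hd, h1, h2⟩ := hs
      refine ⟨d, hd, Ev_depOn b y d _ ω ω' ?_ h1, (ih _ _).1 ω ω' ?_ h2⟩
      · rintro ⟨z, i⟩ ⟨hz, _⟩
        refine h _ ?_
        simp only at hz
        simp [half, hz]
      · intro p hp
        exact h p (half_sub b y hp)
    · exact Finset.measurableSet_biUnion _ (fun d _ => (Ev_meas _ _ _ _).inter (ih _ _).2)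

lemma Ev_disj (b : Bool) (y : ℤ) {d d' K : ℕ} (h : d ≠ d') : Disjoint (Ev b y d K) (Ev b y d' K) := by
  rw [Set.disjoint_left]
  rintro ω ⟨h1, h2⟩ ⟨h3, h4⟩
  rcases lt_or_gt_of_ne h with h | h
  · have := cnt_lt b ω y h h4; omega
  · have := cnt_lt b ω y h h2; omega

lemma pr_chain (b dead : Bool) (A : ℤ → Finset ℕ) (I : ℤ → ℕ) (N : ℕ) (y : ℤ) (k : ℕ) :
    pr {ω | Chain b ω dead A I N y k} = g dead (cfg b A I N y) k := by
  induction N generalizing y k with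
  | zero =>
    simp only [Chain, cfg, g]
    by_cases h : dead = true <;> by_cases h' : k = 0 <;> simp [h, h']
  | succ N ih =>
    rw [chain_succ_set, cfg, g, pr, measureReal_biUnion_finset]
    · refine Finset.sum_congr rfl (fun d _ => ?_)
      rw [indep_of_depOn _ (Ev_meas _ _ _ _) (chain_dep b dead A I N _ _).2 (Ev_depOn _ _ _ _)
        (chain_dep b dead A I N _ _).1, ← pr, ← pr, pr_Ev, ih]
      rw [Set.disjoint_left]
      rintro ⟨z, i⟩ ⟨h1, h2⟩ h3
      simp only at h1
      subst h1
      cases b <;> simp [half] at h3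
    · intro d _ d' _ hdd
      exact (Ev_disj b y hdd).mono Set.inter_subset_left Set.inter_subset_left
    · intro d _
      exact (Ev_meas _ _ _ _).inter (chain_dep _ _ _ _ _ _ _).2

lemma g_nonneg (dead : Bool) (l : List (Finset ℕ × ℕ)) (k : ℕ) : 0 ≤ g dead l k := by
  induction l generalizing k with
  | nil => simp only [g]; split_ifs <;> norm_num
  | cons c l ih =>
    simp only [g]
    exact Finset.sum_nonneg (fun d _ => mul_nonneg (nbp_nonneg _ _) (ih _))

/-- chain started from the `p` first arrows at `x` -/
def SC (b dead : Bool) (A : ℤ → Finset ℕ) (I : ℤ → ℕ) (N : ℕ) (x : ℤ) (p : ℕ) : Set Stk :=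
  {ω | Chain b ω dead A I N (x - mv b) (cnt (!b) ω x p)}

lemma SC_eq (b dead : Bool) (A : ℤ → Finset ℕ) (I : ℤ → ℕ) (N : ℕ) (x : ℤ) (p : ℕ) :
    SC b dead A I N x p = ⋃ i ∈ Finset.range (p+1), ({ω | cnt (!b) ω x p = i} ∩
      {ω | Chain b ω dead A I N (x - mv b) i}) := by
  ext ω
  simp only [SC, Set.mem_ofPred_eq, Set.mem_iUnion, Set.mem_inter_iff, exists_prop, Finset.mem_range]
  constructor
  · intro h
    exact ⟨_, by have := cnt_le (!b) ω x p; omega, rfl, h⟩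
  · rintro ⟨i, _, rfl, h⟩; exact h

lemma SC_dep (b dead : Bool) (A : ℤ → Finset ℕ) (I : ℤ → ℕ) (N : ℕ) (x : ℤ) (p : ℕ) :
    DepOn (half b x) (SC b dead A I N x p) := by
  rw [SC_eq]
  intro ω ω' h hs
  simp only [Set.mem_iUnion] at hs ⊢
  obtain ⟨d, hd, h1, h2⟩ := hs
  refine ⟨d, hd, cnt_depOn _ x p d ω ω' ?_ h1, (chain_dep _ _ _ _ _ _ _).1 ω ω' ?_ h2⟩
  · rintro ⟨z, i⟩ ⟨hz, _⟩
    refine h _ ?_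
    simp only at hz
    simp [half, hz]
  · intro p hp
    exact h p (half_sub b x hp)

lemma SC_meas (b dead : Bool) (A : ℤ → Finset ℕ) (I : ℤ → ℕ) (N : ℕ) (x : ℤ) (p : ℕ) :
    MeasurableSet (SC b dead A I N x p) := by
  rw [SC_eq]
  exact Finset.measurableSet_biUnion _ (fun d _ => (cnt_meas _ _ _ _).inter (chain_dep _ _ _ _ _ _ _).2)

lemma pr_SC (b dead : Bool) (A : ℤ → Finset ℕ) (I : ℤ → ℕ) (N : ℕ) (x : ℤ) (p : ℕ) :
    pr (SC b dead A I N x p) = ∑ i ∈ Finset.range (p+1), bin p i * g dead (cfg b A I N (x - mv b)) i := by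
  rw [SC_eq, pr, measureReal_biUnion_finset]
  · refine Finset.sum_congr rfl (fun d _ => ?_)
    rw [indep_of_depOn _ (cnt_meas _ _ _ _) (chain_dep b dead A I N _ _).2 (cnt_depOn _ _ _ _)
      (chain_dep b dead A I N _ _).1, ← pr, ← pr, pr_cnt, pr_chain]
    rw [Set.disjoint_left]
    rintro ⟨z, i⟩ ⟨h1, h2⟩ h3
    simp only at h1
    subst h1
    cases b <;> simp [half] at h3
  · intro d _ d' _ hdd
    refine Disjoint.mono Set.inter_subset_left Set.inter_subset_left ?_
    rw [Set.disjoint_left]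
    intro ω h1 h2
    exact hdd (h1.symm.trans h2)
  · intro d _
    exact (cnt_meas _ _ _ _).inter (chain_dep _ _ _ _ _ _ _).2

/-- master identity -/
lemma pr_two (dL dR : Bool) (AL AR : ℤ → Finset ℕ) (IL IR : ℤ → ℕ) (NL NR : ℕ) (x : ℤ) (p : ℕ) :
    pr (SC true dL AL IL NL x p ∩ SC false dR AR IR NR x p) =
      ∑ i ∈ Finset.range (p+1), bin p i * g dL (cfg true AL IL NL (x - 1)) i *
        g dR (cfg false AR IR NR (x + 1)) (p - i) := by
  have e : SC true dL AL IL NL x p ∩ SC false dR AR IR NR x p =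
      ⋃ i ∈ Finset.range (p+1), (({ω | cnt false ω x p = i} ∩
        {ω | Chain true ω dL AL IL NL (x - 1) i}) ∩ {ω | Chain false ω dR AR IR NR (x + 1) (p - i)}) := by
    ext ω
    simp only [SC, Set.mem_ofPred_eq, Set.mem_iUnion, Set.mem_inter_iff, exists_prop, Finset.mem_range,
      mv_true, mv_false, Bool.not_true, Bool.not_false, sub_neg_eq_add]
    have := cnt_add false ω x p
    simp at this
    constructor
    · rintro ⟨h, h'⟩
      exact ⟨_, by omega, ⟨rfl, h⟩, by rwa [show p - cnt false ω x p = cnt true ω x p by omega]⟩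
    · rintro ⟨i, _, ⟨rfl, h⟩, h'⟩
      exact ⟨h, by rwa [show p - cnt false ω x p = cnt true ω x p by omega] at h'⟩
  rw [e, pr, measureReal_biUnion_finset]
  · refine Finset.sum_congr rfl (fun d _ => ?_)
    rw [indep_of_depOn (S := half true x) (T := half false (x+1)) _
      ((cnt_meas _ _ _ _).inter (chain_dep _ _ _ _ _ _ _).2) (chain_dep _ _ _ _ _ _ _).2 _
      (chain_dep _ _ _ _ _ _ _).1,
      indep_of_depOn _ (cnt_meas _ _ _ _) (chain_dep true _ _ _ _ _ _).2 (cnt_depOn _ _ _ _)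
      (chain_dep true _ _ _ _ _ _).1, ← pr, ← pr, ← pr, pr_cnt, pr_chain, pr_chain]
    · rw [Set.disjoint_left]
      rintro ⟨z, i⟩ ⟨h1, h2⟩ h3
      simp only at h1
      subst h1
      simp [half] at h3
    · rw [Set.disjoint_left]
      rintro ⟨z, i⟩ h1 h3
      simp [half] at h3 h1
      omega
    · refine DepOn.inter ((cnt_depOn _ _ _ _).mono ?_) ((chain_dep _ _ _ _ _ _ _).1.mono ?_)
      · rintro ⟨z, i⟩ ⟨hz, _⟩
        simp only at hz
        simp [half, hz]
      · simpa using half_sub true x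
  · intro d _ d' _ hdd
    refine Disjoint.mono (Set.inter_subset_left.trans Set.inter_subset_left) (Set.inter_subset_left.trans Set.inter_subset_left) ?_
    rw [Set.disjoint_left]
    intro ω h1 h2
    exact hdd (h1.symm.trans h2)
  · intro d _
    exact ((cnt_meas _ _ _ _).inter (chain_dep _ _ _ _ _ _ _).2).inter (chain_dep _ _ _ _ _ _ _).2

end Fav3

open MeasureTheory ProbabilityTheory
namespace Fav3

def capA (cap : ℤ → ℕ) : ℤ → Finset ℕ := fun z => Finset.range (cap z + 1)

lemma disjoint_LR (a : ℤ) (cap : ℤ → ℕ) (N : ℕ) (e x : ℤ) (hex : e < x) (hN : x - e ≤ N) (r p : ℕ)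
    (hr : cap e ≤ r) (hp : cap x ≤ p) :
    Disjoint (SC false false (capA cap) (imm false a) N e r) (SC true false (capA cap) (imm true a) N x p) := by
  rw [Set.disjoint_left]
  intro ω h1 h2
  obtain ⟨D1, hD1, hG1, -⟩ := Chain.good h1
  obtain ⟨D2, hD2, hG2, -⟩ := Chain.good h2
  obtain ⟨M, hM⟩ := Int.le.dest hex.le
  have g1 : ∀ n : ℕ, n < M → D1 (e + n + 1) ≤ cap (e + n + 1) ∧
      cnt false ω (e + n + 1) (D1 (e + n + 1)) = cnt true ω (e + n) (D1 (e + n)) + lt01 (e + n) a := by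
    intro n hn
    have := hG1 n (by omega)
    simp only [mv_false, mul_neg, mul_one, sub_neg_eq_add, Bool.not_false, imm, ← add_assoc,
      capA, Finset.mem_range, Nat.lt_succ_iff, add_sub_cancel_right] at this
    exact ⟨this.1, by simpa using this.2.2⟩
  have g2 : ∀ n : ℕ, n < M → D2 (e + n) ≤ cap (e + n) ∧
      cnt true ω (e + n) (D2 (e + n)) + lt01 (e + n) a = cnt false ω (e + n + 1) (D2 (e + n + 1)) + 1 := by
    intro n hn
    have := hG2 (M - 1 - n) (by omega)
    have e1 : x - (((M - 1 - n : ℕ):ℤ) + 1) * mv true = e + n := by simp; omega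
    have e2 : x - (((M - 1 - n : ℕ):ℤ)) * mv true = e + n + 1 := by simp; omega
    rw [e1, e2] at this
    simp only [Bool.not_true, imm, if_true, capA, Finset.mem_range, Nat.lt_succ_iff] at this
    have h := lt01_le_one (e+n) a
    exact ⟨this.1, by omega⟩
  have key : ∀ n : ℕ, n ≤ M → D2 (e + n) ≤ D1 (e + n) ∧ (0 < n → cap (e + n) < D1 (e + n) ∨ D2 (e + n) < D1 (e + n)) := by
    intro n
    induction n with
    | zero =>
      intro _
      have := (g2 0 (by omega)).1
      simp at this ⊢
      rw [hD1]; omega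
    | succ n ih =>
      intro hn
      have h0 := (ih (by omega)).1
      have h3 := (g1 n (by omega)).2
      have h4 := (g2 n (by omega)).2
      have h5 := cnt_mono true ω (e+n) h0
      have h6 : D2 (e + n + 1) < D1 (e + n + 1) := by
        by_contra hc
        push Not at hc
        have := cnt_mono false ω (e+n+1) hc
        omega
      push_cast
      rw [← add_assoc]
      exact ⟨h6.le, fun _ => Or.inr h6⟩
  have hMx : e + (M : ℤ) = x := by omega
  have h7 := (key M le_rfl).2 (by omega)
  have h8 := (g1 (M-1) (by omega)).1
  rw [show e + ((M - 1 : ℕ):ℤ) + 1 = x by omega] at h8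
  rw [hMx, hD2] at h7
  omega

lemma sum_LR (a : ℤ) (cap : ℤ → ℕ) (N : ℕ) (j : ℕ) (hj : 1 ≤ j) (X : Finset ℤ)
    (hX : ∀ x ∈ X, ∀ x' ∈ X, x' - x ≤ N) (p r : ℤ → ℕ) (hp : ∀ x, cap x ≤ p x) (hr : ∀ x, cap x ≤ r x) :
    ∑ x ∈ X, pr (SC true false (capA cap) (imm true a) N x (p x)) *
      pr (SC false false (capA cap) (imm false a) N (x+j) (r (x+j))) ≤ j + 1 := by
  let Ev : ℤ → Set Stk := fun x => SC true false (capA cap) (imm true a) N x (p x) ∩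
    SC false false (capA cap) (imm false a) N (x+j) (r (x+j))
  have h1 : ∀ x ∈ X, pr (SC true false (capA cap) (imm true a) N x (p x)) *
      pr (SC false false (capA cap) (imm false a) N (x+j) (r (x+j))) = pr (Ev x) := by
    intro x _
    refine (indep_of_depOn (S := half true x) (T := half false (x+j)) ?_ (SC_meas _ _ _ _ _ _ _) (SC_meas _ _ _ _ _ _ _)
      (SC_dep _ _ _ _ _ _ _) (SC_dep _ _ _ _ _ _ _)).symm
    rw [Set.disjoint_left]
    rintro ⟨z, i⟩ h1 h3
    simp [half] at h3 h1
    omega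
  rw [Finset.sum_congr rfl h1]
  have hmap : ∀ x ∈ X, (x % ((j:ℤ)+1)).toNat ∈ Finset.range (j+1) := by
    intro x _
    have h1 := Int.emod_nonneg x (show (j:ℤ)+1 ≠ 0 by omega)
    have h2 := Int.emod_lt_of_pos x (show 0 < (j:ℤ)+1 by omega)
    simp; omega
  rw [← Finset.sum_fiberwise_of_maps_to hmap]
  calc _ ≤ ∑ c ∈ Finset.range (j+1), (1:ℝ) := by
        refine Finset.sum_le_sum (fun c _ => ?_)
        rw [← measureReal_biUnion_finset]
        · exact measureReal_le_one
        · have : ∀ x ∈ X, ∀ x' ∈ X, x < x' → (x % ((j:ℤ)+1)).toNat = (x' % ((j:ℤ)+1)).toNat → Disjoint (Ev x) (Ev x') := by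
            intro x hx x' hx' hlt he
            have h1 := Int.emod_nonneg x (show (j:ℤ)+1 ≠ 0 by omega)
            have h2 := Int.emod_nonneg x' (show (j:ℤ)+1 ≠ 0 by omega)
            have h3 : x % ((j:ℤ)+1) = x' % ((j:ℤ)+1) := by omega
            have h4 := Int.emod_emod_of_dvd
            have h5 : ((j:ℤ)+1) ∣ x' - x := Int.ModEq.dvd h3
            have h6 := Int.le_of_dvd (by omega) h5
            have := hX x hx x' hx'
            refine Disjoint.mono Set.inter_subset_right Set.inter_subset_left
              (disjoint_LR a cap N (x+j) x' (by omega) (by omega) _ _ (hr _) (hp _))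
          intro x hx x' hx' hne
          simp only [Finset.coe_filter, Set.mem_ofPred_eq] at hx hx'
          rcases lt_or_gt_of_ne hne with h | h
          · exact this x hx.1 x' hx'.1 h (hx.2.trans hx'.2.symm)
          · exact (this x' hx'.1 x hx.1 h (hx'.2.trans hx.2.symm)).symm
        · intro x _
          exact (SC_meas _ _ _ _ _ _ _).inter (SC_meas _ _ _ _ _ _ _)
    _ = _ := by simp

/-! ### binomial estimates -/

lemma central_bound (n : ℕ) : (Nat.centralBinom n)^2 * (2*n+1) ≤ 16^n := by
  induction n with
  | zero => simp
  | succ n ih =>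
    have h := Nat.succ_mul_centralBinom_succ n
    have h2 : (n+1)^2 * ((Nat.centralBinom (n+1))^2 * (2*(n+1)+1)) ≤ (n+1)^2 * 16^(n+1) := by
      calc _ = ((n+1) * Nat.centralBinom (n+1))^2 * (2*(n+1)+1) := by ring
        _ = 4 * ((2*n+1) * (2*n+3)) * ((Nat.centralBinom n)^2 * (2*n+1)) := by rw [h]; ring
        _ ≤ 4 * (4*(n+1)^2) * 16^n := by
            have h3 : (2*n+1) * (2*n+3) ≤ 4*(n+1)^2 := by nlinarith
            exact Nat.mul_le_mul (Nat.mul_le_mul le_rfl h3) ih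
        _ = _ := by ring
    exact Nat.le_of_mul_le_mul_left h2 (by positivity)

lemma bin_sq (d K : ℕ) : d * bin d K ^ 2 ≤ 1 := by
  have hev : ∀ n : ℕ, (2*n+1 : ℝ) * ((Nat.centralBinom n : ℝ) / 4^n)^2 ≤ 1 := by
    intro n
    have h := central_bound n
    have h' : ((Nat.centralBinom n : ℝ))^2 * (2*n+1) ≤ 16^n := by exact_mod_cast h
    rw [div_pow, ← mul_div_assoc, div_le_one (by positivity), ← pow_mul, mul_comm n 2, pow_mul]
    norm_num
    linarith
  rcases Nat.even_or_odd' d with ⟨n, rfl | rfl⟩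
  · have h1 : bin (2*n) K ≤ (Nat.centralBinom n : ℝ) / 4^n := by
      unfold bin
      rw [pow_mul]; norm_num
      gcongr
      exact Nat.choose_le_centralBinom K n
    have h0 := bin_nonneg (2*n) K
    have h2 : bin (2*n) K ^ 2 ≤ ((Nat.centralBinom n : ℝ) / 4^n)^2 := by gcongr
    have := hev n
    push_cast
    nlinarith [sq_nonneg ((Nat.centralBinom n : ℝ) / 4^n)]
  · have h1 : bin (2*n+1) K ≤ (Nat.centralBinom n : ℝ) / 4^n := by
      unfold bin
      rw [pow_succ, pow_mul]; norm_num
      rw [div_le_div_iff₀ (by positivity) (by positivity)]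
      have : (2*n+1).choose K ≤ 2 * Nat.centralBinom n := by
        cases K with
        | zero => have := Nat.centralBinom_pos n; simp; omega
        | succ K =>
          rw [Nat.choose_succ_succ']
          have := Nat.choose_le_centralBinom K n
          have := Nat.choose_le_centralBinom (K+1) n
          omega
      have : ((2*n+1).choose K : ℝ) ≤ 2 * Nat.centralBinom n := by exact_mod_cast this
      nlinarith [show (0:ℝ) < 4^n by positivity]
    have h0 := bin_nonneg (2*n+1) K
    have h2 : bin (2*n+1) K ^ 2 ≤ ((Nat.centralBinom n : ℝ) / 4^n)^2 := by gcongr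
    have := hev n
    push_cast
    nlinarith [sq_nonneg ((Nat.centralBinom n : ℝ) / 4^n)]

lemma sum_bin (n : ℕ) : ∑ k ∈ Finset.range (n+1), bin n k = 1 := by
  simp only [bin, ← Finset.sum_div]
  rw [div_eq_one_iff_eq (by positivity)]
  exact_mod_cast Nat.sum_range_choose n

lemma bin_le_one (n k : ℕ) : bin n k ≤ 1 := by
  by_cases h : k ≤ n
  · rw [← sum_bin n]
    exact Finset.single_le_sum (f := bin n) (fun _ _ => bin_nonneg _ _) (by simp; omega)
  · simp [bin, Nat.choose_eq_zero_of_lt (not_le.1 h)]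

lemma nbp_le_one (K d : ℕ) : nbp K d ≤ 1 := by
  cases d with
  | zero => simp only [nbp]; split_ifs <;> norm_num
  | succ d => cases K with
    | zero => simp [nbp]
    | succ K => simp only [nbp]; have := bin_le_one d K; linarith

lemma nbp_sq (K n : ℕ) (hn : 1 ≤ n) : n * nbp K n ^ 2 ≤ 1/2 := by
  obtain ⟨d, rfl⟩ : ∃ d, n = d + 1 := ⟨n - 1, by omega⟩
  cases K with
  | zero => simp [nbp]
  | succ K =>
    simp only [nbp]
    have h1 := bin_sq d K
    have h2 := bin_le_one d K
    have h3 := bin_nonneg d K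
    push_cast
    nlinarith

lemma nbp_of_lt {K d : ℕ} (h : d < K) : nbp K d = 0 := by
  cases d with
  | zero => simp [nbp]; omega
  | succ d => cases K with
    | zero => omega
    | succ K => simp only [nbp, bin]; rw [Nat.choose_eq_zero_of_lt (by omega)]; simp

/-- lower tail of the binomial -/
lemma bin_tail (n u q : ℕ) (hq : q = n + 1) (hu : 4 * u < q) : bin n u ≤ 4 / q := by
  have hmono : ∀ v, u ≤ v → v ≤ n / 2 → n.choose u ≤ n.choose v := by
    intro v huv
    induction v, huv using Nat.le_induction with
    | base => intro _; exact le_rfl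
    | succ v hv ih =>
      intro h
      exact (ih (by omega)).trans (Nat.choose_le_succ_of_lt_half_left (by omega))
  have h1 : (n / 2 + 1 - u) * n.choose u ≤ 2^n := by
    calc (n / 2 + 1 - u) * n.choose u = ∑ v ∈ Finset.Ico u (n/2+1), n.choose u := by simp
      _ ≤ ∑ v ∈ Finset.Ico u (n/2+1), n.choose v := by
          refine Finset.sum_le_sum (fun v hv => ?_)
          rw [Finset.mem_Ico] at hv
          exact hmono v hv.1 (by omega)
      _ ≤ ∑ v ∈ Finset.range (n+1), n.choose v := by
          refine Finset.sum_le_sum_of_subset ?_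
          intro v hv
          rw [Finset.mem_Ico] at hv
          simp; omega
      _ = 2^n := Nat.sum_range_choose n
  have h2 : q * n.choose u ≤ 4 * 2^n := by
    have : q ≤ 4 * (n/2+1-u) := by omega
    calc q * n.choose u ≤ 4 * (n/2+1-u) * n.choose u := by gcongr
      _ = 4 * ((n/2+1-u) * n.choose u) := by ring
      _ ≤ _ := by gcongr
  have h3 : (q:ℝ) * n.choose u ≤ 4 * 2^n := by exact_mod_cast h2
  have hq0 : (0:ℝ) < q := by rw [hq]; positivity
  unfold bin
  rw [div_le_div_iff₀ (by positivity) hq0]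
  linarith

lemma nbp_mul (m q K I s : ℕ) (hm : 1 ≤ m) (hq : m ≤ q) :
    nbp K q * nbp (q - K + I) s ≤ 2 / m := by
  have hm0 : (0:ℝ) < m := by exact_mod_cast hm
  have n1 := nbp_nonneg K q
  have n2 := nbp_nonneg (q - K + I) s
  by_cases hs : m ≤ 4 * s
  · have h1 := nbp_sq K q (by omega)
    have h2 := nbp_sq (q - K + I) s (by omega)
    have hqR : (m:ℝ) ≤ q := by exact_mod_cast hq
    have hsR : (m:ℝ) ≤ 4 * s := by exact_mod_cast hs
    have h1' : m * nbp K q ^ 2 ≤ 1/2 := by nlinarith [sq_nonneg (nbp K q)]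
    have h2' : m * nbp (q - K + I) s ^ 2 ≤ 2 := by nlinarith [sq_nonneg (nbp (q - K + I) s)]
    rw [le_div_iff₀ hm0]
    nlinarith [sq_nonneg (2 * nbp K q - nbp (q - K + I) s)]
  · by_cases hK : s < q - K + I
    · rw [nbp_of_lt hK, mul_zero]; positivity
    · obtain ⟨d, rfl⟩ : ∃ d, q = d + 1 := ⟨q - 1, by omega⟩
      have hle := nbp_le_one (d + 1 - K + I) s
      have : nbp K (d+1) ≤ 2 / m := by
        cases K with
        | zero => simp only [nbp]; positivity
        | succ K =>
          simp only [nbp]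
          by_cases hKd : K ≤ d
          · have e : bin d K = bin d (d - K) := by simp only [bin]; rw [Nat.choose_symm hKd]
            have := bin_tail d (d - K) (d+1) rfl (by omega)
            rw [← e] at this
            have h4 : (4:ℝ) / ((d+1 : ℕ):ℝ) ≤ 4 / m := by gcongr
            have h5 : (4:ℝ)/m = 2 * (2 / m) := by ring
            linarith
          · simp only [bin, Nat.choose_eq_zero_of_lt (not_le.1 hKd), Nat.cast_zero, zero_div]; positivity
      nlinarith

end Fav3

open MeasureTheory ProbabilityTheory
namespace Fav3

lemma cfg_congr (b : Bool) (A A' : ℤ → Finset ℕ) (I I' : ℤ → ℕ) (N : ℕ) (y : ℤ)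
    (h : ∀ n : ℕ, n < N → A (y - n * mv b) = A' (y - n * mv b) ∧ I (y - n * mv b) = I' (y - n * mv b)) :
    cfg b A I N y = cfg b A' I' N y := by
  induction N generalizing y with
  | zero => rfl
  | succ N ih =>
    have h0 := h 0 (by omega)
    simp only [Nat.cast_zero, zero_mul, sub_zero] at h0
    rw [cfg, cfg, h0.1, h0.2, ih]
    intro n hn
    have := h (n+1) (by omega)
    rwa [show y - ((n + 1 : ℕ) : ℤ) * mv b = y - mv b - n * mv b by push_cast; ring] at this

def capT (st : St) (h : ℕ) (z : ℤ) : ℕ := h - 1 - st.loc z + eq01 z st.pos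

def rightA (st : St) (h : ℕ) (x : ℤ) (z : ℤ) : Finset ℕ :=
  if z = x + 1 ∨ z = x + 3 then {capT st h z + 1} else Finset.range (capT st h z + 1)

lemma TB_sub (st : St) (h : ℕ) (x : ℤ) (N N' : ℕ) (hl : ∀ y, st.loc y < h) :
    {ω | bits st.pos ω ∈ TB st x h} ⊆ SC true false (capA (capT st h)) (imm true st.pos) N x (capT st h x) ∩
      SC false false (rightA st h x) (imm false st.pos) N' x (capT st h x) := by
  rintro ω ⟨k, hk⟩
  obtain ⟨h0, h1, h2, h3, h4⟩ := hk
  rw [run_pos_eq] at h0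
  have hloc := run_loc_eq st ω k
  rw [h0] at hloc
  have e1 : (sw st.pos ω k).2 x = capT st h x := by
    have := hloc x
    have := hl x
    rw [eq01_self] at *
    unfold capT; omega
  have e2 : ∀ z, z ≠ x → (z = x + 1 ∨ z = x + 3) → (sw st.pos ω k).2 z = capT st h z + 1 := by
    intro z hz hz'
    have q1 := hloc z
    have := hl z
    rw [eq01_ne hz] at q1
    unfold capT
    rcases hz' with rfl | rfl <;> omega
  have e3 : ∀ z, z ≠ x → ¬ (z = x + 1 ∨ z = x + 3) → (sw st.pos ω k).2 z < capT st h z + 1 := by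
    intro z hz hz'
    push Not at hz'
    have q1 := hloc z
    have := hl z
    have := h4 z hz hz'.1 hz'.2
    rw [eq01_ne hz] at q1
    unfold capT
    omega
  constructor
  · have := chain_sw true st.pos ω k (capA (capT st h)) N (by
      intro n hn
      rw [h0]
      simp only [mv_true, mul_one, capA, Finset.mem_range]
      exact e3 _ (by omega) (by omega))
    rw [h0, e1] at this
    exact this
  · have := chain_sw false st.pos ω k (rightA st h x) N' (by
      intro n hn
      rw [h0]
      simp only [mv_false, mul_neg, mul_one, sub_neg_eq_add, rightA]
      split_ifs with hc
      · rw [Finset.mem_singleton]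
        exact e2 _ (by omega) hc
      · rw [Finset.mem_range]
        exact e3 _ (by omega) hc)
    rw [h0, e1] at this
    exact this

lemma nbp_le_bin (K r : ℕ) (hK : K ≤ r) : nbp K r ≤ bin r (r - K) := by
  rw [bin, Nat.choose_symm hK]
  cases r with
  | zero => simp [nbp]; split_ifs with h <;> simp [h]
  | succ d => cases K with
    | zero => simp only [nbp]; positivity
    | succ K =>
      simp only [nbp, bin, div_div, ← pow_succ]
      gcongr
      rw [Nat.choose_succ_succ]; omega

lemma right_bound (m q I1 c2 I2 r I3 k : ℕ) (l : List (Finset ℕ × ℕ)) (hm : 1 ≤ m) (hq : m ≤ q) :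
    g false (({q}, I1) :: (Finset.range (c2+1), I2) :: ({r}, I3) :: l) k ≤
      2 / m * ∑ j ∈ Finset.range (r+1), bin r j * g false l j := by
  simp only [g, Finset.sum_singleton]
  rw [Finset.mul_sum, Finset.mul_sum]
  set K2 := q - (k + I1) + I2 with hK2
  have hm0 : (0:ℝ) < m := by exact_mod_cast hm
  -- restrict the sum
  let T := (Finset.range (c2+1)).filter (fun s => K2 ≤ s ∧ s - K2 + I3 ≤ r)
  have h1 : ∑ s ∈ Finset.range (c2+1), nbp (k + I1) q * (nbp K2 s * (nbp (s - K2 + I3) r * g false l (r - (s - K2 + I3))))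
      = ∑ s ∈ T, nbp (k + I1) q * (nbp K2 s * (nbp (s - K2 + I3) r * g false l (r - (s - K2 + I3)))) := by
    symm
    refine Finset.sum_filter_of_ne ?_
    intro s _ hne
    by_contra hc
    apply hne
    rw [not_and_or] at hc
    rcases hc with hc | hc
    · rw [nbp_of_lt (not_le.1 hc)]; simp
    · rw [nbp_of_lt (not_le.1 hc)]; simp
  rw [h1]
  calc _ ≤ ∑ s ∈ T, 2 / m * (bin r (r - (s - K2 + I3)) * g false l (r - (s - K2 + I3))) := by
        refine Finset.sum_le_sum (fun s hs => ?_)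
        simp only [T, Finset.mem_filter] at hs
        rw [← mul_assoc]
        refine mul_le_mul (nbp_mul m q (k + I1) I2 s hm hq) ?_ (mul_nonneg (nbp_nonneg _ _) (g_nonneg _ _ _)) (by positivity)
        exact mul_le_mul_of_nonneg_right (nbp_le_bin _ _ hs.2.2) (g_nonneg _ _ _)
    _ = ∑ j ∈ T.image (fun s => r - (s - K2 + I3)), 2 / m * (bin r j * g false l j) := by
        rw [Finset.sum_image]
        intro s hs s' hs' he
        simp only [T, Finset.coe_filter, Set.mem_ofPred_eq] at hs hs'
        simp only at he
        omega
    _ ≤ _ := by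
        refine Finset.sum_le_sum_of_subset_of_nonneg ?_ ?_
        · intro j hj
          rw [Finset.mem_image] at hj
          obtain ⟨s, _, rfl⟩ := hj
          simp
        · intro j _ _
          have := bin_nonneg r j
          have := g_nonneg false l j
          positivity

/-- upper lemma -/
lemma upper (st : St) (h0 m : ℕ) (hm : 1 ≤ m) (hl : ∀ y, st.loc y ≤ h0) (X : Finset ℤ) :
    ∑ x ∈ X, (fair ℕ).real (TB st x (h0 + m)) ≤ 8 / m := by
  obtain ⟨N, hN⟩ : ∃ N : ℕ, ∀ x ∈ X, ∀ x' ∈ X, x' - x ≤ N := by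
    refine ⟨∑ x ∈ X, ∑ x' ∈ X, (x' - x).toNat, ?_⟩
    intro x hx x' hx'
    have h1 : (x' - x).toNat ≤ ∑ x' ∈ X, (x' - x).toNat :=
      Finset.single_le_sum (f := fun x' => (x' - x).toNat) (fun _ _ => Nat.zero_le _) hx'
    have h2 : ∑ x' ∈ X, (x' - x).toNat ≤ ∑ x ∈ X, ∑ x' ∈ X, (x' - x).toNat :=
      Finset.single_le_sum (f := fun x => ∑ x' ∈ X, (x' - x).toNat) (fun _ _ => Nat.zero_le _) hx
    have : ((x' - x).toNat : ℤ) ≤ ((∑ x ∈ X, ∑ x' ∈ X, (x' - x).toNat : ℕ) : ℤ) := by exact_mod_cast h1.trans h2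
    exact (Int.self_le_toNat _).trans this
  have hm0 : (0:ℝ) < m := by exact_mod_cast hm
  set h := h0 + m
  set cap := capT st h
  have hS := sum_LR st.pos cap N 3 (by norm_num) X hN cap (fun z => cap z + 1) (fun _ => le_rfl) (fun _ => Nat.le_succ _)
  have key : ∀ x ∈ X, (fair ℕ).real (TB st x h) ≤ 2 / m * (pr (SC true false (capA cap) (imm true st.pos) N x (cap x)) *
      pr (SC false false (capA cap) (imm false st.pos) N (x+(3:ℕ)) (cap (x+(3:ℕ)) + 1))) := by
    intro x _
    rw [bits_real st.pos (TB_measurable st x h)]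
    refine (measureReal_mono (TB_sub st h x N (N+3) (fun y => by have := hl y; omega))).trans ?_
    rw [← pr, pr_two, pr_SC, pr_SC, Finset.sum_mul, Finset.mul_sum]
    refine Finset.sum_le_sum (fun i hi => ?_)
    have hc : g false (cfg false (rightA st h x) (imm false st.pos) (N + 3) (x + 1)) (cap x - i) ≤
        2 / m * ∑ j ∈ Finset.range (cap (x + (3:ℕ)) + 1 + 1), bin (cap (x+(3:ℕ)) + 1) j *
          g false (cfg false (capA cap) (imm false st.pos) N (x+(3:ℕ) - mv false)) j := by
      have e1 : x + 1 - mv false - mv false = x + 3 := by simp; ring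
      have e2 : x + 1 - mv false = x + 2 := by simp; ring
      have e3 : cfg false (rightA st h x) (imm false st.pos) N (x + 3 - mv false) =
          cfg false (capA cap) (imm false st.pos) N (x + 3 - mv false) := by
        refine cfg_congr _ _ _ _ _ _ _ ?_
        intro n _
        refine ⟨?_, rfl⟩
        have hmv : mv false = -1 := rfl
        unfold rightA capA
        rw [if_neg (by rw [hmv]; omega)]
      rw [cfg, cfg, cfg, e1, e2, e3]
      simp only [rightA, true_or, or_true, if_true]
      rw [if_neg (by omega)]
      refine right_bound m _ _ _ _ _ _ _ _ hm ?_
      have := hl (x+1)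
      simp only [capT]; omega
    have hb := bin_nonneg (cap x) i
    have hg := g_nonneg false (cfg true (capA cap) (imm true st.pos) N (x - 1)) i
    calc _ ≤ bin (cap x) i * g false (cfg true (capA cap) (imm true st.pos) N (x - 1)) i * (2 / m * ∑ j ∈ Finset.range (cap (x + (3:ℕ)) + 1 + 1), bin (cap (x+(3:ℕ)) + 1) j *
          g false (cfg false (capA cap) (imm false st.pos) N (x+(3:ℕ) - mv false)) j) := by
          exact mul_le_mul_of_nonneg_left hc (by positivity)
      _ = _ := by simp only [mv_true]; ring
  calc _ ≤ _ := Finset.sum_le_sum key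
    _ = 2 / m * ∑ x ∈ X, _ := by rw [Finset.mul_sum]
    _ ≤ 2 / m * ((3:ℕ) + 1) := by gcongr
    _ = _ := by push_cast; ring

end Fav3

namespace Fav3
open MeasureTheory ProbabilityTheory

lemma hasSum_cast {f f' : ℕ → ℝ} {a a' : ℝ} (h : HasSum f a) (h1 : ∀ n, f' n = f n) (h2 : a' = a) :
    HasSum f' a' := by
  rw [funext h1, h2]; exact h

lemma nbp_add (k n : ℕ) : nbp (k+1) (k+1+n) = ((n+k).choose k : ℝ) * (1/2)^(n+k+1) := by
  rw [show k+1+n = (n+k)+1 by ring]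
  simp only [nbp, bin]
  rw [pow_succ, one_div, inv_pow]; ring

lemma hasSum_nb (K : ℕ) (s : ℝ) (h0 : 0 ≤ s) (h1 : s ≤ 1) :
    HasSum (fun n => nbp K (K+n) * s^n) ((2-s)⁻¹^K) := by
  cases K with
  | zero =>
    have : (fun n => nbp 0 (0+n) * s^n) = fun n => if n = 0 then (1:ℝ) else 0 := by
      funext n; cases n <;> simp [nbp]
    rw [this]; simpa using hasSum_ite_eq (0:ℕ) (1:ℝ)
  | succ k =>
    have h := hasSum_choose_mul_geometric_of_norm_lt_one (𝕜 := ℝ) k (r := s/2)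
      (by rw [Real.norm_eq_abs, abs_of_nonneg (by linarith)]; linarith)
    have h2 := h.mul_left ((1/2:ℝ)^(k+1))
    refine hasSum_cast h2 (fun n => ?_) ?_
    · rw [nbp_add]; ring
    · rw [← one_div_pow, ← mul_pow, inv_eq_one_div]
      congr 1
      have : (2:ℝ) - s ≠ 0 := by linarith
      have : (1:ℝ) - s/2 ≠ 0 := by linarith
      field_simp

lemma hasSum_one (K : ℕ) : HasSum (fun n => nbp K (K+n)) 1 := by
  have := hasSum_nb K 1 (by norm_num) le_rfl
  norm_num at this; exact this

lemma hasSum_mean (K : ℕ) : HasSum (fun n => nbp K (K+n) * n) K := by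
  rw [← hasSum_nat_add_iff' 1]
  simp only [Finset.range_one, Finset.sum_singleton, Nat.cast_zero, mul_zero, sub_zero]
  have h := (hasSum_one (K+1)).mul_left (K:ℝ)
  rw [mul_one] at h
  refine hasSum_cast h (fun n => ?_) rfl
  cases K with
  | zero => simp [nbp]
  | succ k =>
    rw [nbp_add, show n + 1 + k = n + (k+1) by ring, nbp_add]
    have := Nat.choose_succ_right_eq (n+(k+1)) k
    rw [show n + (k+1) - k = n + 1 by omega] at this
    have h' : (((n+(k+1)).choose (k+1) : ℝ)) * (k+1) = ((n+(k+1)).choose k : ℝ) * (n+1) := by exact_mod_cast this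
    push_cast
    linear_combination (-(1/2:ℝ)^(n+(k+1)+1)) * h'

lemma hasSum_lin (K : ℕ) (s : ℝ) (h0 : 0 ≤ s) (h1 : s ≤ 1) (a b e : ℝ) :
    HasSum (fun n => nbp K (K+n) * (a * s^n + b * n + e)) (a * (2-s)⁻¹^K + b * K + e) := by
  have := (((hasSum_nb K s h0 h1).mul_left a).add ((hasSum_mean K).mul_left b)).add ((hasSum_one K).mul_left e)
  refine hasSum_cast this (fun n => ?_) ?_
  · ring
  · ring

lemma g_step (dead : Bool) (l : List (Finset ℕ × ℕ)) (c I k : ℕ) (F : ℕ → ℝ) (S : ℝ)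
    (hS : HasSum (fun n => nbp (k+I) (k+I+n) * F n) S)
    (h1 : ∀ n, k+I+n ≤ c → F n ≤ g dead l n) (h2 : ∀ n, c < k+I+n → F n ≤ 0) :
    S ≤ g dead ((Finset.range (c+1), I)::l) k := by
  set K := k + I with hK
  have hG : HasSum (fun n => if n < c+1-K then nbp K (K+n) * g dead l n else 0)
      (∑ n ∈ Finset.range (c+1-K), if n < c+1-K then nbp K (K+n) * g dead l n else 0) := by
    refine hasSum_sum_of_ne_finset_zero ?_
    intro n hn
    rw [if_neg (by simpa using hn)]
  have hle := hasSum_le (fun n => ?_) hS hG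
  · refine hle.trans ?_
    simp only [g]
    calc _ = ∑ n ∈ Finset.range (c+1-K), nbp K (K+n) * g dead l n :=
          Finset.sum_congr rfl (fun n hn => if_pos (by simpa using hn))
      _ = ∑ d ∈ (Finset.range (c+1-K)).image (fun n => K + n), nbp K d * g dead l (d - K) := by
          rw [Finset.sum_image (by intro a _ b _ h; simpa using h)]
          refine Finset.sum_congr rfl (fun n _ => ?_)
          rw [Nat.add_sub_cancel_left]
      _ ≤ _ := by
          refine Finset.sum_le_sum_of_subset_of_nonneg ?_ ?_
          · intro d hd
            simp only [Finset.mem_image, Finset.mem_range] at hd ⊢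
            obtain ⟨n, hn, rfl⟩ := hd
            omega
          · intro d _ _
            exact mul_nonneg (nbp_nonneg _ _) (g_nonneg _ _ _)
  · by_cases hn : n < c+1-K
    · simp only [hn, if_true]
      exact mul_le_mul_of_nonneg_left (h1 n (by omega)) (nbp_nonneg _ _)
    · simp only [hn, if_false]
      exact mul_nonpos_of_nonneg_of_nonpos (nbp_nonneg _ _) (h2 n (by omega))

/-- free phase, extinction -/
lemma free1 (B : ℕ) (l : List (Finset ℕ × ℕ)) (hl : ∀ c ∈ l, ∃ q, 2*B+1 ≤ q ∧ c = (Finset.range (q+1), 0)) (z : ℕ) :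
    ((l.length : ℝ)/(l.length+1))^z - z/(B+1) ≤ g true l z := by
  have hB : (0:ℝ) < B + 1 := by positivity
  induction l generalizing z with
  | nil =>
    cases z with
    | zero => simp [g]
    | succ z => simp [g]; positivity
  | cons c l ih =>
    obtain ⟨q, hq, rfl⟩ := hl c (by simp)
    by_cases hz : B + 1 ≤ z
    · refine le_trans ?_ (g_nonneg _ _ _)
      have : (1:ℝ) ≤ z/(B+1) := by rw [le_div_iff₀ hB]; exact_mod_cast (by omega : 1 * (B+1) ≤ z)
      have h1 : (((((Finset.range (q+1), 0)::l).length : ℝ)/((((Finset.range (q+1), 0)::l).length : ℝ)+1)))^z ≤ 1 := by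
        refine pow_le_one₀ (by positivity) ?_
        rw [div_le_one (by positivity)]; linarith
      linarith
    · set θ := (l.length : ℝ)/(l.length+1) with hθ
      have hθ0 : 0 ≤ θ := by positivity
      have hθ1 : θ ≤ 1 := by rw [hθ, div_le_one (by positivity)]; linarith
      have hs := hasSum_lin (z+0) θ hθ0 hθ1 1 (-1/(B+1)) 0
      refine le_trans (le_of_eq ?_) (g_step true l q 0 z _ _ hs ?_ ?_)
      · have : (2 - θ)⁻¹ = (((((Finset.range (q+1), 0)::l).length : ℝ)/((((Finset.range (q+1), 0)::l).length : ℝ)+1))) := by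
          rw [hθ]; simp only [List.length_cons]; push_cast
          have h3 : (l.length : ℝ) + 1 ≠ 0 := by positivity
          have h4 : (l.length : ℝ) + 1 + 1 ≠ 0 := by positivity
          have h5 : 2 - (l.length : ℝ)/(l.length+1) = (l.length+1+1)/(l.length+1) := by field_simp; ring
          rw [h5, inv_div]
        rw [this]; simp; ring
      · intro n _
        have := ih (fun c hc => hl c (by simp [hc])) n
        refine le_trans (le_of_eq ?_) this
        ring
      · intro n hn
        have h1 : (1:ℝ) ≤ n/(B+1) := by rw [le_div_iff₀ hB]; exact_mod_cast (by omega : 1 * (B+1) ≤ n)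
        have h2 : θ^n ≤ 1 := pow_le_one₀ hθ0 hθ1
        have : (-1:ℝ)/(B+1)*n = -(n/(B+1)) := by ring
        rw [this]; linarith

lemma theta_ge (M z : ℕ) : 1 - (z:ℝ)/(M+1) ≤ ((M:ℝ)/(M+1))^z := by
  have h : (M:ℝ)/(M+1) = 1 + (-1/(M+1)) := by field_simp; ring
  have := one_add_mul_le_pow (a := (-1/(M+1:ℝ))) (by
    have : (0:ℝ) < M+1 := by positivity
    rw [le_div_iff₀ this]; have := Nat.cast_nonneg (α := ℝ) M; linarith) z
  rw [h]; refine le_trans (le_of_eq ?_) this; ring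

lemma free1' (B : ℕ) (l : List (Finset ℕ × ℕ)) (hl : ∀ c ∈ l, ∃ q, 2*B+1 ≤ q ∧ c = (Finset.range (q+1), 0)) (z : ℕ) :
    1 - z * (1/(l.length+1) + 1/(B+1) : ℝ) ≤ g true l z := by
  have h1 := free1 B l hl z
  have h2 := theta_ge l.length z
  have : 1 - z * (1/(l.length+1) + 1/(B+1) : ℝ) = 1 - (z:ℝ)/(l.length+1) - z/(B+1) := by ring
  linarith

lemma inv_two_sub_ge (s : ℝ) (h1 : s ≤ 1) : s ≤ (2-s)⁻¹ := by
  rw [← one_div, le_div_iff₀ (by linarith)]; nlinarith [sq_nonneg (1-s)]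

lemma inv_two_sub_le (s : ℝ) (h1 : s ≤ 1) : (2-s)⁻¹ ≤ 1 := by
  refine inv_le_one_of_one_le₀ (by linarith)

lemma free2 (B : ℕ) (l : List (Finset ℕ × ℕ)) (hl : ∀ c ∈ l, ∃ q, 2*B+1 ≤ q ∧ c = (Finset.range (q+1), 0))
    (s : ℝ) (h0 : 0 ≤ s) (h1 : s ≤ 1) (K : ℝ) (hK0 : 0 ≤ K) (hK1 : K ≤ 1) (z : ℕ) :
    K * (s^z - s^(B+1)) - 1 + ((l.length : ℝ)/(l.length+1))^z ≤ g true l z := by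
  have hp : ∀ n, B + 1 ≤ n → K * (s^n - s^(B+1)) ≤ 0 := by
    intro n hn
    have := pow_le_pow_of_le_one h0 h1 hn
    exact mul_nonpos_of_nonneg_of_nonpos hK0 (by linarith)
  induction l generalizing z with
  | nil =>
    cases z with
    | zero =>
      simp only [g]
      have : 0 ≤ s^(B+1) := by positivity
      simp
      nlinarith
    | succ z =>
      simp only [g]
      have : 0 ≤ s^(B+1) := by positivity
      have : s^(z+1) ≤ 1 := pow_le_one₀ h0 h1
      simp
      nlinarith
  | cons c l ih =>
    obtain ⟨q, hq, rfl⟩ := hl c (by simp)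
    have hθ' : ∀ n : ℕ, 0 ≤ (n:ℝ)/(n+1) ∧ (n:ℝ)/(n+1) ≤ 1 := by
      intro n
      refine ⟨by positivity, ?_⟩
      rw [div_le_one (by positivity)]; linarith
    by_cases hz : B + 1 ≤ z
    · refine le_trans ?_ (g_nonneg _ _ _)
      have h1 := pow_le_one₀ (hθ' ((Finset.range (q+1), 0)::l).length).1 (hθ' ((Finset.range (q+1), 0)::l).length).2 (n := z)
      have := hp z hz
      linarith
    · set θ := (l.length : ℝ)/(l.length+1) with hθ
      obtain ⟨hθ0, hθ1⟩ := hθ' l.length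
      rw [← hθ] at hθ0 hθ1
      have hs := (hasSum_lin (z+0) θ hθ0 hθ1 1 0 (-K*s^(B+1) - 1)).add (hasSum_lin (z+0) s h0 h1 K 0 0)
      have hs' := hasSum_cast hs (f' := fun n => nbp (z+0) (z+0+n) * (K * (s^n - s^(B+1)) - 1 + θ^n))
        (fun n => by ring) rfl
      refine le_trans ?_ (g_step true l q 0 z _ _ hs' ?_ ?_)
      · have : (2 - θ)⁻¹ = (((((Finset.range (q+1), 0)::l).length : ℝ)/((((Finset.range (q+1), 0)::l).length : ℝ)+1))) := by
          rw [hθ]; simp only [List.length_cons]; push_cast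
          have h3 : (l.length : ℝ) + 1 ≠ 0 := by positivity
          have h4 : (l.length : ℝ) + 1 + 1 ≠ 0 := by positivity
          have h5 : 2 - (l.length : ℝ)/(l.length+1) = (l.length+1+1)/(l.length+1) := by field_simp; ring
          rw [h5, inv_div]
        rw [this]
        have h6 := pow_le_pow_left₀ h0 (inv_two_sub_ge s h1) z
        have h7 := mul_le_mul_of_nonneg_left h6 hK0
        simp only [add_zero]
        linarith
      · intro n _
        exact ih (fun c hc => hl c (by simp [hc])) n
      · intro n hn
        have h2 : θ^n ≤ 1 := pow_le_one₀ hθ0 hθ1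
        have := hp n (by omega)
        linarith

lemma free2' (B : ℕ) (l : List (Finset ℕ × ℕ)) (hl : ∀ c ∈ l, ∃ q, 2*B+1 ≤ q ∧ c = (Finset.range (q+1), 0))
    (s : ℝ) (h0 : 0 ≤ s) (h1 : s ≤ 1) (K : ℝ) (hK0 : 0 ≤ K) (hK1 : K ≤ 1) (z : ℕ) :
    K * (s^z - s^(B+1)) - z * (1/(l.length+1)) ≤ g true l z := by
  have h1 := free2 B l hl s h0 h1 K hK0 hK1 z
  have h2 := theta_ge l.length z
  have : (z:ℝ) * (1/(l.length+1)) = z/(l.length+1) := by ring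
  linarith

def OldL (B : ℕ) (l : List (Finset ℕ × ℕ)) : Prop :=
  ∀ c ∈ l, ∃ q I, 2*B+1 ≤ q ∧ I ≤ 1 ∧ c = (Finset.range (q+1), I)

lemma old1 (B : ℕ) (l l2 : List (Finset ℕ × ℕ)) (hl : OldL B l2) (δ : ℝ) (hδ : 1/(B+1) ≤ δ) (m : ℝ) (hm : 0 ≤ m)
    (hb : ∀ z : ℕ, 1 - (z+m) * δ ≤ g true l z) (z : ℕ) :
    1 - (z + (m + (l2.map Prod.snd).sum)) * δ ≤ g true (l2 ++ l) z := by
  have hB : (0:ℝ) < B + 1 := by positivity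
  have hδ0 : 0 ≤ δ := le_trans (by positivity) hδ
  have hneg : ∀ (n : ℕ) (y : ℝ), 0 ≤ y → B + 1 ≤ n → 1 - (n + y) * δ ≤ 0 := by
    intro n y hy hn
    have hn' : (B:ℝ) + 1 ≤ n := by exact_mod_cast hn
    have : 1 ≤ (B+1) * δ := by rwa [div_le_iff₀' hB] at hδ
    nlinarith
  induction l2 generalizing z with
  | nil => simpa using hb z
  | cons c l2 ih =>
    obtain ⟨q, I, hq, hI, rfl⟩ := hl c (by simp)
    have ih' := ih (fun c hc => hl c (by simp [hc]))
    simp only [List.map_cons, List.sum_cons, List.cons_append]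
    by_cases hz : B + 1 ≤ z
    · exact (hneg z _ (by positivity) hz).trans (g_nonneg _ _ _)
    · have hs := hasSum_lin (z+I) 1 zero_le_one le_rfl 0 (-δ) (1 - (m + (l2.map Prod.snd).sum) * δ)
      refine le_trans (le_of_eq ?_) (g_step true (l2 ++ l) q I z _ _ hs ?_ ?_)
      · push_cast; ring
      · intro n _
        refine le_trans (le_of_eq ?_) (ih' n)
        ring
      · intro n hn
        have := hneg n (m + ((l2.map Prod.snd).sum : ℕ)) (by positivity) (by omega)
        linarith

lemma old2 (B : ℕ) (l l2 : List (Finset ℕ × ℕ)) (hl : OldL B l2) (δ : ℝ) (hδ : 1/(B+1) ≤ δ)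
    (hb : ∀ z : ℕ, 1 - z * δ ≤ g true l z) (s : ℝ) (h0 : 0 ≤ s) (h1 : s ≤ 1) (K : ℝ) (hK0 : 0 ≤ K)
    (e : ℝ) (he : 0 ≤ e) (hb2 : ∀ z : ℕ, K * (s^z - s^(B+1)) - z * e ≤ g true l z)
    (Z : ℕ) (hZ : (Z + (l2.map Prod.snd).sum) * δ ≤ 1 - K) (hs : ∀ z : ℕ, Z < z → s^z ≤ (2-s)⁻¹^(z+1)) (z : ℕ) :
    K * (s^z - s^(B+1)) - (z + (l2.map Prod.snd).sum) * e ≤ g true (l2 ++ l) z := by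
  have hδ0 : 0 ≤ δ := le_trans (by positivity) hδ
  have hp : ∀ n, B + 1 ≤ n → K * (s^n - s^(B+1)) ≤ 0 := by
    intro n hn
    have := pow_le_pow_of_le_one h0 h1 hn
    exact mul_nonpos_of_nonneg_of_nonpos hK0 (by linarith)
  induction l2 generalizing z with
  | nil => simpa using hb2 z
  | cons c l2 ih =>
    have ho := old1 B l (c::l2) hl δ hδ 0 le_rfl (by simpa using hb) z
    obtain ⟨q, I, hq, hI, rfl⟩ := hl c (by simp)
    have ih' := ih (fun c hc => hl c (by simp [hc])) (le_trans (by gcongr; simp) hZ)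
    by_cases hz : B + 1 ≤ z
    · refine le_trans ?_ (g_nonneg _ _ _)
      have := hp z hz
      have : 0 ≤ ((z:ℝ) + (List.map Prod.snd ((Finset.range (q+1), I) :: l2)).sum) * e := by positivity
      linarith
    by_cases hzZ : z ≤ Z
    · refine le_trans ?_ ho
      have hzZ' : (z:ℝ) ≤ Z := by exact_mod_cast hzZ
      have e1 : ((z:ℝ) + (0 + (List.map Prod.snd ((Finset.range (q+1), I) :: l2)).sum)) * δ ≤ 1 - K := by
        refine le_trans ?_ hZ
        gcongr
        linarith
      have : 0 ≤ ((z:ℝ) + (List.map Prod.snd ((Finset.range (q+1), I) :: l2)).sum) * e := by positivity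
      have e2 : s^z ≤ 1 := pow_le_one₀ h0 h1
      have e3 : 0 ≤ s^(B+1) := by positivity
      nlinarith
    · simp only [List.map_cons, List.sum_cons, List.cons_append]
      have hs' := hasSum_lin (z+I) s h0 h1 K (-e) (-K*s^(B+1) - (l2.map Prod.snd).sum * e)
      refine le_trans ?_ (g_step true (l2 ++ l) q I z _ _ hs' ?_ ?_)
      · have e1 := hs z (by omega)
        have e2 : (2-s)⁻¹^(z+1) ≤ (2-s)⁻¹^(z+I) :=
          pow_le_pow_of_le_one (by rw [inv_nonneg]; linarith) (inv_two_sub_le s h1) (by omega)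
        have := mul_le_mul_of_nonneg_left (e1.trans e2) hK0
        push_cast; linarith
      · intro n _
        refine le_trans (le_of_eq ?_) (ih' n)
        ring
      · intro n hn
        have := hp n (by omega)
        have : 0 ≤ ((n:ℝ) + (l2.map Prod.snd).sum) * e := by positivity
        linarith

lemma fresh (B G : ℕ) (hBG : B + 1 ≤ G) (l : List (Finset ℕ × ℕ)) (δ : ℝ) (hδ : 1/(B+1) ≤ δ) (m : ℝ) (hm : 0 ≤ m)
    (hb : ∀ z : ℕ, 1 - (z+m) * δ ≤ g true l z) (s : ℝ) (h0 : 0 ≤ s) (h1 : s ≤ 1) (K : ℝ) (hK0 : 0 ≤ K)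
    (e : ℝ) (he : 0 ≤ e) (hb2 : ∀ z : ℕ, K * (s^z - s^(B+1)) - (z + m) * e ≤ g true l z)
    (Z N : ℕ) (hZ : (Z + (m + N)) * δ ≤ 1 - K) (hs : ∀ z : ℕ, Z < z → s^z ≤ (2-s)⁻¹^(z+1)) (z : ℕ) :
    K * (s^z - s^G - (s^(B+1) - s^G) * g false (List.replicate N (Finset.range (2*G-1+1), 1)) z) - (z + (m + N)) * e
      ≤ g true (List.replicate N (Finset.range (2*G-1+1), 1) ++ l) z := by
  have hη : 0 ≤ s^(B+1) - s^G := by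
    have := pow_le_pow_of_le_one h0 h1 hBG; linarith
  have hδ0 : 0 ≤ δ := le_trans (by positivity) hδ
  have hp : ∀ n, G ≤ n → K * (s^n - s^G) ≤ 0 := by
    intro n hn
    have := pow_le_pow_of_le_one h0 h1 hn
    exact mul_nonpos_of_nonneg_of_nonpos hK0 (by linarith)
  induction N generalizing z with
  | zero =>
    have := hb2 z
    simp [g]
    linarith
  | succ N ih =>
    have ho := old1 B l (List.replicate (N+1) (Finset.range (2*G-1+1), 1)) (by
      intro c hc
      rw [List.mem_replicate] at hc
      exact ⟨2*G-1, 1, by omega, le_rfl, hc.2⟩) δ hδ m hm hb z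
    simp only [List.map_replicate, List.sum_replicate, smul_eq_mul, mul_one] at ho
    have ih' := ih (le_trans (by gcongr; omega) hZ)
    have hQ := g_nonneg false (List.replicate (N+1) (Finset.range (2*G-1+1), 1)) z
    by_cases hz : G ≤ z
    · refine le_trans ?_ (g_nonneg _ _ _)
      have := hp z hz
      have : 0 ≤ ((z:ℝ) + (m + (N+1:ℕ))) * e := by positivity
      have := mul_nonneg hK0 (mul_nonneg hη hQ)
      linarith
    by_cases hzZ : z ≤ Z
    · refine le_trans ?_ ho
      have hzZ' : (z:ℝ) ≤ Z := by exact_mod_cast hzZ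
      have e1 : ((z:ℝ) + (m + (N+1:ℕ))) * δ ≤ 1 - K := by
        refine le_trans ?_ hZ
        gcongr
      have : 0 ≤ ((z:ℝ) + (m + (N+1:ℕ))) * e := by positivity
      have e2 : s^z ≤ 1 := pow_le_one₀ h0 h1
      have e3 : 0 ≤ s^G := by positivity
      have := mul_nonneg hK0 (mul_nonneg hη hQ)
      nlinarith
    · rw [List.replicate_succ, List.cons_append]
      set l' := List.replicate N (Finset.range (2*G-1+1), 1) with hl'
      set c := 2*G-1 with hc
      have hs' := hasSum_lin (z+1) s h0 h1 K (-e) (-K*s^G - (m + N) * e)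
      have hq : HasSum (fun n => if n < c+1-(z+1) then nbp (z+1) (z+1+n) * (-(K * (s^(B+1) - s^G)) * g false l' n) else 0)
          (∑ n ∈ Finset.range (c+1-(z+1)), if n < c+1-(z+1) then nbp (z+1) (z+1+n) * (-(K * (s^(B+1) - s^G)) * g false l' n) else 0) := by
        refine hasSum_sum_of_ne_finset_zero ?_
        intro n hn
        rw [if_neg (by simpa using hn)]
      have hq2 : (∑ n ∈ Finset.range (c+1-(z+1)), if n < c+1-(z+1) then nbp (z+1) (z+1+n) * (-(K * (s^(B+1) - s^G)) * g false l' n) else 0)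
          ≥ -(K * (s^(B+1) - s^G)) * g false ((Finset.range (c+1), 1)::l') z := by
        simp only [g]
        have e1 : ∑ n ∈ Finset.range (c+1-(z+1)), (if n < c+1-(z+1) then nbp (z+1) (z+1+n) * (-(K * (s^(B+1) - s^G)) * g false l' n) else 0)
          = -(K * (s^(B+1) - s^G)) * ∑ n ∈ Finset.range (c+1-(z+1)), nbp (z+1) (z+1+n) * g false l' (z+1+n-(z+1)) := by
          rw [Finset.mul_sum]
          refine Finset.sum_congr rfl (fun n hn => ?_)
          rw [if_pos (by simpa using hn), Nat.add_sub_cancel_left]; ring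
        rw [e1, ge_iff_le]
        refine mul_le_mul_of_nonpos_left ?_ (by have := mul_nonneg hK0 hη; linarith)
        have e2 := Finset.sum_image (s := Finset.range (c+1-(z+1))) (g := fun n => z+1+n)
          (f := fun d => nbp (z+1) d * g false l' (d-(z+1))) (by intro a _ b _ h; simpa using h)
        rw [← e2]
        refine Finset.sum_le_sum_of_subset_of_nonneg ?_ ?_
        · intro d hd
          simp only [Finset.mem_image, Finset.mem_range] at hd ⊢
          obtain ⟨n, hn, rfl⟩ := hd
          omega
        · intro d _ _
          exact mul_nonneg (nbp_nonneg _ _) (g_nonneg _ _ _)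
      have hs2 := hs'.add hq
      have hs3 := hasSum_cast hs2 (f' := fun n => nbp (z+1) (z+1+n) *
        (K * (s^n - s^G) - (n + (m + N)) * e + if n < c+1-(z+1) then -(K * (s^(B+1) - s^G)) * g false l' n else 0))
        (fun n => by
          by_cases h : n < c+1-(z+1)
          · simp only [h, if_true]; ring
          · simp only [h, if_false]; ring) rfl
      refine le_trans ?_ (g_step true (l' ++ l) c 1 z _ _ hs3 ?_ ?_)
      · have e1 := hs z (by omega)
        have := mul_le_mul_of_nonneg_left e1 hK0
        rw [Nat.cast_succ z, Nat.cast_succ N]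
        linarith
      · intro n hn
        rw [if_pos (by omega)]
        refine le_trans (le_of_eq ?_) (ih' n)
        ring
      · intro n hn
        rw [if_neg (by omega)]
        have := hp n (by omega)
        have : 0 ≤ ((n:ℝ) + (m + N)) * e := by positivity
        linarith
end Fav3

namespace Fav3
open MeasureTheory ProbabilityTheory

lemma central_low (n : ℕ) (hn : 1 ≤ n) : 16^n ≤ (Nat.centralBinom n)^2 * (4*n) := by
  induction n, hn using Nat.le_induction with
  | base => simp [Nat.centralBinom, Nat.choose]
  | succ n hn ih =>
    have h := Nat.succ_mul_centralBinom_succ n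
    have h2 : (n+1)^2 * 16^(n+1) ≤ (n+1)^2 * ((Nat.centralBinom (n+1))^2 * (4*(n+1))) := by
      calc (n+1)^2 * 16^(n+1) = 16 * (n+1)^2 * 16^n := by ring
        _ ≤ 16 * (n+1)^2 * ((Nat.centralBinom n)^2 * (4*n)) := Nat.mul_le_mul_left _ ih
        _ = 16 * (4 * (n * (n+1))) * (n+1) * (Nat.centralBinom n)^2 := by ring
        _ ≤ 16 * ((2*n+1)^2) * (n+1) * (Nat.centralBinom n)^2 := by gcongr; nlinarith
        _ = ((n+1) * Nat.centralBinom (n+1))^2 * (4*(n+1)) := by rw [h]; ring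
        _ = _ := by ring
    exact Nat.le_of_mul_le_mul_left h2 (by positivity)

lemma choose_off (m j : ℕ) (hm : 1 ≤ m) (hj : j ≤ m) :
    (Nat.centralBinom m : ℝ) * (1 - (j:ℝ)^2/m) ≤ (2*m).choose (m+j) := by
  have hm0 : (0:ℝ) < m := by exact_mod_cast hm
  induction j with
  | zero => simp [Nat.centralBinom]
  | succ j ih =>
    have ih' := ih (by omega)
    have h := Nat.choose_succ_right_eq (2*m) (m+j)
    have h' : ((2*m).choose (m+(j+1)) : ℝ) * (m+j+1) = ((2*m).choose (m+j) : ℝ) * (m-j) := by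
      rw [show 2*m-(m+j) = m-j by omega] at h
      have := congrArg (Nat.cast (R := ℝ)) h
      push_cast [Nat.cast_sub (show j ≤ m by omega)] at this
      rw [← add_assoc]; exact this
    have hjm : (j:ℝ) + 1 ≤ m := by exact_mod_cast hj
    have hj0 : (0:ℝ) ≤ j := by positivity
    have hc : (0:ℝ) ≤ (2*m).choose (m+(j+1)) := by positivity
    have hcb : (0:ℝ) ≤ Nat.centralBinom m := by positivity
    have hpos : (0:ℝ) < m + j + 1 := by positivity
    have key : (1 - ((j+1:ℕ):ℝ)^2/m) * (m+j+1) ≤ (1 - (j:ℝ)^2/m) * (m-j) := by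
      have : (1 - (j:ℝ)^2/m) * (m-j) - (1 - ((j+1:ℕ):ℝ)^2/m) * (m+j+1) =
          (j^3 + (j+1)^3)/m := by push_cast; field_simp; ring
      have h3 : (0:ℝ) ≤ (j^3 + (j+1)^3)/m := by positivity
      linarith
    have h4 : (Nat.centralBinom m : ℝ) * (1 - ((j+1:ℕ):ℝ)^2/m) * (m+j+1) ≤ (2*m).choose (m+(j+1)) * (m+j+1) := by
      rw [h']
      calc _ = (Nat.centralBinom m : ℝ) * ((1 - ((j+1:ℕ):ℝ)^2/m) * (m+j+1)) := by ring
        _ ≤ (Nat.centralBinom m : ℝ) * ((1 - (j:ℝ)^2/m) * (m-j)) := mul_le_mul_of_nonneg_left key hcb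
        _ = (Nat.centralBinom m : ℝ) * (1 - (j:ℝ)^2/m) * (m-j) := by ring
        _ ≤ _ := mul_le_mul_of_nonneg_right ih' (by linarith)
    exact le_of_mul_le_mul_right h4 hpos

lemma bin_even_low (m j : ℕ) (hm : 1 ≤ m) (hj : 2*j^2 ≤ m) : 1/(4*√(2*m:ℝ)) ≤ bin (2*m) (m+j) := by
  have hjm : j ≤ m := by nlinarith
  have h1 := choose_off m j hm hjm
  have hm0 : (0:ℝ) < m := by exact_mod_cast hm
  have h2 : (1/2:ℝ) ≤ 1 - (j:ℝ)^2/m := by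
    have : (j:ℝ)^2/m ≤ 1/2 := by
      rw [div_le_iff₀ hm0]
      have : (2*(j:ℝ)^2) ≤ m := by exact_mod_cast hj
      linarith
    linarith
  have h3 : (16:ℝ)^m ≤ (Nat.centralBinom m : ℝ)^2 * (4*m) := by exact_mod_cast central_low m hm
  have hcb : (0:ℝ) ≤ Nat.centralBinom m := by positivity
  have h4 : (4:ℝ)^m ≤ Nat.centralBinom m * (2*√m) := by
    refine le_of_sq_le_sq ?_ (by positivity)
    rw [mul_pow, mul_pow, Real.sq_sqrt hm0.le, ← pow_mul, mul_comm m 2, pow_mul]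
    norm_num; exact h3
  have h5 : √(m:ℝ) ≤ √(2*m:ℝ) := Real.sqrt_le_sqrt (by linarith)
  have h6 : 0 < √(2*m:ℝ) := Real.sqrt_pos.2 (by linarith)
  rw [bin, div_le_div_iff₀ (by positivity) (by positivity), pow_mul]
  norm_num
  have : (Nat.centralBinom m : ℝ) * (1/2) ≤ (2*m).choose (m+j) := le_trans (mul_le_mul_of_nonneg_left h2 hcb) h1
  calc (4:ℝ)^m ≤ Nat.centralBinom m * (2*√m) := h4
    _ ≤ Nat.centralBinom m * (2*√(2*m)) := by gcongr
    _ = (Nat.centralBinom m * (1/2)) * (4*√(2*m)) := by ring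
    _ ≤ (2*m).choose (m+j) * (4*√(2*m)) := by gcongr
    _ = _ := by simp

lemma bin_even_low' (m k : ℕ) (hm : 1 ≤ m) (hk : 2*((k:ℤ)-m)^2 ≤ m) : 1/(4*√(2*m:ℝ)) ≤ bin (2*m) k := by
  rcases le_total m k with h | h
  · obtain ⟨j, rfl⟩ := Nat.exists_eq_add_of_le h
    refine bin_even_low m j hm ?_
    push_cast at hk
    ring_nf at hk
    have : ((2*j^2 : ℕ) : ℤ) ≤ m := by push_cast; linarith
    exact_mod_cast this
  · obtain ⟨j, rfl⟩ := Nat.exists_eq_add_of_le h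
    have e : bin (2*(k+j)) k = bin (2*(k+j)) ((k+j)+j) := by
      unfold bin
      rw [← Nat.choose_symm (show k ≤ 2*(k+j) by omega)]
      congr 3; omega
    rw [e]
    refine bin_even_low (k+j) j hm ?_
    push_cast at hk
    have : ((2*j^2 : ℕ) : ℤ) ≤ (k+j:ℕ) := by push_cast; nlinarith
    exact_mod_cast this

lemma bin_odd (m k : ℕ) : bin (2*m+1) (k+1) = (bin (2*m) k + bin (2*m) (k+1))/2 := by
  unfold bin
  rw [Nat.choose_succ_succ, pow_succ]; push_cast; field_simp

/-- lower bound on binomial probabilities -/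
lemma bin_low (n k : ℕ) (hn : 2 ≤ n) (hk : (2*(k:ℤ)-n)^2 ≤ n) : 1/(8*√(n:ℝ)) ≤ bin n k := by
  rcases Nat.even_or_odd' n with ⟨m, rfl | rfl⟩
  · have h := bin_even_low' m k (by omega) (by push_cast at hk; nlinarith)
    refine le_trans ?_ h
    push_cast
    have : 0 < √(2*m:ℝ) := Real.sqrt_pos.2 (by have : (0:ℝ) < m := by exact_mod_cast (by omega : 0 < m)
                                               linarith)
    apply one_div_le_one_div_of_le <;> linarith
  · have hm : 1 ≤ m := by omega
    have hm0 : (0:ℝ) < m := by exact_mod_cast hm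
    have hk0 : 1 ≤ k := by
      by_contra h0
      have : k = 0 := by omega
      subst this
      push_cast at hk
      have : (1:ℤ) ≤ m := by exact_mod_cast hm
      nlinarith
    obtain ⟨k, rfl⟩ : ∃ i, k = i + 1 := ⟨k-1, by omega⟩
    rw [bin_odd]
    have hs : 0 < √(2*m:ℝ) := Real.sqrt_pos.2 (by linarith)
    have hs2 : √(2*m:ℝ) ≤ √((2*m+1:ℕ):ℝ) := Real.sqrt_le_sqrt (by push_cast; linarith)
    have hle : 1/(8*√((2*m+1:ℕ):ℝ)) ≤ (1/(4*√(2*m:ℝ)))/2 := by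
      rw [div_div]; apply one_div_le_one_div_of_le <;> linarith
    push_cast at hk
    have b1 := bin_nonneg (2*m) k
    have b2 := bin_nonneg (2*m) (k+1)
    rcases le_or_gt m k with h | h
    · have := bin_even_low' m k hm (by
        have : (m:ℤ) ≤ k := by exact_mod_cast h
        nlinarith)
      linarith
    · have := bin_even_low' m (k+1) hm (by
        push_cast
        have : (k:ℤ) + 1 ≤ m := by exact_mod_cast h
        nlinarith)
      linarith

lemma nbp_low (K d : ℕ) (hK : 1 ≤ K) (hd : 3 ≤ d) (hk : (2*(K:ℤ)-d-1)^2 ≤ d-1) : 1/(16*√(d:ℝ)) ≤ nbp K d := by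
  obtain ⟨k, rfl⟩ : ∃ i, K = i + 1 := ⟨K-1, by omega⟩
  obtain ⟨n, rfl⟩ : ∃ i, d = i + 1 := ⟨d-1, by omega⟩
  simp only [nbp]
  have := bin_low n k (by omega) (by push_cast at hk; ring_nf at hk ⊢; linarith)
  have hn0 : (0:ℝ) < n := by exact_mod_cast (by omega : 0 < n)
  have hs : 0 < √(n:ℝ) := Real.sqrt_pos.2 hn0
  have hs2 : √(n:ℝ) ≤ √((n+1:ℕ):ℝ) := Real.sqrt_le_sqrt (by push_cast; linarith)
  have hle : 1/(16*√((n+1:ℕ):ℝ)) ≤ (1/(8*√(n:ℝ)))/2 := by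
    rw [div_div]; apply one_div_le_one_div_of_le <;> linarith
  linarith

lemma chain_anti (b : Bool) (ω : Stk) (c I I' : ℕ) (hI : I ≤ I') (N : ℕ) (y : ℤ) (k k' : ℕ) (hk : k ≤ k')
    (h : Chain b ω false (fun _ => Finset.range (c+1)) (fun _ => I') N y k') :
    Chain b ω false (fun _ => Finset.range (c+1)) (fun _ => I) N y k := by
  induction N generalizing y k k' with
  | zero => simp [Chain]
  | succ N ih =>
    obtain ⟨d, hd, h1, h2, h3⟩ := h
    simp only at h1
    have hex : ∃ e, k + I ≤ cnt b ω y e := ⟨d, by omega⟩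
    classical
    obtain ⟨e, he, hmin⟩ : ∃ e, k + I ≤ cnt b ω y e ∧ ∀ e' < e, cnt b ω y e' < k + I :=
      ⟨Nat.find hex, Nat.find_spec hex, fun e' he' => not_le.1 (Nat.find_min hex he')⟩
    have hed : e ≤ d := by
      by_contra hlt
      have := hmin d (by omega)
      omega
    refine ⟨e, ?_, ?_, ?_, ih _ _ _ (cnt_mono (!b) ω y hed) h3⟩
    · simp only [Finset.mem_range] at hd ⊢; omega
    · cases e with
      | zero => simp at he ⊢; omega
      | succ e =>
        have := hmin e (by omega)
        rw [cnt_succ] at he ⊢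
        split_ifs at he ⊢ <;> simp only <;> omega
    · cases e with
      | zero => simp
      | succ e =>
        right
        have := hmin e (by omega)
        rw [cnt_succ] at he
        by_contra hne
        simp only [Nat.add_sub_cancel] at hne
        rw [if_neg hne] at he; omega

lemma cfg_const (b : Bool) (A : Finset ℕ) (I : ℕ) (N : ℕ) (y : ℤ) :
    cfg b (fun _ => A) (fun _ => I) N y = List.replicate N (A, I) := by
  induction N generalizing y with
  | zero => rfl
  | succ N ih => rw [cfg, ih, List.replicate_succ]

lemma g_anti (c I I' : ℕ) (hI : I ≤ I') (N k k' : ℕ) (hk : k ≤ k') :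
    g false (List.replicate N (Finset.range (c+1), I')) k' ≤ g false (List.replicate N (Finset.range (c+1), I)) k := by
  rw [← cfg_const true _ I' N 0, ← cfg_const true _ I N 0, ← pr_chain, ← pr_chain]
  exact measureReal_mono (fun ω h => chain_anti true ω c I I' hI N 0 k k' hk h)

lemma persist (c W : ℕ) : W * (∑ i ∈ Finset.range (c+1), bin c i * g false (List.replicate W (Finset.range (c+1), 1)) i)^2 ≤ 2 := by
  set a : ℤ := -W-5 with ha
  have h := sum_LR a (fun _ => c) W 1 le_rfl (Finset.Ico (0:ℤ) W) (by
    intro x hx x' hx'; rw [Finset.mem_Ico] at hx hx'; omega) (fun _ => c) (fun _ => c) (fun _ => le_rfl) (fun _ => le_rfl)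
  set π := ∑ i ∈ Finset.range (c+1), bin c i * g false (List.replicate W (Finset.range (c+1), 1)) i with hπ
  have hπ0 : 0 ≤ π := Finset.sum_nonneg (fun i _ => mul_nonneg (bin_nonneg _ _) (g_nonneg _ _ _))
  have key : ∀ x ∈ Finset.Ico (0:ℤ) W, π^2 ≤ pr (SC true false (capA fun _ => c) (imm true a) W x c) *
      pr (SC false false (capA fun _ => c) (imm false a) W (x+(1:ℕ)) c) := by
    intro x hx
    rw [Finset.mem_Ico] at hx
    rw [pr_SC, pr_SC]
    have e1 : cfg true (capA fun _ => c) (imm true a) W (x - mv true) = List.replicate W (Finset.range (c+1), 1) := by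
      rw [← cfg_const true _ 1 W (x - mv true)]
      refine cfg_congr _ _ _ _ _ _ _ (fun n hn => ⟨rfl, ?_⟩)
      simp only [imm, if_true]
      rw [lt01_ge]; simp only [mv_true]; omega
    have e2 : cfg false (capA fun _ => c) (imm false a) W (x + (1:ℕ) - mv false) = List.replicate W (Finset.range (c+1), 0) := by
      rw [← cfg_const false _ 0 W (x + (1:ℕ) - mv false)]
      refine cfg_congr _ _ _ _ _ _ _ (fun n hn => ⟨rfl, ?_⟩)
      simp only [imm, Bool.false_eq_true, if_false]
      rw [lt01_ge]
      have : mv false = -1 := rfl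
      rw [this]; omega
    rw [e1, e2, ← hπ, sq]
    refine mul_le_mul_of_nonneg_left ?_ hπ0
    exact Finset.sum_le_sum (fun i _ => mul_le_mul_of_nonneg_left (g_anti c 0 1 (by norm_num) W i i le_rfl) (bin_nonneg _ _))
  have h2 := (Finset.sum_le_sum key).trans h
  simp at h2
  linarith

lemma persist2 (G r W i0 : ℕ) (hr : 1 ≤ r) (h1 : 256 * r^2 ≤ 2*G) (h2 : 2*G ≤ 1024*r^2) (hi : G - 4*r ≤ i0) :
    W * (g false (List.replicate W (Finset.range (2*G-1+1), 1)) i0)^2 ≤ 2^15 := by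
  set Q := g false (List.replicate W (Finset.range (2*G-1+1), 1)) with hQ
  have hp := persist (2*G-1) W
  set π := ∑ i ∈ Finset.range (2*G-1+1), bin (2*G-1) i * g false (List.replicate W (Finset.range (2*G-1+1), 1)) i with hπ
  have hQ0 : 0 ≤ Q i0 := g_nonneg _ _ _
  have hrG : 128 * r ≤ G := by nlinarith
  have hr0 : (0:ℝ) < r := by exact_mod_cast hr
  have hsq : √((2*G-1:ℕ):ℝ) ≤ 32 * r := by
    rw [Real.sqrt_le_left (by positivity)]
    have : ((2*G-1:ℕ):ℝ) ≤ ((1024*r^2:ℕ):ℝ) := by exact_mod_cast (by omega : 2*G-1 ≤ 1024*r^2)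
    push_cast at this ⊢
    linarith
  have hpos : 0 < √((2*G-1:ℕ):ℝ) := Real.sqrt_pos.2 (by exact_mod_cast (by omega : 0 < 2*G-1))
  have key : Q i0 / 128 ≤ π := by
    calc Q i0 / 128 = ∑ i ∈ Finset.Ico (G-6*r) (G-4*r), (1/(256*r)) * Q i0 := by
          rw [Finset.sum_const, Nat.card_Ico, show G-4*r-(G-6*r) = 2*r by omega]
          simp only [nsmul_eq_mul]; push_cast; field_simp; ring
      _ ≤ ∑ i ∈ Finset.Ico (G-6*r) (G-4*r), bin (2*G-1) i * Q i := by
          refine Finset.sum_le_sum (fun i hi' => ?_)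
          rw [Finset.mem_Ico] at hi'
          refine mul_le_mul ?_ (g_anti _ 1 1 le_rfl W i i0 (by omega)) hQ0 (bin_nonneg _ _)
          refine le_trans ?_ (bin_low (2*G-1) i (by omega) ?_)
          · apply one_div_le_one_div_of_le <;> linarith
          · have e : ((2*G-1:ℕ):ℤ) = 2*G-1 := by omega
            rw [e]
            have a1 : (G:ℤ) - 6*r ≤ i := by omega
            have a2 : (i:ℤ) ≤ G - 4*r := by omega
            have a3 : (256 * (r:ℤ)^2) ≤ 2*G := by exact_mod_cast h1
            have a4 : (1:ℤ) ≤ r := by exact_mod_cast hr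
            have b1 : -(13*(r:ℤ)) ≤ 2*i - (2*G-1) := by linarith
            have b2 : 2*(i:ℤ) - (2*G-1) ≤ 13*r := by linarith
            nlinarith [sq_le_sq' b1 b2]
      _ ≤ π := by
          refine Finset.sum_le_sum_of_subset_of_nonneg ?_ (fun i _ _ => mul_nonneg (bin_nonneg _ _) (g_nonneg _ _ _))
          intro i hi'
          simp only [Finset.mem_Ico, Finset.mem_range] at hi' ⊢
          omega
  have : (Q i0 / 128)^2 ≤ π^2 := pow_le_pow_left₀ (by positivity) key 2
  have := mul_le_mul_of_nonneg_left this (Nat.cast_nonneg (α := ℝ) W)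
  have e : (W:ℝ) * (Q i0)^2 = 2^14 * (W * (Q i0/128)^2) := by ring
  rw [e]; linarith
end Fav3

namespace Fav3
open MeasureTheory ProbabilityTheory

lemma cfg_append (b : Bool) (A : ℤ → Finset ℕ) (I : ℤ → ℕ) (N N' : ℕ) (y : ℤ) :
    cfg b A I (N + N') y = cfg b A I N y ++ cfg b A I N' (y - N * mv b) := by
  induction N generalizing y with
  | zero => simp [cfg]
  | succ N ih =>
    rw [show N + 1 + N' = (N + N') + 1 by ring, cfg, cfg, ih, List.cons_append]
    congr 3
    push_cast; ring

lemma cfg_length (b : Bool) (A : ℤ → Finset ℕ) (I : ℤ → ℕ) (N : ℕ) (y : ℤ) : (cfg b A I N y).length = N := by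
  induction N generalizing y with
  | zero => rfl
  | succ N ih => rw [cfg, List.length_cons, ih]

lemma mem_cfg (b : Bool) (A : ℤ → Finset ℕ) (I : ℤ → ℕ) (N : ℕ) (y : ℤ) {c : Finset ℕ × ℕ} (hc : c ∈ cfg b A I N y) :
    ∃ n : ℕ, n < N ∧ c = (A (y - n * mv b), I (y - n * mv b)) := by
  induction N generalizing y with
  | zero => simp [cfg] at hc
  | succ N ih =>
    rw [cfg, List.mem_cons] at hc
    rcases hc with h | h
    · exact ⟨0, by omega, by simpa using h⟩
    · obtain ⟨n, hn, h⟩ := ih _ h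
      refine ⟨n+1, by omega, ?_⟩
      rw [h]
      have : y - mv b - n * mv b = y - ((n+1:ℕ):ℤ) * mv b := by push_cast; ring
      rw [this]

lemma TB_sup (st : St) (h : ℕ) (x : ℤ) (NL NR : ℕ) (hl : ∀ y, st.loc y < h) (hx : st.pos < x)
    (hNL : x - NL ≤ st.pos) (hNR : 3 ≤ NR) :
    SC true true (capA (capT st h)) (imm true st.pos) NL x (capT st h x) ∩
      SC false true (rightA st h x) (imm false st.pos) NR x (capT st h x) ⊆ {ω | bits st.pos ω ∈ TB st x h} := by
  rintro ω ⟨h1, h2⟩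
  obtain ⟨t, e1, e2, e3, e4, e5⟩ := sw_of_chains st.pos x ω (capT st h x) _ _ NL NR h1
    (by simpa [SC] using h2) hNL (by omega)
  refine ⟨t, ?_⟩
  have hloc := run_loc_eq st ω t
  rw [e1] at hloc
  have hl' := hl
  refine ⟨by rw [run_pos_eq]; exact e1, ?_, ?_, ?_, ?_⟩
  · have a := hloc x; have b := hl x
    rw [e2, eq01_self, capT, eq01_ne (by omega)] at a; omega
  · have a := hloc (x+1); have b := hl (x+1)
    have c := e4 (x+1) (by omega) (by omega)
    rw [rightA, if_pos (Or.inl rfl), Finset.mem_singleton] at c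
    rw [c, capT, eq01_ne (show x+1 ≠ st.pos by omega), eq01_ne (show x+1 ≠ x by omega)] at a; omega
  · have a := hloc (x+3); have b := hl (x+3)
    have c := e4 (x+3) (by omega) (by omega)
    rw [rightA, if_pos (Or.inr rfl), Finset.mem_singleton] at c
    rw [c, capT, eq01_ne (show x+3 ≠ st.pos by omega), eq01_ne (show x+3 ≠ x by omega)] at a; omega
  · intro y y1 y2 y3
    have a := hloc y; have b := hl y
    rw [eq01_ne y1] at a
    have hd : (sw st.pos ω t).2 y ≤ capT st h y := by
      by_cases hout : y < x - NL ∨ x + NR < y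
      · rw [e5 y hout]; exact Nat.zero_le _
      · push Not at hout
        rcases lt_or_gt_of_ne y1 with hlt | hgt
        · have c := e3 y hout.1 hlt
          rw [capA, Finset.mem_range] at c; omega
        · have c := e4 y hgt hout.2
          rw [rightA, if_neg (by tauto), Finset.mem_range] at c; omega
    rw [capT] at hd; omega

lemma pow_diff_ge (s : ℝ) (h0 : 0 ≤ s) (h1 : s ≤ 1) (i n : ℕ) : n * (1-s) * s^(i+n) ≤ s^i - s^(i+n) := by
  induction n with
  | zero => simp
  | succ n ih =>
    have e : s^(i+(n+1)) = s * s^(i+n) := by rw [← add_assoc, pow_succ]; ring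
    rw [e]
    have p : 0 ≤ s^(i+n) := by positivity
    have q : (0:ℝ) ≤ n * (1-s) := mul_nonneg (by positivity) (by linarith)
    push_cast
    nlinarith [mul_nonneg p (show 0 ≤ 1-s by linarith), mul_nonneg (mul_nonneg q p) (show 0 ≤ 1-s by linarith),
      mul_nonneg (mul_nonneg p (show 0 ≤ 1-s by linarith)) (show 0 ≤ 1-s by linarith)]

lemma pow_diff_le (s : ℝ) (h0 : 0 ≤ s) (h1 : s ≤ 1) (i n : ℕ) : s^i - s^(i+n) ≤ n * (1-s) := by
  induction n with
  | zero => simp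
  | succ n ih =>
    have e : s^(i+(n+1)) = s * s^(i+n) := by rw [← add_assoc, pow_succ]; ring
    rw [e]
    have p : s^(i+n) ≤ 1 := pow_le_one₀ h0 h1
    push_cast
    nlinarith

lemma s_pow_low (g : ℕ) (hg : 8 ≤ g) : (1/256:ℝ) ≤ (1 - 2/(g:ℝ))^g := by
  have hg0 : (8:ℝ) ≤ g := by exact_mod_cast hg
  have h2 : (2:ℝ)/g ≤ 1/4 := by rw [div_le_div_iff₀] <;> linarith
  have h3 : (0:ℝ) ≤ 2/g := by positivity
  set q := g/4+1 with hq
  have hqr : (q:ℝ) ≤ g/4 + 1 := by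
    have : 4 * q ≤ g + 4 := by omega
    have : (4 * q : ℝ) ≤ g + 4 := by exact_mod_cast this
    linarith
  have b := one_add_mul_le_pow (a := -(2/(g:ℝ))) (by linarith) q
  have c : (1/4:ℝ) ≤ (1 - 2/(g:ℝ))^q := by
    have b' : 1 - q*(2/(g:ℝ)) ≤ (1-2/(g:ℝ))^q := by rw [sub_eq_add_neg (1:ℝ) (2/(g:ℝ))]; linarith
    refine le_trans ?_ b'
    have : (q:ℝ) * (2/g) ≤ (g/4+1) * (2/g) := mul_le_mul_of_nonneg_right hqr h3
    have e : ((g:ℝ)/4+1) * (2/g) = 1/2 + 2/g := by field_simp; ring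
    linarith
  calc (1/256:ℝ) = (1/4)^4 := by norm_num
    _ ≤ ((1 - 2/(g:ℝ))^q)^4 := pow_le_pow_left₀ (by norm_num) c 4
    _ = (1 - 2/(g:ℝ))^(q*4) := by rw [pow_mul]
    _ ≤ _ := pow_le_pow_of_le_one (by linarith) (by linarith) (by omega)

lemma s_step (g z : ℕ) (hg : 8 ≤ g) (hz : g/2 < z) :
    (1 - 2/(g:ℝ))^z ≤ (2-(1 - 2/(g:ℝ)))⁻¹^(z+1) := by
  have hg0 : (8:ℝ) ≤ g := by exact_mod_cast hg
  set ε := 2/(g:ℝ) with hε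
  have h2 : ε ≤ 1/4 := by rw [hε, div_le_div_iff₀] <;> linarith
  have h3 : 0 ≤ ε := by positivity
  have hz' : 1 ≤ z * ε := by
    have : (g:ℝ) ≤ 2*z := by exact_mod_cast (by omega : g ≤ 2*z)
    rw [hε, mul_div_assoc', le_div_iff₀ (by linarith)]; linarith
  have e : 2 - (1-ε) = 1+ε := by ring
  rw [e, inv_pow, ← one_div, le_div_iff₀ (by positivity)]
  have b := one_add_mul_le_pow (a := ε^2) (by nlinarith) z
  have c : ((1-ε^2)^z) * (1+ε^2)^z ≤ 1 := by
    rw [← mul_pow]; refine pow_le_one₀ (mul_nonneg (by nlinarith) (by positivity)) (by nlinarith [sq_nonneg (ε^2)])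
  have d : 0 ≤ (1-ε^2)^z := pow_nonneg (by nlinarith) _
  calc (1-ε)^z * (1+ε)^(z+1) = (1-ε^2)^z * (1+ε) := by
        rw [pow_succ, ← mul_assoc, ← mul_pow]; congr 2; ring
    _ ≤ (1-ε^2)^z * (1+ε^2)^z := by
        refine mul_le_mul_of_nonneg_left ?_ d
        refine le_trans ?_ b
        nlinarith
    _ ≤ 1 := c

lemma t3_aux (Hn ρ G r N : ℕ) (Q : ℝ) (hper : N * Q^2 ≤ 2^15) (hN1 : ρ ≤ N)
    (hr2 : 2*G ≤ 1024*r^2) (hbig : 2^44 * Hn^2 ≤ ρ * G) : Hn * Q ≤ r/2^10 := by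
  refine le_of_sq_le_sq ?_ (by positivity)
  have a : (2:ℝ)^44 * Hn^2 ≤ ρ * G := by exact_mod_cast hbig
  have b : (ρ:ℝ) * Q^2 ≤ 2^15 := by
    refine le_trans ?_ hper
    have : (ρ:ℝ) ≤ N := by exact_mod_cast hN1
    gcongr
  have c : (2*G:ℝ) ≤ 1024*r^2 := by exact_mod_cast hr2
  have d : (2:ℝ)^44 * (Hn*Q)^2 ≤ 2^24 * r^2 := by
    calc (2:ℝ)^44 * (Hn*Q)^2 = (2^44 * Hn^2) * Q^2 := by ring
      _ ≤ (ρ * G) * Q^2 := by gcongr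
      _ = (ρ * Q^2) * G := by ring
      _ ≤ 2^15 * G := by gcongr
      _ ≤ 2^15 * (512 * r^2) := by gcongr; linarith
      _ = _ := by ring
  rw [div_pow]
  have e : ((2:ℝ)^10)^2 = 2^20 := by norm_num
  rw [e, le_div_iff₀ (by norm_num)]
  nlinarith

set_option maxHeartbeats 2000000 in
lemma left_low (Hn ρ G r N M : ℕ) (l l2 : List (Finset ℕ × ℕ)) (hHn : 1 ≤ Hn) (hHρ : Hn ≤ ρ) (hN1 : ρ ≤ N) (hN2 : N ≤ 2*ρ)
    (hρ : 100*ρ ≤ G) (hG : 2^20 ≤ G) (hM : G^3 ≤ M) (hr : 1 ≤ r) (hr1 : 256 * r^2 ≤ 2*G) (hr2 : 2*G ≤ 1024*r^2)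
    (hbig : 2^44 * Hn^2 ≤ ρ * G) (hl : ∀ c ∈ l, ∃ q, 2*(G-1-Hn)+1 ≤ q ∧ c = (Finset.range (q+1), 0)) (hlen : l.length = M)
    (hl2 : OldL (G-1-Hn) l2) (hlen2 : l2.length = 2*ρ+1) (i : ℕ) (hi1 : G - 4*r ≤ i) (hi2 : i < G - 3*r) :
    (r:ℝ)/(1024*G) ≤ g true (List.replicate N (Finset.range (2*G-1+1), 1) ++ (l2 ++ l)) i := by
  set B := G-1-Hn with hB
  have hBG : B + 1 + Hn = G := by omega
  have hG0 : (2:ℝ)^20 ≤ G := by exact_mod_cast hG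
  have hGp : (0:ℝ) < G := by linarith [show (0:ℝ) < 2^20 by norm_num]
  have hρ' : 100*(ρ:ℝ) ≤ G := by exact_mod_cast hρ
  have hHρ' : (Hn:ℝ) ≤ ρ := by exact_mod_cast hHρ
  have hr0 : (1:ℝ) ≤ r := by exact_mod_cast hr
  have hm : (l2.map Prod.snd).sum ≤ 2*ρ+1 := by
    rw [← hlen2, ← List.length_map (as := l2) (f := Prod.snd)]
    refine le_trans (List.sum_le_card_nsmul _ 1 ?_) (by simp)
    intro x hx
    rw [List.mem_map] at hx
    obtain ⟨c, hc, rfl⟩ := hx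
    obtain ⟨q, I, _, hI, rfl⟩ := hl2 c hc
    exact hI
  set m : ℕ := (l2.map Prod.snd).sum with hmdef
  have hm' : (m:ℝ) ≤ 2*ρ+1 := by exact_mod_cast hm
  have hN' : (N:ℝ) ≤ 2*ρ := by exact_mod_cast hN2
  have hρ1 : (1:ℝ) ≤ ρ := by exact_mod_cast (by omega : 1 ≤ ρ)
  have hB' : (B:ℝ) + 1 = G - Hn := by
    have : (B:ℝ) + 1 + Hn = G := by exact_mod_cast hBG
    linarith
  have hM' : (G:ℝ)^3 ≤ M := by exact_mod_cast hM
  set e : ℝ := 1/((M:ℝ)+1) with he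
  have he0 : 0 ≤ e := by positivity
  have he1 : e ≤ 1/(G:ℝ)^3 := by
    rw [he]; apply one_div_le_one_div_of_le <;> first | positivity | linarith
  set δ : ℝ := e + 1/(B+1) with hδ
  have hδ1 : 1/((B:ℝ)+1) ≤ δ := by rw [hδ]; linarith
  have hδ0 : 0 ≤ δ := le_trans (by positivity) hδ1
  have hδ2 : δ * G ≤ 1.1 := by
    have a : 1/((B:ℝ)+1) * G ≤ 1.05 := by
      rw [hB', one_div_mul_eq_div, div_le_iff₀ (by linarith)]; linarith
    have b : e * G ≤ 0.05 := by
      calc e * G ≤ 1/(G:ℝ)^3 * G := mul_le_mul_of_nonneg_right he1 hGp.le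
        _ = 1/(G:ℝ)^2 := by field_simp
        _ ≤ 0.05 := by
          rw [div_le_iff₀ (by positivity)]
          have : (G:ℝ) ≤ G^2 := by nlinarith
          nlinarith
    rw [hδ, add_mul]; linarith
  set s : ℝ := 1 - 2/(G:ℝ) with hs
  have hs2 : (2:ℝ)/G ≤ 1/4 := by rw [div_le_div_iff₀] <;> linarith
  have hs3 : (0:ℝ) ≤ 2/G := by positivity
  have hs0 : 0 ≤ s := by rw [hs]; linarith
  have hs1 : s ≤ 1 := by rw [hs]; linarith
  have hstep : ∀ z : ℕ, G/2 < z → s^z ≤ (2-s)⁻¹^(z+1) := fun z hz => s_step G z (by omega) hz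
  have hZ : (((G/2:ℕ):ℝ) + (m + N)) * δ ≤ 1 - 1/4 := by
    have a : ((G/2:ℕ):ℝ) ≤ G/2 := Nat.cast_div_le
    have b : ((G/2:ℕ):ℝ) + (m + N) ≤ 0.56 * G := by linarith
    have := mul_le_mul_of_nonneg_right b hδ0
    nlinarith
  have hb1 : ∀ z : ℕ, 1 - z * δ ≤ g true l z := by
    intro z
    have := free1' B l hl z
    rw [hlen] at this; exact this
  have hb2 : ∀ z : ℕ, 1/4 * (s^z - s^(B+1)) - z * e ≤ g true l z := by
    intro z
    have := free2' B l hl s hs0 hs1 (1/4) (by norm_num) (by norm_num) z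
    rw [hlen] at this; exact this
  have ho1 := old1 B l l2 hl2 δ hδ1 0 le_rfl (by simpa using hb1)
  have ho2 := old2 B l l2 hl2 δ hδ1 hb1 s hs0 hs1 (1/4) (by norm_num) e he0 hb2 (G/2)
    (le_trans (mul_le_mul_of_nonneg_right (by linarith [Nat.cast_nonneg (α := ℝ) N]) hδ0) hZ) hstep
  have hf := fresh B G (by omega) (l2 ++ l) δ hδ1 m (by positivity) (by simpa [hmdef] using ho1) s hs0 hs1 (1/4) (by norm_num) e he0
    ho2 (G/2) N hZ hstep i
  refine le_trans ?_ hf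
  set Q := g false (List.replicate N (Finset.range (2*G-1+1), 1)) i with hQ
  have hQ0 : 0 ≤ Q := g_nonneg _ _ _
  have hper : N * Q^2 ≤ 2^15 := persist2 G r N i hr hr1 hr2 hi1
  -- main term
  have hi' : (i:ℝ) ≤ G := by exact_mod_cast (by omega : i ≤ G)
  have t1 : 6*(r:ℝ)/(256*G) ≤ s^i - s^G := by
    have a := pow_diff_ge s hs0 hs1 i (G-i)
    rw [show i + (G-i) = G by omega] at a
    refine le_trans ?_ a
    have b := s_pow_low G (by omega)
    have c : (3*r:ℝ) ≤ ((G-i:ℕ):ℝ) := by exact_mod_cast (by omega : 3*r ≤ G-i)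
    have d : 1 - s = 2/G := by rw [hs]; ring
    rw [d]
    calc 6*(r:ℝ)/(256*G) = (3*r) * (2/G) * (1/256) := by field_simp; ring
      _ ≤ _ := by gcongr
  have t2 : s^(B+1) - s^G ≤ Hn * (2/G) := by
    have a := pow_diff_le s hs0 hs1 (B+1) Hn
    rw [hBG] at a
    have d : 1 - s = 2/G := by rw [hs]; ring
    rw [d] at a; exact a
  have t3 : Hn * Q ≤ r/2^10 :=  t3_aux Hn ρ G r N Q hper hN1 hr2 hbig
  have t4 : (s^(B+1) - s^G) * Q ≤ 2*(r:ℝ)/(1024*G) := by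
    calc (s^(B+1) - s^G) * Q ≤ (Hn * (2/G)) * Q := mul_le_mul_of_nonneg_right t2 hQ0
      _ = (Hn*Q) * (2/G) := by ring
      _ ≤ (r/2^10) * (2/G) := by gcongr
      _ = _ := by field_simp; norm_num
  have t5 : ((i:ℝ) + (m+N)) * e ≤ (r:ℝ)/(1024*G) := by
    calc ((i:ℝ) + (m+N)) * e ≤ (2*G) * (1/(G:ℝ)^3) := by gcongr; linarith
      _ = (2/G) * (1/G) := by field_simp
      _ ≤ (r/1024) * (1/G) := by
          refine mul_le_mul_of_nonneg_right ?_ (by positivity)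
          rw [div_le_div_iff₀ hGp (by norm_num)]
          nlinarith
      _ = _ := by field_simp
  have x1 : 6*(r:ℝ)/(256*G) = 24 * (r/(1024*G)) := by field_simp; norm_num
  have x2 : 2*(r:ℝ)/(1024*G) = 2 * (r/(1024*G)) := by ring
  have x3 : 0 ≤ (r:ℝ)/(1024*G) := by positivity
  nlinarith
end Fav3

namespace Fav3
open MeasureTheory ProbabilityTheory

lemma sum_ge_const {ι : Type*} (S T : Finset ι) (f : ι → ℝ) (c : ℝ) (hTS : T ⊆ S) (h0 : ∀ i ∈ S, 0 ≤ f i)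
    (h : ∀ i ∈ T, c ≤ f i) : T.card * c ≤ ∑ i ∈ S, f i := by
  calc T.card * c = T.card • c := by rw [nsmul_eq_mul]
    _ ≤ ∑ i ∈ T, f i := Finset.card_nsmul_le_sum _ _ _ h
    _ ≤ _ := Finset.sum_le_sum_of_subset_of_nonneg hTS (fun i hi _ => h0 i hi)

set_option maxHeartbeats 1000000 in
lemma right_low (G r M : ℕ) (l : List (Finset ℕ × ℕ)) (hG : 2^20 ≤ G) (hM : G^3 ≤ M) (hr : 1 ≤ r) (hr1 : 256 * r^2 ≤ 2*G)
    (hl : ∀ c ∈ l, ∃ q, 2*(G-1)+1 ≤ q ∧ c = (Finset.range (q+1), 0)) (hlen : l.length = M)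
    (k : ℕ) (hk1 : G + 3*r ≤ k) (hk2 : k < G + 4*r) :
    r * ((1/(16*√((2*G:ℕ):ℝ)))^3 * (r/(2*G))) ≤
      g true (({2*G}, 0) :: (Finset.range (2*G-1+1), 0) :: ({2*G}, 0) :: l) k := by
  simp only [g, Finset.sum_singleton, add_zero]
  have hrG : 128 * r ≤ G := by nlinarith
  have hGp : (0:ℝ) < G := by exact_mod_cast (by omega : 0 < G)
  have hG1 : (2^20:ℝ) ≤ G := by exact_mod_cast hG
  have hr0 : (1:ℝ) ≤ r := by exact_mod_cast hr
  set n1 := 2*G - k with hn1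
  set c := 1/(16*√((2*G:ℕ):ℝ)) with hc
  have hsq : 0 < √((2*G:ℕ):ℝ) := Real.sqrt_pos.2 (by push_cast; linarith)
  have hc0 : 0 ≤ c := by positivity
  have b1 : c ≤ nbp k (2*G) := nbp_low k (2*G) (by omega) (by omega) (by
    have a1 : (0:ℤ) ≤ 2*(k:ℤ) - (2*G:ℕ) - 1 := by push_cast; omega
    have a2 : 2*(k:ℤ) - (2*G:ℕ) - 1 ≤ 8*r := by push_cast; omega
    have : (256*r^2:ℤ) ≤ 2*G := by exact_mod_cast hr1
    have hr' : (1:ℤ) ≤ r := by exact_mod_cast hr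
    have hrr : (r:ℤ) ≤ r^2 := by nlinarith
    refine le_trans (sq_le_sq' (b := 8*(r:ℤ)) (by linarith) a2) ?_
    push_cast
    linarith)
  have tail : ∀ z : ℕ, z ≤ G - r → (r:ℝ)/(2*G) ≤ g true l z := by
    intro z hz
    have a := free1' (G-1) l hl z
    refine le_trans ?_ a
    rw [hlen]
    have e : ((G-1:ℕ):ℝ) + 1 = G := by
      have : G - 1 + 1 = G := by omega
      exact_mod_cast this
    rw [e]
    have hz' : (z:ℝ) ≤ G - r := by
      have : z + r ≤ G := by omega
      have : (z + r : ℝ) ≤ G := by exact_mod_cast this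
      linarith
    have hM' : (G:ℝ)^3 ≤ M := by exact_mod_cast hM
    have f1 : (z:ℝ) * (1/((M:ℝ)+1)) ≤ r/(2*G) := by
      calc (z:ℝ) * (1/((M:ℝ)+1)) ≤ G * (1/(G:ℝ)^3) := by
            refine mul_le_mul (by linarith) ?_ (by positivity) (by positivity)
            apply one_div_le_one_div_of_le <;> first | positivity | linarith
        _ = (1/G) * (1/G) := by field_simp
        _ ≤ (r/2) * (1/G) := by
            refine mul_le_mul_of_nonneg_right ?_ (by positivity)
            rw [div_le_div_iff₀ hGp (by norm_num)]
            nlinarith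
        _ = _ := by field_simp
    have f2 : (z:ℝ) * (1/G) ≤ 1 - r/G := by
      calc (z:ℝ) * (1/G) ≤ (G - r) * (1/G) := by gcongr
        _ = _ := by field_simp
    have f3 : (r:ℝ)/G = 2 * (r/(2*G)) := by field_simp
    rw [mul_add]; linarith
  have b2 : r * (c * (c * (r/(2*G)))) ≤ ∑ d ∈ Finset.range (2*G-1+1), nbp n1 d * (nbp (d - n1) (2*G) * g true l (2*G - (d - n1))) := by
    have hcard : (Finset.Ioc (n1+G+r) (n1+G+2*r)).card = r := by rw [Nat.card_Ioc]; omega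
    have := sum_ge_const (Finset.range (2*G-1+1)) (Finset.Ioc (n1+G+r) (n1+G+2*r))
      (fun d => nbp n1 d * (nbp (d - n1) (2*G) * g true l (2*G - (d - n1)))) (c * (c * (r/(2*G)))) ?_ ?_ ?_
    · rw [hcard] at this; exact this
    · intro s hs
      rw [Finset.mem_Ioc] at hs
      rw [Finset.mem_range]; omega
    · intro s _
      exact mul_nonneg (nbp_nonneg _ _) (mul_nonneg (nbp_nonneg _ _) (g_nonneg _ _ _))
    · intro s hs
      rw [Finset.mem_Ioc] at hs
      have hr' : (1:ℤ) ≤ r := by exact_mod_cast hr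
      have hr1' : (256*r^2:ℤ) ≤ 2*G := by exact_mod_cast hr1
      have hrr : (r:ℤ) ≤ r^2 := by nlinarith
      have d1 : c ≤ nbp n1 s := by
        refine le_trans ?_ (nbp_low n1 s (by omega) (by omega) ?_)
        · rw [hc]
          have : (s:ℝ) ≤ ((2*G:ℕ):ℝ) := by exact_mod_cast (by omega : s ≤ 2*G)
          have hs0 : 0 < √(s:ℝ) := Real.sqrt_pos.2 (by exact_mod_cast (by omega : 0 < s))
          have := Real.sqrt_le_sqrt this
          gcongr
        · have a1 : 2*(n1:ℤ) - s - 1 ≤ 0 := by omega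
          have a2 : -(6*r:ℤ) ≤ 2*(n1:ℤ) - s - 1 := by omega
          have a3 : 2*(G:ℤ) - 3*r ≤ s := by omega
          refine le_trans (sq_le_sq' (b := 6*(r:ℤ)) a2 (by linarith)) ?_
          linarith
      have d2 : c ≤ nbp (s-n1) (2*G) := nbp_low _ _ (by omega) (by omega) (by
        have a1 : (0:ℤ) ≤ 2*((s-n1:ℕ):ℤ) - (2*G:ℕ) - 1 := by omega
        have a2 : 2*((s-n1:ℕ):ℤ) - (2*G:ℕ) - 1 ≤ 4*r := by omega
        have a3 : ((2*G:ℕ):ℤ) = 2*G := by push_cast; rfl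
        refine le_trans (sq_le_sq' (b := 4*(r:ℤ)) (by linarith) a2) ?_
        linarith)
      have d3 := tail (2*G - (s-n1)) (by omega)
      have d4 : (0:ℝ) ≤ r/(2*G) := by positivity
      exact mul_le_mul d1 (mul_le_mul d2 d3 d4 (hc0.trans d2)) (by positivity) (hc0.trans d1)
  calc r * (c^3 * (r/(2*G))) = c * (r * (c * (c * (r/(2*G))))) := by ring
    _ ≤ _ := mul_le_mul b1 b2 (by positivity) (hc0.trans b1)

lemma imm_true_ge {a z : ℤ} (h : a ≤ z) : imm true a z = 1 := by
  simp only [imm, if_true]; rw [lt01_ge h]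
lemma imm_true_lt {a z : ℤ} (h : z < a) : imm true a z = 0 := by
  simp only [imm, if_true]; rw [lt01_lt h]
lemma imm_true_le (a z : ℤ) : imm true a z ≤ 1 := by
  simp only [imm, if_true]; omega
lemma imm_false_gt {a z : ℤ} (h : a < z) : imm false a z = 0 := by
  simp only [imm, Bool.false_eq_true, if_false]; rw [lt01_ge (by omega)]
lemma imm_false_le (a z : ℤ) : imm false a z ≤ 1 := by
  simp only [imm, Bool.false_eq_true, if_false]; exact lt01_le_one _ _

structure Env (st : St) (Hn ρ : ℕ) : Prop where
  le : ∀ y, st.loc y ≤ Hn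
  out : ∀ y : ℤ, (y < -ρ ∨ ρ < y) → st.loc y = 0
  p1 : -(ρ:ℤ) ≤ st.pos
  p2 : st.pos ≤ ρ

set_option maxHeartbeats 1000000 in
lemma lower (st : St) (Hn ρ G r N : ℕ) (he : Env st Hn ρ) (hHn : 1 ≤ Hn) (hHρ : Hn ≤ ρ) (hN1 : ρ ≤ N) (hN2 : N ≤ 2*ρ)
    (hρ : 100*ρ ≤ G) (hG : 2^20 ≤ G) (hr : 1 ≤ r) (hr1 : 256 * r^2 ≤ 2*G) (hr2 : 2*G ≤ 1024*r^2)
    (hbig : 2^44 * Hn^2 ≤ ρ * G) : 1/(2^46 * (G:ℝ)^2) ≤ (fair ℕ).real (TB st ((N:ℤ)+ρ+1) (2*G)) := by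
  obtain ⟨hloc, hout, hp1, hp2⟩ := he
  set x : ℤ := (N:ℤ)+ρ+1 with hx
  have hcx : capT st (2*G) x = 2*G-1 := by
    rw [capT, hout x (by omega), eq01_ne (by omega)]; rfl
  have hcout : ∀ y : ℤ, (y < -ρ ∨ ρ < y) → capT st (2*G) y = 2*G-1 := by
    intro y hy
    rw [capT, hout y hy, eq01_ne (by omega)]; rfl
  have hG3 : (0:ℤ) ≤ (G:ℤ)^3 := by positivity
  have hmt : mv true = 1 := rfl
  have hmf : mv false = -1 := rfl
  rw [bits_real st.pos (TB_measurable st x (2*G))]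
  refine le_trans ?_ (measureReal_mono (TB_sup st (2*G) x (N+((2*ρ+1)+G^3)) (3+G^3)
    (fun y => by have := hloc y; omega) (by omega) (by push_cast; have := hG3; omega) (by omega)))
  rw [← pr, pr_two, hcx]
  -- left list
  have eL : cfg true (capA (capT st (2*G))) (imm true st.pos) (N+((2*ρ+1)+G^3)) (x-1) =
      List.replicate N (Finset.range (2*G-1+1), 1) ++
       (cfg true (capA (capT st (2*G))) (imm true st.pos) (2*ρ+1) ρ ++
        cfg true (capA (capT st (2*G))) (imm true st.pos) (G^3) (-ρ-1)) := by
    rw [cfg_append, cfg_append]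
    congr 1
    · rw [← cfg_const true _ 1 N (x-1)]
      refine cfg_congr _ _ _ _ _ _ _ (fun n hn => ⟨?_, ?_⟩)
      · unfold capA; rw [hcout _ (by rw [hmt]; omega)]
      · exact imm_true_ge (by rw [hmt]; omega)
    · congr 2
      · rw [hmt, hx]; ring
      · rw [hmt, hx]; push_cast; ring
  have eR : cfg false (rightA st (2*G) x) (imm false st.pos) (3+G^3) (x+1) =
      ({2*G}, 0) :: (Finset.range (2*G-1+1), 0) :: ({2*G}, 0) ::
        cfg false (rightA st (2*G) x) (imm false st.pos) (G^3) (x+4) := by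
    have e1 : x + 1 - mv false = x + 2 := by rw [hmf]; ring
    have e2 : x + 2 - mv false = x + 3 := by rw [hmf]; ring
    have e3 : x + 3 - mv false = x + 4 := by rw [hmf]; ring
    rw [show 3 + G^3 = G^3+1+1+1 by ring, cfg, cfg, cfg, e1, e2, e3]
    have f1 : rightA st (2*G) x (x+1) = {2*G} := by
      rw [rightA, if_pos (Or.inl rfl), hcout _ (by omega)]; congr 1; omega
    have f2 : rightA st (2*G) x (x+2) = Finset.range (2*G-1+1) := by
      rw [rightA, if_neg (by omega), hcout _ (by omega)]
    have f3 : rightA st (2*G) x (x+3) = {2*G} := by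
      rw [rightA, if_pos (Or.inr rfl), hcout _ (by omega)]; congr 1; omega
    rw [f1, f2, f3, imm_false_gt (by omega), imm_false_gt (by omega), imm_false_gt (by omega)]
  rw [eL, eR]
  have hGp : (0:ℝ) < G := by exact_mod_cast (by omega : 0 < G)
  have hsq : 0 < √((2*G:ℕ):ℝ) := Real.sqrt_pos.2 (by push_cast; linarith)
  have hcard : (Finset.Ico (G-4*r) (G-3*r)).card = r := by
    have : 128 * r ≤ G := by nlinarith
    rw [Nat.card_Ico]; omega
  have key := sum_ge_const (Finset.range (2*G-1+1)) (Finset.Ico (G-4*r) (G-3*r))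
    (fun i => bin (2*G-1) i * g true (List.replicate N (Finset.range (2*G-1+1), 1) ++
       (cfg true (capA (capT st (2*G))) (imm true st.pos) (2*ρ+1) ρ ++
        cfg true (capA (capT st (2*G))) (imm true st.pos) (G^3) (-ρ-1))) i *
        g true (({2*G}, 0) :: (Finset.range (2*G-1+1), 0) :: ({2*G}, 0) ::
        cfg false (rightA st (2*G) x) (imm false st.pos) (G^3) (x+4)) (2*G-1-i))
    (1/(8*√((2*G:ℕ):ℝ)) * ((r:ℝ)/(1024*G)) * (r * ((1/(16*√((2*G:ℕ):ℝ)))^3 * (r/(2*G))))) ?_ ?_ ?_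
  · refine le_trans ?_ key
    rw [hcard]
    have h4 : √((2*G:ℕ):ℝ)^4 = (2*G)^2 := by
      rw [show (4:ℕ) = 2*2 by norm_num, pow_mul, Real.sq_sqrt (by positivity)]; push_cast; rfl
    have e : (r:ℝ) * (1/(8*√((2*G:ℕ):ℝ)) * ((r:ℝ)/(1024*G)) * (r * ((1/(16*√((2*G:ℕ):ℝ)))^3 * (r/(2*G))))) =
        r^4 / (2^15 * 2^11 * G^2 * √((2*G:ℕ):ℝ)^4) := by
      field_simp; norm_num
    rw [e, h4]
    have h5 : (2*G:ℝ) ≤ 1024*r^2 := by exact_mod_cast hr2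
    have h6 : (2*G:ℝ)^2 ≤ (1024*r^2)^2 := pow_le_pow_left₀ (by positivity) h5 2
    rw [div_le_div_iff₀ (by positivity) (by positivity)]
    have h7 : 0 ≤ (G:ℝ)^2 := by positivity
    nlinarith [mul_le_mul_of_nonneg_left h6 h7]
  · intro i hi
    rw [Finset.mem_Ico] at hi; rw [Finset.mem_range]; omega
  · intro i _
    exact mul_nonneg (mul_nonneg (bin_nonneg _ _) (g_nonneg _ _ _)) (g_nonneg _ _ _)
  · intro i hi
    rw [Finset.mem_Ico] at hi
    have hrG : 128 * r ≤ G := by nlinarith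
    refine mul_le_mul (mul_le_mul ?_ ?_ (by positivity) (bin_nonneg _ _)) ?_ (by positivity)
      (mul_nonneg (bin_nonneg _ _) (g_nonneg _ _ _))
    · refine le_trans ?_ (bin_low (2*G-1) i (by omega) ?_)
      · have : ((2*G-1:ℕ):ℝ) ≤ ((2*G:ℕ):ℝ) := by exact_mod_cast (by omega : 2*G-1 ≤ 2*G)
        have hs0 : 0 < √((2*G-1:ℕ):ℝ) := Real.sqrt_pos.2 (by exact_mod_cast (by omega : 0 < 2*G-1))
        have := Real.sqrt_le_sqrt this
        gcongr
      · have a1 : 2*(i:ℤ) - (2*G-1:ℕ) ≤ 0 := by omega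
        have a2 : -(8*r:ℤ) ≤ 2*(i:ℤ) - (2*G-1:ℕ) := by omega
        have a3 : ((2*G-1:ℕ):ℤ) = 2*G-1 := by omega
        have hr' : (1:ℤ) ≤ r := by exact_mod_cast hr
        have hr1' : (256*r^2:ℤ) ≤ 2*G := by exact_mod_cast hr1
        have hrr : (r:ℤ) ≤ r^2 := by nlinarith
        refine le_trans (sq_le_sq' (b := 8*(r:ℤ)) a2 (by linarith)) ?_
        linarith
    · refine left_low Hn ρ G r N (G^3) _ _ hHn hHρ hN1 hN2 hρ hG le_rfl hr hr1 hr2 hbig ?_ (cfg_length _ _ _ _ _) ?_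
        (cfg_length _ _ _ _ _) i hi.1 hi.2
      · intro c hc
        obtain ⟨n, hn, rfl⟩ := mem_cfg _ _ _ _ _ hc
        refine ⟨2*G-1, by omega, ?_⟩
        rw [imm_true_lt (by rw [hmt]; omega), capA, hcout _ (by rw [hmt]; omega)]
      · intro c hc
        obtain ⟨n, hn, rfl⟩ := mem_cfg _ _ _ _ _ hc
        refine ⟨_, _, ?_, imm_true_le _ _, rfl⟩
        have := hloc (ρ - n * mv true)
        rw [capT]; omega
    · refine right_low G r (G^3) _ hG le_rfl hr hr1 ?_ (cfg_length _ _ _ _ _) _ (by omega) (by omega)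
      intro c hc
      obtain ⟨n, hn, rfl⟩ := mem_cfg _ _ _ _ _ hc
      refine ⟨2*G-1, by omega, ?_⟩
      rw [imm_false_gt (by rw [hmf]; omega), rightA, if_neg (by rw [hmf]; omega), hcout _ (by rw [hmf]; omega)]

end Fav3

namespace Fav3
open MeasureTheory ProbabilityTheory

def fst (st : St) (P : St → Prop) (t : ℕ) : Set (ℕ → Bool) := {s | P (run st s t) ∧ ∀ k < t, ¬ P (run st s k)}

lemma fst_depOn (st : St) (P : St → Prop) (t : ℕ) : DepOn (Set.Iio t) (fst st P t) := by
  intro s s' h hs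
  have e : ∀ k ≤ t, run st s k = run st s' k := fun k hk =>
    run_congr st (fun i hi => h i (Set.mem_Iio.2 (by omega)))
  refine ⟨by rw [← e t le_rfl]; exact hs.1, fun k hk => ?_⟩
  rw [← e k hk.le]; exact hs.2 k hk

lemma fst_disj (st : St) (P : St → Prop) : Pairwise (Function.onFun Disjoint (fst st P)) := by
  intro t t' hne
  rw [Function.onFun, Set.disjoint_left]
  intro s h h'
  rcases lt_or_gt_of_ne hne with hl | hl
  · exact h'.2 t hl h.1
  · exact h.2 t' hl h'.1

lemma fst_iUnion (st : St) (P : St → Prop) : ⋃ t, fst st P t = {s | ∃ k, P (run st s k)} := by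
  classical
  ext s
  simp only [Set.mem_iUnion, Set.mem_ofPred_eq]
  constructor
  · rintro ⟨t, h⟩; exact ⟨t, h.1⟩
  · intro h
    exact ⟨Nat.find h, Nat.find_spec h, fun k hk => Nat.find_min h hk⟩

lemma fst_meas (st : St) (P : St → Prop) (t : ℕ) : MeasurableSet (fst st P t) :=
  (fst_depOn st P t).measurable (Set.finite_Iio t)

lemma hasSum_disj {Ω : Type*} [MeasurableSpace Ω] (ν : Measure Ω) [IsFiniteMeasure ν] (U : ℕ → Set Ω)
    (hU : ∀ t, MeasurableSet (U t)) (hd : Pairwise (Function.onFun Disjoint U)) (E : Set Ω) (hE : MeasurableSet E) :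
    HasSum (fun t => ν.real (U t ∩ E)) (ν.real ((⋃ t, U t) ∩ E)) := by
  have h := measure_iUnion (μ := ν) (f := fun t => U t ∩ E)
    (fun i j hij => (hd hij).mono Set.inter_subset_left Set.inter_subset_left) (fun t => (hU t).inter hE)
  rw [← Set.iUnion_inter] at h
  have hne : ∑' t, ν (U t ∩ E) ≠ ⊤ := by rw [← h]; exact measure_ne_top _ _
  have := ENNReal.hasSum_toReal hne
  rw [← ENNReal.tsum_toReal_eq (fun t => measure_ne_top _ _), ← h] at this
  exact this

lemma ex_r (G : ℕ) (hG : 2^20 ≤ G) : ∃ r, 1 ≤ r ∧ 256 * r^2 ≤ 2*G ∧ 2*G ≤ 1024*r^2 := by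
  have h1 := Nat.sqrt_le' (G/128)
  have h2 := Nat.lt_succ_sqrt' (G/128)
  set r := Nat.sqrt (G/128)
  have h3 : 1 ≤ r := by
    by_contra hc
    have : r = 0 := by omega
    rw [this] at h2
    norm_num at h2
    omega
  refine ⟨r, h3, by omega, ?_⟩
  have h4 : (r+1)^2 ≤ 4 * r^2 := by nlinarith
  have h5 : G/128 < (r+1)^2 := h2
  omega

lemma harm_shift (Gm G0 : ℕ) : ∑ G ∈ (Finset.Ico Gm (2*Gm)).filter (fun G => G0 < G ∧ Gm ≤ G0), (8:ℝ)/((2*G - 2*G0:ℕ):ℝ) ≤ 4 * (1 + Real.log Gm) := by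
  have h1 : ∑ G ∈ (Finset.Ico Gm (2*Gm)).filter (fun G => G0 < G ∧ Gm ≤ G0), (8:ℝ)/((2*G - 2*G0:ℕ):ℝ) =
      ∑ j ∈ ((Finset.Ico Gm (2*Gm)).filter (fun G => G0 < G ∧ Gm ≤ G0)).image (fun G => G - G0), 4 * (j:ℝ)⁻¹ := by
    rw [Finset.sum_image]
    · refine Finset.sum_congr rfl (fun G hG => ?_)
      rw [Finset.mem_filter] at hG
      have : 2*G - 2*G0 = 2 * (G - G0) := by omega
      rw [this]
      have : (0:ℝ) < ((G - G0:ℕ):ℝ) := by exact_mod_cast (by omega : 0 < G - G0)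
      push_cast
      field_simp; norm_num
    · intro a ha b hb hab
      simp only [Finset.coe_filter, Set.mem_ofPred_eq] at ha hb hab
      omega
  rw [h1, ← Finset.mul_sum]
  refine mul_le_mul_of_nonneg_left ?_ (by norm_num)
  refine le_trans (Finset.sum_le_sum_of_subset_of_nonneg (t := Finset.Icc 1 Gm) ?_ ?_) ?_
  · intro j hj
    simp only [Finset.mem_image, Finset.mem_filter, Finset.mem_Ico] at hj
    obtain ⟨G, hG, rfl⟩ := hj
    rw [Finset.mem_Icc]; omega
  · intro j _ _; positivity
  · have := harmonic_le_one_add_log Gm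
    rw [harmonic_eq_sum_Icc] at this
    push_cast at this
    exact this

def Pr (ρ Gm : ℕ) (u : St) : Prop := ∃ N ∈ Finset.Ico ρ (2*ρ), ∃ G ∈ Finset.Ico Gm (2*Gm), isT u ((N:ℤ)+ρ+1) (2*G)

lemma cond_bound (st : St) (ρ Gm t : ℕ) (hGm : 1 ≤ Gm) (s : ℕ → Bool) (hs : s ∈ fst st (Pr ρ Gm) t) :
    ∑ j ∈ Finset.Ico Gm (2*Gm) ×ˢ Finset.Ico ρ (2*ρ),
      (fair ℕ).real {s' | glue t s s' ∈ TB st ((j.2:ℤ)+ρ+1) (2*j.1)} ≤ 5 + 4 * Real.log Gm := by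
  obtain ⟨⟨N0, hN0, G0, hG0, hT⟩, hmin⟩ := hs
  rw [Finset.mem_Ico] at hN0 hG0
  set u := run st s t with hu
  have sub : ∀ G ∈ Finset.Ico Gm (2*Gm), ∀ N ∈ Finset.Ico ρ (2*ρ), ∀ s', glue t s s' ∈ TB st ((N:ℤ)+ρ+1) (2*G) →
      s' ∈ TB u ((N:ℤ)+ρ+1) (2*G) ∧ G0 ≤ G ∧ (G0 = G → N = N0) := by
    intro G hG N hN s' ⟨k, hk⟩
    by_cases hkt : k < t
    · exfalso
      refine hmin k hkt ⟨N, hN, G, hG, ?_⟩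
      rw [run_congr st (s' := glue t s s') (fun i hi => by rw [glue, if_pos (by omega)])]
      exact hk
    · obtain ⟨m, rfl⟩ : ∃ m, k = t + m := ⟨k - t, by omega⟩
      rw [run_glue] at hk
      have := isT_later hT hk
      exact ⟨⟨m, hk⟩, by omega, fun h => by have := this.2 (by omega); omega⟩
  rw [Finset.sum_product]
  have hG : ∀ G ∈ Finset.Ico Gm (2*Gm), ∑ N ∈ Finset.Ico ρ (2*ρ), (fair ℕ).real {s' | glue t s s' ∈ TB st ((N:ℤ)+ρ+1) (2*G)} ≤
      (if G = G0 then (1:ℝ) else 0) + (if G0 < G ∧ Gm ≤ G0 then (8:ℝ)/((2*G - 2*G0:ℕ):ℝ) else 0) := by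
    intro G hG
    rcases lt_trichotomy G G0 with hlt | heq | hgt
    · rw [if_neg (by omega), if_neg (by omega)]
      refine le_of_eq ?_
      rw [add_zero]
      refine Finset.sum_eq_zero (fun N hN => ?_)
      have : {s' | glue t s s' ∈ TB st ((N:ℤ)+ρ+1) (2*G)} = ∅ := by
        ext s'; simp only [Set.mem_ofPred_eq, Set.mem_empty_iff_false, iff_false]
        intro h; have := (sub G hG N hN s' h).2.1; omega
      rw [this, measureReal_empty]
    · rw [if_pos heq, if_neg (by omega), add_zero]
      refine le_trans (le_of_eq (Finset.sum_eq_single N0 ?_ ?_)) measureReal_le_one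
      · intro N hN hne
        have : {s' | glue t s s' ∈ TB st ((N:ℤ)+ρ+1) (2*G)} = ∅ := by
          ext s'; simp only [Set.mem_ofPred_eq, Set.mem_empty_iff_false, iff_false]
          intro h; exact hne ((sub G hG N hN s' h).2.2 heq.symm)
        rw [this, measureReal_empty]
      · intro h; exact absurd (Finset.mem_Ico.2 hN0) h
    · rw [if_neg (by omega), if_pos (by omega), zero_add]
      have hup := upper u (2*G0) (2*G - 2*G0) (by omega) hT.le ((Finset.Ico ρ (2*ρ)).image (fun N : ℕ => (N:ℤ)+ρ+1))
      rw [Finset.sum_image (by intro a _ b _ hab; simp only at hab; omega), show 2*G0 + (2*G-2*G0) = 2*G by omega] at hup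
      refine le_trans (Finset.sum_le_sum (fun N hN => ?_)) hup
      exact measureReal_mono (fun s' h => (sub G hG N hN s' h).1)
  refine (Finset.sum_le_sum hG).trans ?_
  rw [Finset.sum_add_distrib, Finset.sum_ite_eq' (Finset.Ico Gm (2*Gm)) G0, if_pos (Finset.mem_Ico.2 hG0), ← Finset.sum_filter]
  have := harm_shift Gm G0
  linarith

lemma PA (st : St) (Hn ρ Gm : ℕ) (he : Env st Hn ρ) (hHn : 1 ≤ Hn) (hHρ : Hn ≤ ρ)
    (hρ : 100*ρ ≤ Gm) (hG : 2^20 ≤ Gm) (hbig : 2^44 * Hn^2 ≤ ρ * Gm) :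
    (ρ:ℝ)/(2^48 * Gm) ≤ (5 + 4 * Real.log Gm) * (fair ℕ).real {s | ∃ k, Pr ρ Gm (run st s k)} := by
  set F := Finset.Ico Gm (2*Gm) ×ˢ Finset.Ico ρ (2*ρ) with hF
  have hGm0 : (0:ℝ) < Gm := by exact_mod_cast (by omega : 0 < Gm)
  have lo : (ρ:ℝ)/(2^48 * Gm) ≤ ∑ j ∈ F, (fair ℕ).real (TB st ((j.2:ℤ)+ρ+1) (2*j.1)) := by
    have := Finset.card_nsmul_le_sum F (fun j => (fair ℕ).real (TB st ((j.2:ℤ)+ρ+1) (2*j.1))) (1/(2^48 * (Gm:ℝ)^2)) (by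
      rintro ⟨G, N⟩ hj
      rw [hF, Finset.mem_product, Finset.mem_Ico, Finset.mem_Ico] at hj
      obtain ⟨r, r1, r2, r3⟩ := ex_r G (by omega)
      simp only at hj
      have := lower st Hn ρ G r N he hHn hHρ hj.2.1 hj.2.2.le (by omega) (by omega) r1 r2 r3
        (hbig.trans (Nat.mul_le_mul_left _ hj.1.1))
      refine le_trans ?_ this
      have h2 : (G:ℝ) ≤ 2*Gm := by exact_mod_cast hj.1.2.le
      have h3 : (0:ℝ) < G := by exact_mod_cast (by omega : 0 < G)
      have h4 : (G:ℝ)^2 ≤ (2*Gm)^2 := pow_le_pow_left₀ h3.le h2 2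
      apply one_div_le_one_div_of_le (by positivity)
      nlinarith)
    refine le_trans (le_of_eq ?_) this
    rw [hF, Finset.card_product, Nat.card_Ico, Nat.card_Ico, nsmul_eq_mul,
      show 2*Gm - Gm = Gm by omega, show 2*ρ-ρ = ρ by omega]
    push_cast
    field_simp
  refine lo.trans ?_
  have hs : ∀ j ∈ F, HasSum (fun t => (fair ℕ).real (fst st (Pr ρ Gm) t ∩ TB st ((j.2:ℤ)+ρ+1) (2*j.1)))
      ((fair ℕ).real (TB st ((j.2:ℤ)+ρ+1) (2*j.1))) := by
    rintro ⟨G, N⟩ hj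
    have := hasSum_disj (fair ℕ) (fst st (Pr ρ Gm)) (fst_meas _ _) (fst_disj _ _) _ (TB_measurable st ((N:ℤ)+ρ+1) (2*G))
    rw [fst_iUnion, Set.inter_eq_right.2] at this
    · exact this
    · rintro s ⟨k, hk⟩
      rw [hF, Finset.mem_product] at hj
      exact ⟨k, N, hj.2, G, hj.1, hk⟩
  have hs1 := hasSum_sum hs
  have hs2 := hasSum_disj (fair ℕ) (fst st (Pr ρ Gm)) (fst_meas _ _) (fst_disj _ _) _ MeasurableSet.univ
  simp only [Set.inter_univ] at hs2
  rw [fst_iUnion] at hs2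
  refine hasSum_le (fun t => ?_) hs1 (hs2.mul_left (5 + 4 * Real.log Gm))
  exact restart_le F (fst_depOn st (Pr ρ Gm) t) (E := fun j => TB st ((j.2:ℤ)+ρ+1) (2*j.1)) (fun j _ => TB_measurable _ _ _) _
    (fun s hs => cond_bound st ρ Gm t (by omega) s hs)

end Fav3

namespace Fav3
open MeasureTheory ProbabilityTheory

def st0 : St := ⟨fun _ => 0, 0⟩

def Rch (H : ℕ) (u : St) : Prop := ∃ y, H ≤ u.loc y

def Gs (H ρ : ℕ) (t : ℕ) : Set (ℕ → Bool) := fst st0 (Rch H) t ∩ {s | Env (run st0 s t) H ρ}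

lemma Gs_depOn (H ρ t : ℕ) : DepOn (Set.Iio t) (Gs H ρ t) :=
  (fst_depOn _ _ _).inter (depOn_run st0 t (fun u => Env u H ρ))

lemma step_loc_le (u : St) (b : Bool) (y : ℤ) : (u.step b).loc y ≤ u.loc y + 1 := by
  unfold St.step
  by_cases h : y = u.pos + mv b
  · subst h; simp
  · simp [h]

lemma step_pos_loc (u : St) (b : Bool) : 1 ≤ (u.step b).loc (u.step b).pos := by
  unfold St.step; simp

lemma Gs_of (H ρ T : ℕ) (hH : 1 ≤ H) (s : ℕ → Bool) (h1 : H ≤ (run st0 s T).loc 0)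
    (h2 : ∀ y : ℤ, (y < -ρ ∨ ρ < y) → (run st0 s T).loc y = 0) : s ∈ ⋃ t, Gs H ρ t := by
  classical
  have hex : ∃ k, Rch H (run st0 s k) := ⟨T, 0, h1⟩
  set t := Nat.find hex with ht
  have a1 : Rch H (run st0 s t) := Nat.find_spec hex
  have a2 : ∀ k < t, ¬ Rch H (run st0 s k) := fun k hk => Nat.find_min hex hk
  have a3 : t ≤ T := Nat.find_min' hex ⟨0, h1⟩
  have a4 : ∀ y : ℤ, (y < -ρ ∨ ρ < y) → (run st0 s t).loc y = 0 := by
    intro y hy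
    have := loc_mono st0 s y a3
    simp only [h2 y hy] at this
    omega
  have a5 : 1 ≤ t := by
    by_contra hc
    have : t = 0 := by omega
    rw [this] at a1
    obtain ⟨y, hy⟩ := a1
    simp [run, st0] at hy
    omega
  obtain ⟨t', ht'⟩ : ∃ t', t = t' + 1 := ⟨t-1, by omega⟩
  rw [Set.mem_iUnion]
  refine ⟨t, ⟨a1, a2⟩, ?_⟩
  have hpos : ¬ ((run st0 s t).pos < -ρ ∨ ρ < (run st0 s t).pos) := by
    intro hc
    have b := a4 _ hc
    have c := step_pos_loc (run st0 s t') (s t')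
    rw [ht', run] at b
    omega
  refine ⟨fun y => ?_, a4, by omega, by omega⟩
  have b := step_loc_le (run st0 s t') (s t') y
  rw [ht', run]
  by_contra hc
  exact a2 t' (by omega) ⟨y, by omega⟩

lemma Gs_meas (H ρ : ℕ) : MeasurableSet (⋃ t, Gs H ρ t) :=
  MeasurableSet.iUnion (fun t => (Gs_depOn H ρ t).measurable (Set.finite_Iio t))

lemma PG (H lam : ℕ) (hH : 1 ≤ H) (hl : 2 ≤ lam) : 1 - 4/(lam:ℝ) ≤ (fair ℕ).real (⋃ t, Gs H (lam*H) t) := by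
  set ρ := lam*H with hρ
  rw [bits_real st0.pos (Gs_meas H ρ)]
  set A : ℤ → Finset ℕ := fun _ => Finset.range (2*ρ+1+1) with hA
  have hmt : mv true = 1 := rfl
  have hmf : mv false = -1 := rfl
  have sub : SC true true A (imm true 0) ρ 0 H ∩ SC false true A (imm false 0) ρ 0 H ⊆
      {ω | bits st0.pos ω ∈ ⋃ t, Gs H ρ t} := by
    rintro ω ⟨h1, h2⟩
    obtain ⟨T, e1, e2, e3, e4, e5⟩ := sw_of_chains 0 0 ω H _ _ ρ ρ h1 (by simpa [SC] using h2) (by omega) (by omega)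
    have hloc := run_loc_eq st0 ω T
    have hp : st0.pos = 0 := rfl
    rw [hp, e1] at hloc
    rw [Set.mem_ofPred_eq]
    refine Gs_of H ρ T hH _ ?_ ?_
    · have a := hloc 0
      rw [e2] at a
      have : st0.loc 0 = 0 := rfl
      rw [hp]; omega
    · intro y hy
      have a := hloc y
      rw [e5 y (by omega)] at a
      have : st0.loc y = 0 := rfl
      rw [hp]; omega
  refine le_trans ?_ (measureReal_mono sub)
  rw [← pr, pr_two]
  have hl0 : (2:ℝ) ≤ lam := by exact_mod_cast hl
  have hH0 : (1:ℝ) ≤ H := by exact_mod_cast hH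
  have hρ' : (ρ:ℝ) = lam * H := by rw [hρ]; push_cast; rfl
  have low : ∀ l : List (Finset ℕ × ℕ), (∀ c ∈ l, ∃ q, 2*ρ+1 ≤ q ∧ c = (Finset.range (q+1), 0)) → l.length = ρ →
      ∀ i ≤ H, 1 - 2/(lam:ℝ) ≤ g true l i := by
    intro l h1 h2 i hi
    refine le_trans ?_ (free1' ρ l h1 i)
    rw [h2]
    have hi' : (i:ℝ) ≤ H := by exact_mod_cast hi
    have : (i:ℝ) * (1/((ρ:ℝ)+1) + 1/((ρ:ℝ)+1)) ≤ 2/lam := by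
      rw [hρ']
      have e : (i:ℝ) * (1/((lam:ℝ)*H+1) + 1/((lam:ℝ)*H+1)) = 2*i/((lam:ℝ)*H+1) := by ring
      rw [e, div_le_div_iff₀ (by positivity) (by positivity)]
      nlinarith [mul_le_mul_of_nonneg_right hi' (show (0:ℝ) ≤ lam by linarith)]
    linarith
  have hx : 0 ≤ 1 - 2/(lam:ℝ) := by
    rw [sub_nonneg, div_le_one (by linarith)]; exact hl0
  have key : ∀ i ∈ Finset.range (H+1), bin H i * (1 - 4/(lam:ℝ)) ≤ bin H i * g true (cfg true A (imm true 0) ρ (0-1)) i *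
        g true (cfg false A (imm false 0) ρ (0+1)) (H-i) := by
    intro i hi
    rw [Finset.mem_range] at hi
    rw [mul_assoc]
    refine mul_le_mul_of_nonneg_left ?_ (bin_nonneg _ _)
    have l1 := low (cfg true A (imm true 0) ρ (0-1)) (by
      intro c hc
      obtain ⟨n, hn, rfl⟩ := mem_cfg _ _ _ _ _ hc
      exact ⟨2*ρ+1, le_rfl, by rw [imm_true_lt (by rw [hmt]; omega)]⟩) (cfg_length _ _ _ _ _) i (by omega)
    have l2 := low (cfg false A (imm false 0) ρ (0+1)) (by
      intro c hc
      obtain ⟨n, hn, rfl⟩ := mem_cfg _ _ _ _ _ hc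
      exact ⟨2*ρ+1, le_rfl, by rw [imm_false_gt (by rw [hmf]; omega)]⟩) (cfg_length _ _ _ _ _) (H-i) (by omega)
    refine le_trans ?_ (mul_le_mul l1 l2 hx (g_nonneg _ _ _))
    have : 4/(lam:ℝ) = 2 * (2/lam) := by ring
    rw [this]
    nlinarith [sq_nonneg (2/(lam:ℝ))]
  refine le_trans (le_of_eq ?_) (Finset.sum_le_sum key)
  rw [← Finset.sum_mul, sum_bin, one_mul]

end Fav3

namespace Fav3
open MeasureTheory ProbabilityTheory

def Nt (a b : ℕ) (u : St) : Prop := ∀ x h, a ≤ h → h < b → ¬ isT u x h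

def Dn (a b : ℕ) : Set (ℕ → Bool) := {s | ∀ k, Nt a b (run st0 s k)}

lemma Dn_meas (a b : ℕ) : MeasurableSet (Dn a b) := by
  have : Dn a b = ⋂ k, {s | Nt a b (run st0 s k)} := by ext; simp [Dn]
  rw [this]
  exact MeasurableSet.iInter (fun k => (depOn_run st0 k (Nt a b)).measurable (Set.finite_Iio k))

lemma Dn_anti (a b b' : ℕ) (h : b ≤ b') : Dn a b' ⊆ Dn a b :=
  fun _ hs k x l h1 h2 => hs k x l h1 (by omega)

lemma DG_depOn (a H ρ t : ℕ) : DepOn (Set.Iio t) (Dn a H ∩ Gs H ρ t) := by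
  rintro s s' h ⟨h1, h2⟩
  have h3 := Gs_depOn H ρ t s s' h h2
  refine ⟨?_, h3⟩
  intro k x l l1 l2 hT
  by_cases hk : k < t
  · refine h1 k x l l1 l2 ?_
    rw [run_congr st0 (s' := s') (fun i hi => h i (Set.mem_Iio.2 (by omega)))]
    exact hT
  · obtain ⟨y, hy⟩ := h3.1.1
    have a1 := loc_mono st0 s' y (show t ≤ k by omega)
    simp only at a1
    have a2 := hT.le y
    omega

lemma hasSum_G (H ρ : ℕ) (E : Set (ℕ → Bool)) (hE : MeasurableSet E) :
    HasSum (fun t => (fair ℕ).real (Gs H ρ t ∩ E)) ((fair ℕ).real ((⋃ t, Gs H ρ t) ∩ E)) :=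
  hasSum_disj _ _ (fun t => (Gs_depOn H ρ t).measurable (Set.finite_Iio t))
    (fun _ _ hij => ((fst_disj st0 (Rch H)) hij).mono Set.inter_subset_left Set.inter_subset_left) E hE

lemma D_step (a H lam : ℕ) (ha : 1 ≤ a) (haH : a ≤ H) (hl : 2 ≤ lam) (c : ℝ)
    (hc : c * (5 + 4 * Real.log ((2^44*lam*H:ℕ):ℝ)) ≤ 1/2^92) (hc0 : 0 ≤ c) :
    (fair ℕ).real (Dn a (4*(2^44*lam*H))) ≤ (fair ℕ).real (Dn a H) - c * ((fair ℕ).real (Dn a H) - 4/lam) := by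
  set Gm := 2^44*lam*H with hGm
  set ρ := lam*H with hρ
  have hH : 1 ≤ H := by omega
  have hρ1 : H ≤ ρ := by rw [hρ]; nlinarith
  have hG : Gm = 2^44 * ρ := by rw [hGm, hρ]; ring
  have hlog : 0 ≤ Real.log (Gm:ℝ) := Real.log_natCast_nonneg _
  have hsub : Dn a (4*Gm) ⊆ Dn a H := Dn_anti a _ _ (by omega)
  have key : ∀ t, c * (fair ℕ).real (Gs H ρ t ∩ Dn a H) ≤ (fair ℕ).real (Gs H ρ t ∩ (Dn a H ∩ (Dn a (4*Gm))ᶜ)) := by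
    intro t
    rw [← Set.inter_assoc, Set.inter_comm (Gs H ρ t) (Dn a H)]
    refine restart_ge (DG_depOn a H ρ t) (Dn_meas _ _).compl c ?_
    intro s hs
    have he : Env (run st0 s t) H ρ := hs.2.2
    have hPA := PA (run st0 s t) H ρ Gm he hH hρ1 (by omega) (by omega) (by
      rw [hG]
      calc 2^44 * H^2 ≤ 2^44 * ρ^2 := by gcongr
        _ = ρ * (2^44 * ρ) := by ring)
    have hPA2 : (1:ℝ)/2^92 = (ρ:ℝ)/(2^48 * Gm) := by
      have : (0:ℝ) < ρ := by exact_mod_cast (by omega : 0 < ρ)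
      rw [hG]; push_cast
      field_simp; norm_num
    rw [← hPA2] at hPA
    have hcP : c ≤ (fair ℕ).real {s' | ∃ k, Pr ρ Gm (run (run st0 s t) s' k)} := by
      have := hc.trans hPA
      rw [mul_comm] at this
      exact le_of_mul_le_mul_left this (by linarith)
    refine hcP.trans (measureReal_mono ?_)
    rintro s' ⟨k, N, hN, G, hG', hT⟩ hD
    rw [Finset.mem_Ico] at hG'
    have := hD (t+k)
    rw [run_glue] at this
    exact this _ _ (by omega) (by omega) hT
  have s1 := (hasSum_G H ρ _ (Dn_meas a H)).mul_left c
  have s2 := hasSum_G H ρ _ ((Dn_meas a H).inter (Dn_meas a (4*Gm)).compl)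
  have s3 := hasSum_le key s1 s2
  have e1 : (fair ℕ).real (Dn a H ∩ (Dn a (4*Gm))ᶜ) = (fair ℕ).real (Dn a H) - (fair ℕ).real (Dn a (4*Gm)) := by
    rw [← Set.sdiff_eq, measureReal_sdiff hsub (Dn_meas _ _)]
  have e2 : (fair ℕ).real ((⋃ t, Gs H ρ t) ∩ (Dn a H ∩ (Dn a (4*Gm))ᶜ)) ≤ _ := measureReal_mono Set.inter_subset_right
  rw [e1] at e2
  have e3 : (fair ℕ).real (Dn a H) - 4/lam ≤ (fair ℕ).real ((⋃ t, Gs H ρ t) ∩ Dn a H) := by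
    have p := PG H lam hH hl
    have q : (fair ℕ).real (⋃ t, Gs H ρ t)ᶜ = 1 - (fair ℕ).real (⋃ t, Gs H ρ t) := probReal_compl_eq_one_sub (Gs_meas H ρ)
    have r : (fair ℕ).real (Dn a H) ≤ (fair ℕ).real ((⋃ t, Gs H ρ t) ∩ Dn a H) + (fair ℕ).real (⋃ t, Gs H ρ t)ᶜ := by
      refine le_trans (measureReal_mono ?_) (measureReal_union_le _ _)
      intro s hs
      by_cases h : s ∈ ⋃ t, Gs H ρ t
      · exact Or.inl ⟨h, hs⟩
      · exact Or.inr h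
    linarith
  have e4 := mul_le_mul_of_nonneg_left e3 hc0
  linarith

lemma analytic (d : ℕ → ℝ) (ε κ : ℝ) (hκ : 0 < κ) (h0 : ∀ n, 0 ≤ d n)
    (h : ∀ n, d (n+1) ≤ d n - κ/(n+1) * (d n - ε)) (D : ℝ) (hD : ∀ n, D ≤ d n) : D ≤ ε := by
  by_contra hc
  push Not at hc
  have a : ∀ n, d n ≤ d 0 - κ * (D - ε) * ∑ i ∈ Finset.range n, (1:ℝ)/(i+1) := by
    intro n
    induction n with
    | zero => simp
    | succ n ih =>
      rw [Finset.sum_range_succ]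
      have b : κ/(n+1) * (D - ε) ≤ κ/(n+1) * (d n - ε) := by
        have := hD n
        gcongr
      have e : κ * (D - ε) * (∑ i ∈ Finset.range n, (1:ℝ)/(i+1) + 1/((n:ℝ)+1)) =
        κ * (D - ε) * ∑ i ∈ Finset.range n, (1:ℝ)/(i+1) + κ/(n+1) * (D - ε) := by ring
      rw [e]
      have := h n
      linarith
  have hp : 0 < κ * (D - ε) := mul_pos hκ (by linarith)
  have ht := Real.tendsto_sum_range_one_div_nat_succ_atTop
  rw [Filter.tendsto_atTop] at ht
  obtain ⟨n, hn⟩ := (ht ((d 0 + 1)/(κ * (D - ε)))).exists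
  rw [div_le_iff₀ hp] at hn
  have := a n
  have := h0 n
  linarith

def Dinf (a : ℕ) : Set (ℕ → Bool) := {s | ∀ k x h, a ≤ h → ¬ isT (run st0 s k) x h}

lemma Dinf_le (a lam : ℕ) (ha : 1 ≤ a) (hl : 2 ≤ lam) : (fair ℕ).real (Dinf a) ≤ 4/lam := by
  set K := 4*(2^44*lam) with hK
  set C : ℝ := 5 + 4 * Real.log ((2^44*lam*a:ℕ):ℝ) + 4 * Real.log (K:ℝ) with hC
  have l1 : 0 ≤ Real.log ((2^44*lam*a:ℕ):ℝ) := Real.log_natCast_nonneg _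
  have l2 : 0 ≤ Real.log (K:ℝ) := Real.log_natCast_nonneg _
  have hC0 : 0 < C := by linarith
  refine analytic (fun n => (fair ℕ).real (Dn a (a*K^n))) _ (1/2^92/C) (by positivity) (fun n => measureReal_nonneg) ?_ _ ?_
  · intro n
    have hKn : 1 ≤ K^n := Nat.one_le_pow _ _ (by omega)
    have := D_step a (a*K^n) lam ha (by nlinarith) hl (1/2^92/C/(n+1)) ?_ (by positivity)
    · rw [show 4*(2^44*lam*(a*K^n)) = a*K^(n+1) by rw [pow_succ, hK]; ring] at this
      exact this
    · have e : ((2^44*lam*(a*K^n):ℕ):ℝ) = ((2^44*lam*a:ℕ):ℝ) * (K:ℝ)^n := by push_cast; ring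
      have p1 : ((2^44*lam*a:ℕ):ℝ) ≠ 0 := by exact_mod_cast (by positivity)
      have p2 : ((K:ℝ)^n) ≠ 0 := by
        have : (K:ℝ) ≠ 0 := by exact_mod_cast (by omega : K ≠ 0)
        positivity
      rw [e, Real.log_mul p1 p2, Real.log_pow]
      set X := Real.log ((2^44*lam*a:ℕ):ℝ)
      set Y := Real.log (K:ℝ)
      have b : 5 + 4 * (X + n * Y) ≤ C * (n+1) := by
        rw [hC]
        have hn : (0:ℝ) ≤ n := by positivity
        nlinarith [mul_nonneg hn l1]
      calc 1/2^92/C/((n:ℝ)+1) * (5 + 4 * (X + n * Y)) ≤ 1/2^92/C/((n:ℝ)+1) * (C * (n+1)) := by gcongr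
        _ = 1/2^92 := by field_simp
  · intro n
    exact measureReal_mono (fun s hs k x h h1 _ => hs k x h h1)

lemma Dinf_zero (a : ℕ) (ha : 1 ≤ a) : (fair ℕ) (Dinf a) = 0 := by
  have h : (fair ℕ).real (Dinf a) ≤ 0 := by
    have ht : Filter.Tendsto (fun n : ℕ => (4:ℝ)/n) Filter.atTop (nhds 0) := tendsto_const_div_atTop_nhds_zero_nat 4
    refine ge_of_tendsto ht ?_
    filter_upwards [Filter.eventually_ge_atTop 2] with n hn
    exact Dinf_le a n ha hn
  have h2 : (fair ℕ).real (Dinf a) = 0 := le_antisymm h measureReal_nonneg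
  exact (measureReal_eq_zero_iff).1 h2

lemma main_fair : ∀ᵐ s ∂(fair ℕ), ∀ a : ℕ, ∃ k x h, a ≤ h ∧ isT (run st0 s k) x h := by
  rw [ae_all_iff]
  intro a
  have := Dinf_zero (a+1) (by omega)
  rw [ae_iff]
  refine measure_mono_null ?_ this
  intro s hs k x h hh hT
  exact hs ⟨k, x, h, by omega, hT⟩

end Fav3

open MeasureTheory ProbabilityTheory

namespace Fav3

lemma transfer {Ω : Type*} [MeasurableSpace Ω] (μ : Measure Ω) [IsProbabilityMeasure μ]
    (ξ : ℕ → Ω → ℤ) (hξmeas : ∀ i, Measurable (ξ i)) (hξindep : iIndepFun ξ μ)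
    (hξ1 : ∀ i, μ {ω | ξ i ω = 1} = 1 / 2) :
    Measurable (fun ω (i : ℕ) => decide (ξ i ω = 1)) ∧ μ.map (fun ω (i : ℕ) => decide (ξ i ω = 1)) = fair ℕ := by
  have hd : ∀ i, Measurable (fun ω => decide (ξ i ω = 1)) := fun i =>
    (measurable_of_countable (fun x : ℤ => decide (x = 1))).comp (hξmeas i)
  have hm : Measurable (fun ω (i : ℕ) => decide (ξ i ω = 1)) := measurable_pi_lambda _ hd
  refine ⟨hm, ?_⟩
  have : IsProbabilityMeasure (μ.map (fun ω (i : ℕ) => decide (ξ i ω = 1))) :=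
    Measure.isProbabilityMeasure_map hm.aemeasurable
  refine eq_fair _ (fun n w => ?_)
  have hms : MeasurableSet {s : ℕ → Bool | ∀ i < n, s i = w i} := by
    refine DepOn.measurable (S := Set.Iio n) (Set.finite_Iio n) ?_
    intro s s' h hs i hi
    rw [← h i hi]; exact hs i hi
  rw [Measure.map_apply hm hms]
  have h1 := hξindep.measure_inter_preimage_eq_mul (Finset.range n) (sets := fun i => {x : ℤ | decide (x = 1) = w i})
    (fun i _ => (Set.to_countable _).measurableSet)
  have e : (fun ω (i : ℕ) => decide (ξ i ω = 1)) ⁻¹' {s : ℕ → Bool | ∀ i < n, s i = w i} =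
      ⋂ i ∈ Finset.range n, ξ i ⁻¹' {x : ℤ | decide (x = 1) = w i} := by
    ext ω; simp
  rw [e, h1]
  have h2 : ∀ i ∈ Finset.range n, μ (ξ i ⁻¹' {x : ℤ | decide (x = 1) = w i}) = 1/2 := by
    intro i _
    cases hw : w i with
    | true =>
      have : ξ i ⁻¹' {x : ℤ | decide (x = 1) = true} = {ω | ξ i ω = 1} := by ext ω; simp
      rw [this, hξ1]
    | false =>
      have : ξ i ⁻¹' {x : ℤ | decide (x = 1) = false} = {ω | ξ i ω = 1}ᶜ := by ext ω; simp
      have hms1 : MeasurableSet {ω | ξ i ω = 1} := hξmeas i (measurableSet_singleton (1:ℤ))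
      rw [this, prob_compl_eq_one_sub hms1, hξ1]
      norm_num
  rw [Finset.prod_congr rfl h2]; simp

lemma det (x : ℕ → ℤ) (hx : ∀ i, x i = 1 ∨ x i = -1) (t : ℕ) :
    (run st0 (fun i => decide (x i = 1)) t).pos = ∑ i ∈ Finset.range t, x i ∧
    ∀ y, (run st0 (fun i => decide (x i = 1)) t).loc y =
      ((Finset.Icc 1 t).filter fun k => ∑ i ∈ Finset.range k, x i = y).card := by
  induction t with
  | zero => exact ⟨rfl, fun y => rfl⟩
  | succ t ih =>
    have hmv : mv (decide (x t = 1)) = x t := by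
      rcases hx t with h | h <;> rw [h] <;> rfl
    have hp : (run st0 (fun i => decide (x i = 1)) (t+1)).pos = ∑ i ∈ Finset.range (t+1), x i := by
      rw [run, St.step, Finset.sum_range_succ]
      simp only [hmv, ih.1]
    refine ⟨hp, fun y => ?_⟩
    have hI : Finset.Icc 1 (t+1) = insert (t+1) (Finset.Icc 1 t) := by
      ext k; simp only [Finset.mem_insert, Finset.mem_Icc]; omega
    rw [hI, Finset.filter_insert]
    rw [run, St.step]
    simp only [hmv, ih.1, ← Finset.sum_range_succ]
    by_cases hy : ∑ i ∈ Finset.range (t+1), x i = y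
    · rw [if_pos hy, Finset.card_insert_of_notMem (by simp), ← hy, Function.update_self, ih.2]
    · rw [if_neg hy, Function.update_of_ne (Ne.symm hy), ih.2]

end Fav3

open MeasureTheory ProbabilityTheory

/-- With probability 1, `f(3) = ∞`: almost surely there are infinitely many
times `t ≥ 1` at which the currently occupied site is a favorite site and there are exactly
three favorite sites. -/
theorem f_three_eq_top_almost_surely
    {Ω : Type*} [MeasurableSpace Ω] (μ : Measure Ω) [IsProbabilityMeasure μ]
    -- i.i.d. steps, each uniform on {−1, 1}
    (ξ : ℕ → Ω → ℤ) (hξmeas : ∀ i, Measurable (ξ i))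
    (hξindep : iIndepFun ξ μ)
    (hξ1 : ∀ i, μ {ω | ξ i ω = 1} = 1 / 2)
    (hξ2 : ∀ i, μ {ω | ξ i ω = -1} = 1 / 2)
    -- the simple random walk
    (S : ℕ → Ω → ℤ) (hS : ∀ t ω, S t ω = ∑ i ∈ Finset.range t, ξ i ω)
    -- local times
    (L : ℕ → ℤ → Ω → ℕ)
    (hL : ∀ t x ω, L t x ω = ((Finset.Icc 1 t).filter fun k => S k ω = x).card)
    -- favorite (most visited) sites
    (Fav : ℕ → Ω → Set ℤ)
    (hFav : ∀ t ω, Fav t ω = {y : ℤ | ∀ z : ℤ, L t z ω ≤ L t y ω})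
    -- `f3 ω` is the number of times `t ≥ 1` at which the currently occupied site is a
    -- favorite site and there are exactly three favorite sites
    (f3 : Ω → ℕ∞)
    (hf3 : ∀ ω, f3 ω =
      {t : ℕ | 1 ≤ t ∧ S t ω ∈ Fav t ω ∧ (Fav t ω).encard = 3}.encard) :
    μ {ω | f3 ω = ⊤} = 1 := by
  obtain ⟨hm, hmap⟩ := Fav3.transfer μ ξ hξmeas hξindep hξ1
  have hae := Fav3.main_fair
  rw [← hmap] at hae
  have hae' := ae_of_ae_map hm.aemeasurable hae
  have hpm : ∀ᵐ ω ∂μ, ∀ i, ξ i ω = 1 ∨ ξ i ω = -1 := by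
    rw [ae_all_iff]
    intro i
    have hu : μ ({ω | ξ i ω = 1} ∪ {ω | ξ i ω = -1}) = 1 := by
      have hms1 : MeasurableSet {ω | ξ i ω = -1} := hξmeas i (measurableSet_singleton (-1:ℤ))
      rw [measure_union _ hms1, hξ1, hξ2]
      · exact ENNReal.add_halves 1
      · rw [Set.disjoint_left]
        intro ω h1 h2
        simp only [Set.mem_ofPred_eq] at h1 h2
        omega
    have hmu : MeasurableSet ({ω | ξ i ω = 1} ∪ {ω | ξ i ω = -1}) :=
      (hξmeas i (measurableSet_singleton (1:ℤ))).union (hξmeas i (measurableSet_singleton (-1:ℤ)))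
    exact (prob_compl_eq_zero_iff hmu).2 hu
  have hfin : ∀ᵐ ω ∂μ, f3 ω = ⊤ := by
    filter_upwards [hae', hpm] with ω h1 h2
    have hdet := Fav3.det (fun i => ξ i ω) h2
    set s : ℕ → Bool := fun i => decide (ξ i ω = 1) with hs
    have hpos : ∀ t, (Fav3.run Fav3.st0 s t).pos = S t ω := fun t => by rw [hS]; exact (hdet t).1
    have hloc : ∀ t y, (Fav3.run Fav3.st0 s t).loc y = L t y ω := fun t y => by
      rw [hL, (hdet t).2 y]
      simp only [hS]
    rw [hf3, Set.encard_eq_top_iff]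
    intro hF
    obtain ⟨M, hM⟩ := hF.bddAbove
    obtain ⟨k, x, h, hh, hT⟩ := h1 (M+1)
    have hle : L k x ω ≤ k := by
      rw [hL]
      refine (Finset.card_filter_le _ _).trans ?_
      simp
    obtain ⟨t0, t1, t2, t3, t4⟩ := hT
    rw [hpos] at t0
    rw [hloc] at t1 t2 t3
    simp only [hloc] at t4
    have hall : ∀ y, L k y ω ≤ h := by
      intro y
      by_cases a : y = x
      · rw [a, t1]
      by_cases b : y = x + 1
      · rw [b, t2]
      by_cases c : y = x + 3
      · rw [c, t3]
      exact (t4 y a b c).le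
    have hFe : Fav k ω = {x, x+1, x+3} := by
      rw [hFav]
      ext y
      simp only [Set.mem_ofPred_eq, Set.mem_insert_iff, Set.mem_singleton_iff]
      constructor
      · intro hy
        by_contra hc
        push Not at hc
        have := t4 y hc.1 hc.2.1 hc.2.2
        have := hy x
        omega
      · rintro (rfl | rfl | rfl) z
        · rw [t1]; exact hall z
        · rw [t2]; exact hall z
        · rw [t3]; exact hall z
    have hkM : k ≤ M := by
      refine hM ⟨by omega, ?_, ?_⟩
      · rw [hFe, t0]; simp
      · rw [hFe, Set.encard_eq_three]
        exact ⟨x, x+1, x+3, by omega, by omega, by omega, rfl⟩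
    omega
  rw [measure_congr (Filter.eventuallyEq_univ.2 hfin), measure_univ]
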